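/- For N ≥ 2 and 1 < q ≤ N/(N-1), every maximizer of E_q := sup over nonzero u in BV(ℝ^N) of ‖u‖_q^q / (‖u‖_1^{q-(q-1)N} ‖u‖_{TV}^{(q-1)N}) is of the form u = λ χ_B for some λ ∈ ℝ\{0} and some ball B ⊂ ℝ^N, and conversely every such function is a maximizer. -/

import Mathlib

open MeasureTheory Real Filter Topology

noncomputable section

abbrev Euc (N : ℕ) := EuclideanSpace ℝ (Fin N)

/-- The set of values `∫ u div ψ` over admissible test vector fields. -/
def TVSet (N : ℕ) (u : Euc N → ℝ) : Set ℝ :=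
  { r | ∃ ψ : Euc N → Euc N, ContDiff ℝ 1 ψ ∧ HasCompactSupport ψ ∧
      (∀ x, ‖ψ x‖ ≤ 1) ∧
      r = ∫ x, u x * (∑ i, fderiv ℝ (fun y => ψ y i) x (EuclideanSpace.single i 1)) }

/-- Total variation of `u`. -/
def tv (N : ℕ) (u : Euc N → ℝ) : ℝ := sSup (TVSet N u)

/-- `u` is a function of bounded variation on `ℝ^N`. -/
def MemBV (N : ℕ) (u : Euc N → ℝ) : Prop :=
  Integrable u ∧ BddAbove (TVSet N u)

/-- The `L¹` norm. -/
def nrm1 (N : ℕ) (u : Euc N → ℝ) : ℝ := (eLpNorm u 1 volume).toReal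

/-- The `L^q` norm, `q` a real exponent. -/
def nrmq (N : ℕ) (q : ℝ) (u : Euc N → ℝ) : ℝ :=
  (eLpNorm u (ENNReal.ofReal q) volume).toReal

/-- Surface area `ω_{N-1}` of the unit sphere in `ℝ^N`, as `N` times the
volume of the unit ball. -/
def omegaS (N : ℕ) : ℝ := N * (volume (Metric.ball (0 : Euc N) 1)).toReal

/-- The Gagliardo–Nirenberg ratio `‖u‖_q^q / (‖u‖_1^{q-(q-1)N} ‖u‖_{TV}^{(q-1)N})`. -/
def ratioQ (N : ℕ) (q : ℝ) (u : Euc N → ℝ) : ℝ :=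
  nrmq N q u ^ q / (nrm1 N u ^ (q - (q-1)*N) * tv N u ^ ((q-1)*(N:ℝ)))

/-- The best constant `E_q` on `BV(ℝ^N)`. -/
def EqSup (N : ℕ) (q : ℝ) : ℝ :=
  sSup { r | ∃ u : Euc N → ℝ, MemBV N u ∧ u ≠ 0 ∧ r = ratioQ N q u }

/-!
Hölder's inequality between `L¹` and `L^{1*}`, followed by the sharp Sobolev inequality
`N |B₁|^{1/N} ‖u‖_{1*} ≤ ‖u‖_{TV}`, gives `E_q = (N |B₁|^{1/N})^{-(q-1)N}`, and equality in
`E_q` forces equality in the Sobolev inequality.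

The Sobolev inequality is Gromov's argument: the Knothe map `T` from the probability density
`f = |u|^{1*} / ∫ |u|^{1*}` to the uniform distribution on the unit ball has values in that ball,
and the AM–GM inequality for its triangular derivative gives `div T ≥ N (|B₁| f)^{1/N}`; now test
the total variation of `|u|` against `T`. Regularity is obtained by approximating `f` in `L¹` by
mixtures of smooth product densities, for which the map is explicit in spherical coordinates.

In the equality case, a smooth splitting `u = G(u) + (u - G(u))` with both summands nondecreasing
in `u` has additive total variation, so Minkowski's inequality for `‖·‖_{1*}` is an equality for
it; when `G` is strictly convex with `G(0) = 0` this forces `u = λ χ_E`, with `E` isoperimetric.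
For such an `E`, AM–GM is asymptotically an equality along the approximation, so the diagonal
entries of the derivative of `T` tend to `1 / r`, where `|E| = |B_r|`. Since `E` is
indecomposable, the first coordinate of `T` is then `x₁ / r` up to a constant on `E`. As `T` has
mean zero and values in the unit ball, `E` lies, up to a null set, in a slab of half-width `r`
about its centroid, in every direction by reflection; hence `E` is a ball.
-/

section TotalVariation

variable {N : ℕ} {u v : Euc N → ℝ} {ψ φ : Euc N → Euc N}

/-- The divergence of a vector field on `ℝ^N`, as it enters `TVSet`. -/
def divergence (ψ : Euc N → Euc N) (x : Euc N) : ℝ :=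
  ∑ i, fderiv ℝ (fun y => ψ y i) x (EuclideanSpace.single i 1)

/-- The test vector fields of the dual definition of the total variation: `C¹`, compactly
supported, and pointwise in the closed unit ball. -/
structure IsTestField (ψ : Euc N → Euc N) : Prop where
  contDiff : ContDiff ℝ 1 ψ
  hasCompactSupport : HasCompactSupport ψ
  norm_le_one : ∀ x, ‖ψ x‖ ≤ 1

lemma divergence_eq_trace {x : Euc N} (h : DifferentiableAt ℝ ψ x) :
    divergence ψ x = LinearMap.trace ℝ (Euc N) (fderiv ℝ ψ x : Euc N →ₗ[ℝ] Euc N) := by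
  rw [LinearMap.trace_eq_sum_inner _ (EuclideanSpace.basisFun (Fin N) ℝ)]
  refine Finset.sum_congr rfl fun i _ => ?_
  have hi : HasFDerivAt (fun y => ψ y i)
      ((EuclideanSpace.proj i : Euc N →L[ℝ] ℝ).comp (fderiv ℝ ψ x)) x :=
    (EuclideanSpace.proj i : Euc N →L[ℝ] ℝ).hasFDerivAt.comp x h.hasFDerivAt
  simp [hi.fderiv, EuclideanSpace.inner_single_left]

@[simp]
lemma divergence_zero : divergence (fun _ : Euc N => (0 : Euc N)) = 0 := by
  funext x
  simp [divergence]

lemma divergence_neg (ψ : Euc N → Euc N) (x : Euc N) :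
    divergence (fun y => -ψ y) x = -divergence ψ x := by
  simp [divergence]

lemma divergence_add {x : Euc N} (hψ : DifferentiableAt ℝ ψ x) (hφ : DifferentiableAt ℝ φ x) :
    divergence (fun y => ψ y + φ y) x = divergence ψ x + divergence φ x := by
  rw [divergence_eq_trace (hψ.fun_add hφ), divergence_eq_trace hψ, divergence_eq_trace hφ,
    fderiv_fun_add hψ hφ, ContinuousLinearMap.toLinearMap_add, map_add]

lemma divergence_smul {g : Euc N → ℝ} {x : Euc N} (hψ : DifferentiableAt ℝ ψ x)
    (hg : DifferentiableAt ℝ g x) :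
    divergence (fun y => g y • ψ y) x = g x * divergence ψ x + fderiv ℝ g x (ψ x) := by
  rw [divergence_eq_trace (hg.fun_smul hψ), divergence_eq_trace hψ, fderiv_fun_smul hg hψ,
    ContinuousLinearMap.toLinearMap_add, map_add, ContinuousLinearMap.toLinearMap_smul, map_smul,
    smul_eq_mul]
  exact congrArg (_ + ·) (LinearMap.trace_smulRight (fderiv ℝ g x : Euc N →ₗ[ℝ] ℝ) (ψ x))

lemma divergence_comp_add_right (ψ : Euc N → Euc N) (t x : Euc N) :
    divergence (fun y => ψ (y + t)) x = divergence ψ (x + t) :=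
  Finset.sum_congr rfl fun i _ => by rw [fderiv_comp_add_right (f := fun y => ψ y i)]

lemma divergence_conj (A : Euc N ≃ₗᵢ[ℝ] Euc N) {x : Euc N}
    (h : DifferentiableAt ℝ ψ (A.symm x)) :
    divergence (fun y => A (ψ (A.symm y))) x = divergence ψ (A.symm x) := by
  have hd : HasFDerivAt (fun y => A (ψ (A.symm y))) _ x :=
    (A.toContinuousLinearEquiv.hasFDerivAt (x := ψ (A.symm x))).comp x
      (h.hasFDerivAt.comp x (A.symm.toContinuousLinearEquiv.hasFDerivAt (x := x)))
  rw [divergence_eq_trace hd.differentiableAt, divergence_eq_trace h, hd.fderiv,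
    ← LinearMap.trace_conj' (fderiv ℝ ψ (A.symm x) : Euc N →ₗ[ℝ] Euc N) A.toLinearEquiv]
  rfl

lemma continuous_divergence (h : ContDiff ℝ 1 ψ) : Continuous (divergence ψ) :=
  continuous_finsetSum _ fun i _ =>
    ((contDiff_euclidean.1 h i).continuous_fderiv one_ne_zero).clm_apply continuous_const

lemma hasCompactSupport_divergence (h : HasCompactSupport ψ) :
    HasCompactSupport (divergence ψ) := by
  refine HasCompactSupport.intro h fun x hx => Finset.sum_eq_zero fun i _ => ?_
  have hzero : (fun y => ψ y i) =ᶠ[𝓝 x] fun _ => (0 : ℝ) := by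
    filter_upwards [notMem_tsupport_iff_eventuallyEq.1 hx] with y hy
    simp [hy]
  rw [hzero.fderiv_eq]
  simp

lemma exists_abs_divergence_le (h : ContDiff ℝ 1 ψ) (hs : HasCompactSupport ψ) :
    ∃ C, 0 ≤ C ∧ ∀ x, |divergence ψ x| ≤ C := by
  obtain ⟨C, hC⟩ := (continuous_divergence h).bounded_above_of_compact_support
    (hasCompactSupport_divergence hs)
  exact ⟨C, (abs_nonneg _).trans (hC 0), hC⟩

lemma integrable_mul_divergence (h : ContDiff ℝ 1 ψ) (hs : HasCompactSupport ψ)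
    (hu : Integrable u) : Integrable (fun x => u x * divergence ψ x) := by
  obtain ⟨C, -, hC⟩ := exists_abs_divergence_le h hs
  exact hu.mul_bdd (c := C) (continuous_divergence h).aestronglyMeasurable (ae_of_all _ hC)

lemma integrable_fderiv_apply {g : Euc N → ℝ} (hg : ContDiff ℝ 1 g) (h : Continuous ψ)
    (hs : HasCompactSupport ψ) : Integrable (fun x => fderiv ℝ g x (ψ x)) := by
  refine ((hg.continuous_fderiv one_ne_zero).clm_apply h).integrable_of_hasCompactSupport ?_
  refine HasCompactSupport.intro hs fun x hx => ?_
  rw [image_eq_zero_of_notMem_tsupport hx, map_zero]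

lemma integral_divergence_eq_zero (h : ContDiff ℝ 1 ψ) (hs : HasCompactSupport ψ) :
    ∫ x, divergence ψ x = 0 := by
  have hC := fun i => contDiff_euclidean.1 h i
  have hsC : ∀ i, HasCompactSupport (fun y => ψ y i) := fun i =>
    hs.comp_left (g := fun v : Euc N => v i) rfl
  have hint : ∀ i, Integrable
      (fun x => fderiv ℝ (fun y => ψ y i) x (EuclideanSpace.single i 1)) := fun i =>
    (((hC i).continuous_fderiv one_ne_zero).clm_apply
      continuous_const).integrable_of_hasCompactSupport ((hsC i).fderiv_apply ℝ _)
  unfold divergence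
  rw [integral_finsetSum _ fun i _ => hint i]
  refine Finset.sum_eq_zero fun i _ => ?_
  simpa using integral_mul_fderiv_eq_neg_fderiv_mul_of_integrable
    (μ := (volume : Measure (Euc N))) (f := fun _ => (1 : ℝ)) (g := fun y => ψ y i)
    (v := EuclideanSpace.single i 1) (by simp) (by simpa using hint i)
    (by simpa using (hC i).continuous.integrable_of_hasCompactSupport (hsC i))
    (by simp) (fun x _ => (hC i).differentiable one_ne_zero x)

lemma integral_mul_divergence_eq_neg {g : Euc N → ℝ} (h : ContDiff ℝ 1 ψ)
    (hs : HasCompactSupport ψ) (hg : ContDiff ℝ 1 g) :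
    ∫ x, g x * divergence ψ x = -∫ x, fderiv ℝ g x (ψ x) := by
  have hzero := integral_divergence_eq_zero (hg.smul h)
    (hs.smul_left (f := g))
  have hprod : ∀ x, divergence (g • ψ) x = g x * divergence ψ x + fderiv ℝ g x (ψ x) := fun x =>
    divergence_smul (h.differentiable one_ne_zero x) (hg.differentiable one_ne_zero x)
  have hint : Integrable (fun x => g x * divergence ψ x) :=
    (hg.continuous.mul (continuous_divergence h)).integrable_of_hasCompactSupport
      (hasCompactSupport_divergence hs).mul_left
  change ∫ x, divergence (g • ψ) x = 0 at hzero
  simp_rw [hprod] at hzero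
  rw [integral_add hint (integrable_fderiv_apply hg h.continuous hs)] at hzero
  linarith

namespace IsTestField

lemma zero : IsTestField (fun _ : Euc N => (0 : Euc N)) :=
  ⟨contDiff_const, HasCompactSupport.zero, by simp⟩

lemma neg (h : IsTestField ψ) : IsTestField (fun x => -ψ x) :=
  ⟨h.contDiff.neg, h.hasCompactSupport.neg, fun x => by simpa using h.norm_le_one x⟩

lemma comp_add_right (h : IsTestField ψ) (t : Euc N) : IsTestField (fun x => ψ (x + t)) :=
  ⟨h.contDiff.comp (by fun_prop),
    h.hasCompactSupport.comp_homeomorph (Homeomorph.addRight t), fun _ => h.norm_le_one _⟩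

lemma conj (h : IsTestField ψ) (A : Euc N ≃ₗᵢ[ℝ] Euc N) :
    IsTestField (fun x => A (ψ (A.symm x))) :=
  ⟨A.contDiff.comp (h.contDiff.comp A.symm.contDiff),
    (h.hasCompactSupport.comp_homeomorph A.symm.toHomeomorph).comp_left (g := A) (map_zero A),
    fun _ => (A.norm_map _).trans_le (h.norm_le_one _)⟩

lemma smul_add_smul (hψ : IsTestField ψ) (hφ : IsTestField φ) {a b : Euc N → ℝ}
    (ha : ContDiff ℝ 1 a) (hb : ContDiff ℝ 1 b) (hab : ∀ x, |a x| + |b x| ≤ 1) :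
    IsTestField (fun x => a x • ψ x + b x • φ x) where
  contDiff := (ha.smul hψ.contDiff).add (hb.smul hφ.contDiff)
  hasCompactSupport := (hψ.hasCompactSupport.smul_left (f := a)).add
    (hφ.hasCompactSupport.smul_left (f := b))
  norm_le_one x := by
    refine (norm_add_le _ _).trans ((add_le_add ?_ ?_).trans (hab x)) <;>
    rw [norm_smul, Real.norm_eq_abs]
    · exact mul_le_of_le_one_right (abs_nonneg _) (hψ.norm_le_one x)
    · exact mul_le_of_le_one_right (abs_nonneg _) (hφ.norm_le_one x)

end IsTestField

namespace MemBV

lemma integral_mul_divergence_le_tv (hu : MemBV N u) (hψ : IsTestField ψ) :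
    ∫ x, u x * divergence ψ x ≤ tv N u :=
  le_csSup hu.2 ⟨ψ, hψ.contDiff, hψ.hasCompactSupport, hψ.norm_le_one, rfl⟩

lemma abs_integral_mul_divergence_le_tv (hu : MemBV N u) (hψ : IsTestField ψ) :
    |∫ x, u x * divergence ψ x| ≤ tv N u := by
  have hneg := hu.integral_mul_divergence_le_tv hψ.neg
  simp_rw [divergence_neg, mul_neg, integral_neg] at hneg
  exact abs_le.2 ⟨by linarith, hu.integral_mul_divergence_le_tv hψ⟩

lemma tv_nonneg (hu : MemBV N u) : 0 ≤ tv N u := by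
  simpa using hu.integral_mul_divergence_le_tv IsTestField.zero

end MemBV

lemma memBV_and_tv_le (hu : Integrable u) {B : ℝ}
    (h : ∀ ψ, IsTestField ψ → ∫ x, u x * divergence ψ x ≤ B) : MemBV N u ∧ tv N u ≤ B := by
  have hB : ∀ r ∈ TVSet N u, r ≤ B := by
    rintro r ⟨ψ, hC, hs, hle, rfl⟩
    exact h ψ ⟨hC, hs, hle⟩
  exact ⟨⟨hu, B, hB⟩, csSup_le
    ⟨_, _, IsTestField.zero.contDiff, IsTestField.zero.hasCompactSupport,
      IsTestField.zero.norm_le_one, rfl⟩ hB⟩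

lemma memBV_and_tv_add_tv_le (hu : Integrable u) (hv : Integrable v) {B : ℝ}
    (h : ∀ ψ φ, IsTestField ψ → IsTestField φ →
      (∫ x, u x * divergence ψ x) + (∫ x, v x * divergence φ x) ≤ B) :
    MemBV N u ∧ MemBV N v ∧ tv N u + tv N v ≤ B := by
  have hu' : ∀ φ, IsTestField φ → MemBV N u ∧ tv N u ≤ B - ∫ x, v x * divergence φ x :=
    fun φ hφ => memBV_and_tv_le hu fun ψ hψ => by linarith [h ψ φ hψ hφ]
  have hv' : MemBV N v ∧ tv N v ≤ B - tv N u :=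
    memBV_and_tv_le hv fun φ hφ => by linarith [(hu' φ hφ).2]
  exact ⟨(hu' _ IsTestField.zero).1, hv'.1, by linarith [hv'.2]⟩

lemma tvSet_congr_ae (h : u =ᵐ[volume] v) : TVSet N u = TVSet N v := by
  have hint : ∀ w : Euc N → ℝ, ∫ x, u x * w x = ∫ x, v x * w x := fun w =>
    integral_congr_ae (by filter_upwards [h] with x hx; rw [hx])
  simp only [TVSet, hint]

lemma tv_congr_ae (h : u =ᵐ[volume] v) : tv N u = tv N v := by
  rw [tv, tv, tvSet_congr_ae h]

namespace MemBV

lemma congr_ae (hu : MemBV N u) (h : u =ᵐ[volume] v) : MemBV N v :=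
  ⟨hu.1.congr h, tvSet_congr_ae h ▸ hu.2⟩

lemma const_mul (hu : MemBV N u) (a : ℝ) :
    MemBV N (fun x => a * u x) ∧ tv N (fun x => a * u x) ≤ |a| * tv N u := by
  refine memBV_and_tv_le (hu.1.const_mul a) fun ψ hψ => ?_
  simp_rw [mul_assoc]
  rw [integral_const_mul]
  calc a * ∫ x, u x * divergence ψ x ≤ |a| * |∫ x, u x * divergence ψ x| :=
        (le_abs_self _).trans_eq (abs_mul _ _)
    _ ≤ |a| * tv N u :=
        mul_le_mul_of_nonneg_left (hu.abs_integral_mul_divergence_le_tv hψ) (abs_nonneg a)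

lemma comp_linearIsometryEquiv (hu : MemBV N u) (A : Euc N ≃ₗᵢ[ℝ] Euc N) :
    MemBV N (fun x => u (A x)) ∧ tv N (fun x => u (A x)) ≤ tv N u := by
  have hA : MeasurePreserving A volume volume := A.measurePreserving
  have hAe : MeasurableEmbedding A := A.toHomeomorph.measurableEmbedding
  refine memBV_and_tv_le ((hA.integrable_comp_emb hAe).2 hu.1) fun ψ hψ => ?_
  have hle := hu.integral_mul_divergence_le_tv (hψ.conj A)
  simp_rw [divergence_conj A (hψ.contDiff.differentiable one_ne_zero _)] at hle
  rw [← hA.integral_comp hAe] at hle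
  simpa using hle

end MemBV

end TotalVariation

section L1Convergence

variable {α ι E : Type*} [MeasurableSpace α] {μ : Measure α} [NormedAddCommGroup E]

lemma integral_norm_sub_le_add {f g h : α → E} (hf : Integrable f μ) (hg : Integrable g μ)
    (hh : Integrable h μ) :
    ∫ x, ‖f x - h x‖ ∂μ ≤ (∫ x, ‖f x - g x‖ ∂μ) + ∫ x, ‖g x - h x‖ ∂μ := by
  have hfg : Integrable (fun x => ‖f x - g x‖) μ := (hf.sub hg).norm
  have hgh : Integrable (fun x => ‖g x - h x‖) μ := (hg.sub hh).norm
  rw [← integral_add hfg hgh]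
  exact integral_mono (hf.sub hh).norm (hfg.add hgh)
    fun x => norm_sub_le_norm_sub_add_norm_sub _ _ _

lemma tendsto_integral_norm_sub_of_ae_tendsto {l : Filter ι} [l.IsCountablyGenerated]
    {f : ι → α → E} {g : α → E} (hf : ∀ n, Integrable (f n) μ) (hg : Integrable g μ)
    (hae : ∀ᵐ x ∂μ, Tendsto (fun n => f n x) l (𝓝 (g x)))
    (hle : ∀ n, ∫ x, ‖f n x‖ ∂μ ≤ ∫ x, ‖g x‖ ∂μ) :
    Tendsto (fun n => ∫ x, ‖f n x - g x‖ ∂μ) l (𝓝 0) := by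
  -- The excess `‖g‖ - ‖f n‖ + ‖f n - g‖` is nonnegative and dominated by `2 ‖g‖`.
  have hexcess : Tendsto (fun n => ∫ x, (‖g x‖ - ‖f n x‖ + ‖f n x - g x‖) ∂μ) l
      (𝓝 (∫ _, (0 : ℝ) ∂μ)) := by
    refine tendsto_integral_filter_of_dominated_convergence (fun x => 2 * ‖g x‖)
      (Eventually.of_forall fun n =>
        ((hg.norm.sub (hf n).norm).add ((hf n).sub hg).norm).aestronglyMeasurable)
      (Eventually.of_forall fun n => ae_of_all _ fun x => ?_) (hg.norm.const_mul 2) ?_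
    · rw [Real.norm_eq_abs, abs_le]
      have hsub := norm_sub_norm_le (f n x) (g x)
      have hadd := norm_sub_le (f n x) (g x)
      constructor <;> linarith [norm_nonneg (g x)]
    · filter_upwards [hae] with x hx
      simpa using ((tendsto_const_nhds (x := ‖g x‖)).sub hx.norm).add
        (hx.sub (tendsto_const_nhds (x := g x))).norm
  rw [integral_zero] at hexcess
  refine squeeze_zero (fun n => integral_nonneg fun x => norm_nonneg _) (fun n => ?_) hexcess
  have hdiff : Integrable (fun x => ‖g x‖ - ‖f n x‖) μ := hg.norm.sub (hf n).norm
  have hdist : Integrable (fun x => ‖f n x - g x‖) μ := ((hf n).sub hg).norm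
  rw [integral_add hdiff hdist, integral_sub hg.norm (hf n).norm]
  linarith [hle n]

lemma tendsto_integral_mul_of_tendsto_integral_norm_sub {l : Filter ι} {f : ι → α → ℝ}
    {g w : α → ℝ} {C : ℝ} (hf : ∀ n, Integrable (f n) μ) (hg : Integrable g μ)
    (hw : AEStronglyMeasurable w μ) (hC : ∀ᵐ x ∂μ, ‖w x‖ ≤ C)
    (hlim : Tendsto (fun n => ∫ x, ‖f n x - g x‖ ∂μ) l (𝓝 0)) :
    Tendsto (fun n => ∫ x, f n x * w x ∂μ) l (𝓝 (∫ x, g x * w x ∂μ)) := by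
  rw [tendsto_iff_norm_sub_tendsto_zero]
  refine squeeze_zero (fun n => norm_nonneg _) (fun n => ?_)
    (by simpa using hlim.mul_const C)
  rw [← integral_sub ((hf n).mul_bdd hw hC) (hg.mul_bdd hw hC), ← integral_mul_const]
  simp_rw [← sub_mul]
  refine (norm_integral_le_integral_norm _).trans (integral_mono_ae
    (((hf n).sub hg).mul_bdd hw hC).norm (((hf n).sub hg).norm.mul_const C) ?_)
  filter_upwards [hC] with x hx
  rw [norm_mul]
  exact mul_le_mul_of_nonneg_left hx (norm_nonneg _)

end L1Convergence

section Mollification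

variable {E : Type*} [NormedAddCommGroup E] [NormedSpace ℝ E] [FiniteDimensional ℝ E]

/-- A bump function supported in the ball of radius `2 / (n + 1)`; the mollifiers are its
normalizations. -/
def mollifierBump (E : Type*) [NormedAddCommGroup E] (n : ℕ) : ContDiffBump (0 : E) :=
  ⟨1 / ((n : ℝ) + 1), 2 / ((n : ℝ) + 1), by positivity, by gcongr; norm_num⟩

variable [MeasurableSpace E]

/-- The mollification of `u` at scale `2 / (n + 1)`. -/
def mollify (μ : Measure E) (n : ℕ) (u : E → ℝ) : E → ℝ :=
  convolution ((mollifierBump E n).normed μ) u (ContinuousLinearMap.lsmul ℝ ℝ) μ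

variable [BorelSpace E] {μ : Measure E} [μ.IsAddHaarMeasure] {u : E → ℝ}

lemma ae_tendsto_mollify (hu : LocallyIntegrable u μ) :
    ∀ᵐ x ∂μ, Tendsto (fun n => mollify μ n u x) atTop (𝓝 (u x)) := by
  refine ContDiffBump.ae_convolution_tendsto_right_of_locallyIntegrable (K := 2) ?_
    (Eventually.of_forall fun n => le_of_eq ?_) hu
  · have h := tendsto_one_div_add_atTop_nhds_zero_nat (𝕜 := ℝ).const_mul 2
    rw [mul_zero] at h
    exact h.congr fun n => mul_one_div _ _
  · simp only [mollifierBump]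
    ring

lemma integrable_mollifierBump_normed (n : ℕ) : Integrable ((mollifierBump E n).normed μ) μ :=
  ((mollifierBump E n).contDiff_normed (n := 0)).continuous.integrable_of_hasCompactSupport
    (mollifierBump E n).hasCompactSupport_normed

lemma integrable_mollify (n : ℕ) (hu : Integrable u μ) : Integrable (mollify μ n u) μ :=
  (integrable_mollifierBump_normed n).integrable_convolution _ hu

lemma contDiff_mollify (n : ℕ) (hu : LocallyIntegrable u μ) : ContDiff ℝ 1 (mollify μ n u) :=
  HasCompactSupport.contDiff_convolution_left (n := 1) _
    (mollifierBump E n).hasCompactSupport_normed (mollifierBump E n).contDiff_normed hu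

lemma integral_norm_mollify_le (n : ℕ) (hu : Integrable u μ) :
    ∫ x, ‖mollify μ n u x‖ ∂μ ≤ ∫ x, ‖u x‖ ∂μ := by
  have hmass : ∫ x, mollify μ n (fun x => ‖u x‖) x ∂μ = ∫ x, ‖u x‖ ∂μ := by
    unfold mollify
    rw [integral_convolution _ (integrable_mollifierBump_normed n) hu.norm,
      (mollifierBump E n).integral_normed]
    simp
  rw [← hmass]
  refine integral_mono (integrable_mollify n hu).norm (integrable_mollify n hu.norm) fun x => ?_
  refine (norm_integral_le_integral_norm _).trans_eq (integral_congr_ae (ae_of_all _ fun t => ?_))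
  simp only [ContinuousLinearMap.lsmul_apply, smul_eq_mul, norm_mul,
    Real.norm_of_nonneg ((mollifierBump E n).nonneg_normed t)]

lemma tendsto_integral_norm_mollify_sub (hu : Integrable u μ) :
    Tendsto (fun n => ∫ x, ‖mollify μ n u x - u x‖ ∂μ) atTop (𝓝 0) :=
  tendsto_integral_norm_sub_of_ae_tendsto (fun n => integrable_mollify n hu) hu
    (ae_tendsto_mollify hu.locallyIntegrable) (fun n => integral_norm_mollify_le n hu)

end Mollification

section ChainRule

variable {N : ℕ} {u v : Euc N → ℝ} {ψ φ : Euc N → Euc N} {F G H : ℝ → ℝ}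

lemma MemBV.tv_mollify_le (hu : MemBV N u) (n : ℕ) :
    MemBV N (mollify volume n u) ∧ tv N (mollify volume n u) ≤ tv N u := by
  refine memBV_and_tv_le (integrable_mollify n hu.1) fun ψ hψ => ?_
  set ρ := (mollifierBump (Euc N) n).normed volume
  have hρ : Integrable ρ := integrable_mollifierBump_normed n
  obtain ⟨C, -, hC⟩ := exists_abs_divergence_le hψ.contDiff hψ.hasCompactSupport
  have hint : Integrable (fun p : Euc N × Euc N => ρ p.2 * u (p.1 - p.2) * divergence ψ p.1)
      (volume.prod volume) :=
    (hρ.convolution_integrand (ContinuousLinearMap.lsmul ℝ ℝ) hu.1).mul_bdd (c := C)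
      ((continuous_divergence hψ.contDiff).comp continuous_fst).aestronglyMeasurable
      (ae_of_all _ fun p => hC p.1)
  have htranslate : ∀ t, ∫ x, ρ t * u (x - t) * divergence ψ x ≤ ρ t * tv N u := fun t => by
    simp_rw [mul_assoc]
    rw [integral_const_mul, ← integral_add_right_eq_self _ t]
    simp_rw [add_sub_cancel_right, ← divergence_comp_add_right]
    exact mul_le_mul_of_nonneg_left (hu.integral_mul_divergence_le_tv (hψ.comp_add_right t))
      ((mollifierBump (Euc N) n).nonneg_normed t)
  calc ∫ x, mollify volume n u x * divergence ψ x
      = ∫ x, ∫ t, ρ t * u (x - t) * divergence ψ x := by simp_rw [integral_mul_const]; rfl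
    _ = ∫ t, ∫ x, ρ t * u (x - t) * divergence ψ x := integral_integral_swap hint
    _ ≤ ∫ t, ρ t * tv N u :=
        integral_mono hint.integral_prod_right (hρ.mul_const _) htranslate
    _ = tv N u := by
        rw [integral_mul_const, (mollifierBump (Euc N) n).integral_normed, one_mul]

lemma tendsto_integral_mul_divergence {ι : Type*} {l : Filter ι} {f : ι → Euc N → ℝ}
    (hψ : IsTestField ψ) (hf : ∀ n, Integrable (f n)) (hu : Integrable u)
    (hlim : Tendsto (fun n => ∫ x, ‖f n x - u x‖) l (𝓝 0)) :
    Tendsto (fun n => ∫ x, f n x * divergence ψ x) l (𝓝 (∫ x, u x * divergence ψ x)) := by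
  obtain ⟨C, -, hC⟩ := exists_abs_divergence_le hψ.contDiff hψ.hasCompactSupport
  exact tendsto_integral_mul_of_tendsto_integral_norm_sub hf hu
    (continuous_divergence hψ.contDiff).aestronglyMeasurable (ae_of_all _ hC) hlim

lemma memBV_and_tv_le_of_tendsto {ι : Type*} {l : Filter ι} [l.NeBot] {f : ι → Euc N → ℝ} {B : ℝ}
    (hf : ∀ n, MemBV N (f n) ∧ tv N (f n) ≤ B) (hu : Integrable u)
    (hlim : Tendsto (fun n => ∫ x, ‖f n x - u x‖) l (𝓝 0)) : MemBV N u ∧ tv N u ≤ B :=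
  memBV_and_tv_le hu fun _ hψ =>
    le_of_tendsto' (tendsto_integral_mul_divergence hψ (fun n => (hf n).1.1) hu hlim)
      fun n => ((hf n).1.integral_mul_divergence_le_tv hψ).trans (hf n).2

lemma lipschitzWith_one_of_abs_deriv_le_one (hF : Differentiable ℝ F)
    (hF' : ∀ s, |deriv F s| ≤ 1) : LipschitzWith 1 F :=
  lipschitzWith_of_nnnorm_deriv_le hF fun s => by
    rw [← NNReal.coe_le_coe, coe_nnnorm, NNReal.coe_one]
    exact hF' s

lemma integrable_comp_of_lipschitzWith_one {α : Type*} [MeasurableSpace α] {μ : Measure α}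
    {f : α → ℝ} (hF : LipschitzWith 1 F) (h0 : F 0 = 0) (hf : Integrable f μ) :
    Integrable (fun x => F (f x)) μ :=
  memLp_one_iff_integrable.1 (hF.comp_memLp h0 (memLp_one_iff_integrable.2 hf))

lemma integral_comp_mul_divergence_eq (hF : ContDiff ℝ 2 F) (hv : ContDiff ℝ 1 v)
    (hψ : IsTestField ψ) :
    ∫ x, F (v x) * divergence ψ x = -∫ x, fderiv ℝ v x (deriv F (v x) • ψ x) := by
  have hchain : ∀ x, fderiv ℝ (fun x => F (v x)) x = deriv F (v x) • fderiv ℝ v x := fun x =>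
    ((hF.differentiable two_ne_zero _).hasDerivAt.comp_hasFDerivAt x
      (hv.differentiable one_ne_zero x).hasFDerivAt).fderiv
  have hFv : ContDiff ℝ 1 (fun x => F (v x)) := (hF.of_le one_le_two).comp hv
  rw [integral_mul_divergence_eq_neg hψ.contDiff hψ.hasCompactSupport hFv]
  simp_rw [hchain, map_smul]
  rfl

lemma contDiff_deriv_comp (hF : ContDiff ℝ 2 F) (hv : ContDiff ℝ 1 v) :
    ContDiff ℝ 1 (fun x => deriv F (v x)) := by
  rw [← one_add_one_eq_two] at hF
  exact hF.deriv'.comp hv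

lemma integral_comp_mul_divergence_add_le_tv (hvBV : MemBV N v) (hv : ContDiff ℝ 1 v)
    (hG : ContDiff ℝ 2 G) (hH : ContDiff ℝ 2 H) (hGH : ∀ s, |deriv G s| + |deriv H s| ≤ 1)
    (hψ : IsTestField ψ) (hφ : IsTestField φ) :
    (∫ x, G (v x) * divergence ψ x) + (∫ x, H (v x) * divergence φ x) ≤ tv N v := by
  have hG' := contDiff_deriv_comp hG hv
  have hH' := contDiff_deriv_comp hH hv
  have hΨ := hψ.smul_add_smul hφ hG' hH' fun x => hGH (v x)
  have hint : ∀ {g : Euc N → ℝ} {χ : Euc N → Euc N}, ContDiff ℝ 1 g → IsTestField χ →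
      Integrable (fun x => fderiv ℝ v x (g x • χ x)) := fun {g _} hg hχ =>
    integrable_fderiv_apply hv (hg.smul hχ.contDiff).continuous
      (hχ.hasCompactSupport.smul_left (f := g))
  calc (∫ x, G (v x) * divergence ψ x) + (∫ x, H (v x) * divergence φ x)
      = -∫ x, fderiv ℝ v x (deriv G (v x) • ψ x) + fderiv ℝ v x (deriv H (v x) • φ x) := by
        rw [integral_comp_mul_divergence_eq hG hv hψ, integral_comp_mul_divergence_eq hH hv hφ,
          integral_add (hint hG' hψ) (hint hH' hφ), neg_add]
    _ = ∫ x, v x * divergence (fun y => deriv G (v y) • ψ y + deriv H (v y) • φ y) x := by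
        rw [integral_mul_divergence_eq_neg hΨ.contDiff hΨ.hasCompactSupport hv]
        simp only [map_add]
    _ ≤ tv N v := hvBV.integral_mul_divergence_le_tv hΨ

lemma MemBV.tv_comp_add_tv_comp_le (hu : MemBV N u) (hG : ContDiff ℝ 2 G) (hH : ContDiff ℝ 2 H)
    (hGH : ∀ s, |deriv G s| + |deriv H s| ≤ 1) (hG0 : G 0 = 0) (hH0 : H 0 = 0) :
    MemBV N (fun x => G (u x)) ∧ MemBV N (fun x => H (u x)) ∧
      tv N (fun x => G (u x)) + tv N (fun x => H (u x)) ≤ tv N u := by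
  have hGlip : LipschitzWith 1 G := lipschitzWith_one_of_abs_deriv_le_one
    (hG.differentiable two_ne_zero) fun s => by linarith [hGH s, abs_nonneg (deriv H s)]
  have hHlip : LipschitzWith 1 H := lipschitzWith_one_of_abs_deriv_le_one
    (hH.differentiable two_ne_zero) fun s => by linarith [hGH s, abs_nonneg (deriv G s)]
  have hlim : ∀ {F : ℝ → ℝ} {ψ : Euc N → Euc N}, LipschitzWith 1 F → F 0 = 0 → IsTestField ψ →
      Tendsto (fun n => ∫ x, F (mollify volume n u x) * divergence ψ x) atTop
        (𝓝 (∫ x, F (u x) * divergence ψ x)) := fun {F ψ} hF h0 hψ => by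
    have hmoll := fun n => integrable_comp_of_lipschitzWith_one hF h0 (integrable_mollify n hu.1)
    have hFu := integrable_comp_of_lipschitzWith_one hF h0 hu.1
    refine tendsto_integral_mul_divergence hψ hmoll hFu (squeeze_zero
      (fun n => integral_nonneg fun x => norm_nonneg _) (fun n => ?_)
      (tendsto_integral_norm_mollify_sub hu.1))
    refine integral_mono ((hmoll n).sub hFu).norm
      ((integrable_mollify n hu.1).sub hu.1).norm fun x => ?_
    simpa using hF.norm_sub_le (mollify volume n u x) (u x)
  refine memBV_and_tv_add_tv_le (integrable_comp_of_lipschitzWith_one hGlip hG0 hu.1)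
    (integrable_comp_of_lipschitzWith_one hHlip hH0 hu.1) fun ψ φ hψ hφ => ?_
  exact le_of_tendsto' ((hlim hGlip hG0 hψ).add (hlim hHlip hH0 hφ)) fun n =>
    (integral_comp_mul_divergence_add_le_tv (hu.tv_mollify_le n).1
      (contDiff_mollify n hu.1.locallyIntegrable) hG hH hGH hψ hφ).trans (hu.tv_mollify_le n).2

/-- A smooth approximation of the absolute value, exact in the limit `b → 0`. -/
def smoothAbs (b s : ℝ) : ℝ := √(s ^ 2 + b ^ 2) - b

@[simp]
lemma smoothAbs_zero_right {b : ℝ} (hb : 0 ≤ b) : smoothAbs b 0 = 0 := by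
  simp [smoothAbs, Real.sqrt_sq hb]

lemma contDiff_smoothAbs {b : ℝ} (hb : b ≠ 0) {n : WithTop ℕ∞} : ContDiff ℝ n (smoothAbs b) :=
  (ContDiff.sqrt (by fun_prop) fun s => by positivity).sub contDiff_const

lemma abs_deriv_smoothAbs_le_one {b : ℝ} (hb : b ≠ 0) (s : ℝ) : |deriv (smoothAbs b) s| ≤ 1 := by
  have hpos : 0 < s ^ 2 + b ^ 2 := by positivity
  have hsq : HasDerivAt (fun s : ℝ => s ^ 2 + b ^ 2) (2 * s) s := by
    simpa using (hasDerivAt_pow 2 s).add_const (b ^ 2)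
  have hsqrt : 0 < 2 * √(s ^ 2 + b ^ 2) := mul_pos two_pos (Real.sqrt_pos.2 hpos)
  have hderiv : HasDerivAt (smoothAbs b) _ s := (hsq.sqrt hpos.ne').sub_const b
  rw [hderiv.deriv, abs_div, abs_of_pos hsqrt, div_le_one hsqrt, abs_mul, abs_two]
  exact mul_le_mul_of_nonneg_left (Real.abs_le_sqrt (by linarith [sq_nonneg b])) zero_le_two

lemma abs_smoothAbs_le {b : ℝ} (hb : 0 < b) (s : ℝ) : |smoothAbs b s| ≤ |s| := by
  have hlip := lipschitzWith_one_of_abs_deriv_le_one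
    ((contDiff_smoothAbs hb.ne' (n := 1)).differentiable one_ne_zero)
    (abs_deriv_smoothAbs_le_one hb.ne')
  simpa [hb.le] using hlip.norm_sub_le s 0

lemma tendsto_smoothAbs (s : ℝ) : Tendsto (fun b => smoothAbs b s) (𝓝 0) (𝓝 |s|) := by
  have hcont : Continuous (fun b : ℝ => smoothAbs b s) := by
    unfold smoothAbs
    fun_prop
  simpa [smoothAbs, Real.sqrt_sq_eq_abs] using hcont.tendsto 0

lemma MemBV.abs (hu : MemBV N u) : MemBV N (fun x => |u x|) ∧ tv N (fun x => |u x|) ≤ tv N u := by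
  have hb : ∀ n : ℕ, (0 : ℝ) < 1 / ((n : ℝ) + 1) := fun n => Nat.one_div_pos_of_nat
  have hbv : ∀ n : ℕ, MemBV N (fun x => smoothAbs (1 / ((n : ℝ) + 1)) (u x)) ∧
      tv N (fun x => smoothAbs (1 / ((n : ℝ) + 1)) (u x)) ≤ tv N u := fun n => by
    obtain ⟨hG, hH, hle⟩ := hu.tv_comp_add_tv_comp_le (contDiff_smoothAbs (hb n).ne')
      (contDiff_const (c := (0 : ℝ)))
      (fun s => by simpa using abs_deriv_smoothAbs_le_one (hb n).ne' s)
      (smoothAbs_zero_right (hb n).le) rfl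
    exact ⟨hG, by linarith [hH.tv_nonneg]⟩
  refine memBV_and_tv_le_of_tendsto hbv hu.1.abs (tendsto_integral_norm_sub_of_ae_tendsto
    (fun n => (hbv n).1.1) hu.1.abs (ae_of_all _ fun x =>
      (tendsto_smoothAbs (u x)).comp tendsto_one_div_add_atTop_nhds_zero_nat) fun n => ?_)
  exact integral_mono (hbv n).1.1.norm hu.1.abs.norm fun x => by
    simpa using abs_smoothAbs_le (hb n) (u x)

end ChainRule

/-! ### Powers of the sine and the volume of the unit ball -/

/-- The Wallis integral `∫₀^π sin^k`, the ratio of the volumes of consecutive unit balls. -/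
def wallisIntegral (k : ℕ) : ℝ := ∫ x in (0 : ℝ)..π, sin x ^ k

lemma wallisIntegral_pos (k : ℕ) : 0 < wallisIntegral k := integral_sin_pow_pos k

lemma wallisIntegral_add_two (n : ℕ) :
    wallisIntegral (n + 2) = (n + 1) / (n + 2) * wallisIntegral n := by
  simp [wallisIntegral, integral_sin_pow]

lemma wallisIntegral_mul_succ (n : ℕ) :
    wallisIntegral n * wallisIntegral (n + 1) = 2 * π / (n + 1) := by
  induction n with
  | zero => norm_num [wallisIntegral, mul_comm]
  | succ n ih =>
    rw [wallisIntegral_add_two, mul_left_comm, mul_comm (wallisIntegral _), ih]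
    push_cast
    field_simp
    ring

/-- The volume of the unit ball of `ℝ^N`. -/
def unitBallVolume (N : ℕ) : ℝ := volume.real (Metric.ball (0 : Euc N) 1)

lemma unitBallVolume_eq (N : ℕ) : unitBallVolume N = √π ^ N / Gamma ((N : ℝ) / 2 + 1) := by
  rcases N.eq_zero_or_pos with rfl | hN
  · have hball : Metric.ball (0 : Euc 0) 1 = Set.univ :=
      Set.eq_univ_of_forall fun x => by simp [Subsingleton.elim x 0]
    simp [unitBallVolume, Measure.real, hball, volume_euclideanSpace_eq_dirac]
  · have : Nonempty (Fin N) := ⟨⟨0, hN⟩⟩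
    have : 0 < Gamma ((N : ℝ) / 2 + 1) := Gamma_pos_of_pos (by positivity)
    rw [unitBallVolume, Measure.real, EuclideanSpace.volume_ball]
    simpa using ENNReal.toReal_ofReal (by positivity : 0 ≤ √π ^ N / Gamma ((N : ℝ) / 2 + 1))

lemma unitBallVolume_add_two (n : ℕ) :
    unitBallVolume (n + 2) = 2 * π / (n + 2) * unitBallVolume n := by
  have : 0 < Gamma ((n : ℝ) / 2 + 1) := Gamma_pos_of_pos (by positivity)
  have harg : ((n + 2 : ℕ) : ℝ) / 2 + 1 = (n : ℝ) / 2 + 1 + 1 := by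
    push_cast
    ring
  rw [unitBallVolume_eq, unitBallVolume_eq, harg, Real.Gamma_add_one (by positivity), pow_add,
    Real.sq_sqrt pi_pos.le]
  field_simp

lemma unitBallVolume_eq_prod (N : ℕ) :
    unitBallVolume N = ∏ k ∈ Finset.range N, wallisIntegral (k + 1) := by
  induction N using Nat.twoStepInduction with
  | zero => simp [unitBallVolume_eq]
  | one =>
    have hGamma := Real.Gamma_add_one (s := 1 / 2) (by norm_num)
    rw [Real.Gamma_one_half_eq] at hGamma
    rw [unitBallVolume_eq, Nat.cast_one, hGamma]
    norm_num [wallisIntegral]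
    field_simp
  | more n ih _ =>
    rw [Finset.prod_range_succ, Finset.prod_range_succ, ← ih, mul_assoc,
      wallisIntegral_mul_succ, unitBallVolume_add_two]
    push_cast
    ring

lemma prod_wallisIntegral_sub (N : ℕ) :
    ∏ j : Fin N, wallisIntegral (N - j.val) = unitBallVolume N := by
  rw [unitBallVolume_eq_prod, ← Fin.prod_univ_eq_prod_range (fun k => wallisIntegral (k + 1)),
    ← Equiv.prod_comp Fin.revPerm]
  refine Finset.prod_congr rfl fun j _ => ?_
  congr 1
  simp only [Fin.revPerm_apply, Fin.val_rev]
  lia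

lemma unitBallVolume_pos (N : ℕ) : 0 < unitBallVolume N := by
  rw [unitBallVolume_eq_prod]
  exact Finset.prod_pos fun k _ => wallisIntegral_pos _

/-- The distribution function of the probability density proportional to `sin ^ k` on `[0, π]`. -/
def sinPowCDF (k : ℕ) (θ : ℝ) : ℝ := (∫ x in (0 : ℝ)..θ, sin x ^ k) / wallisIntegral k

lemma hasDerivAt_sinPowCDF (k : ℕ) (θ : ℝ) :
    HasDerivAt (sinPowCDF k) (sin θ ^ k / wallisIntegral k) θ := by
  have hcont : Continuous fun x => sin x ^ k := by fun_prop
  exact (hcont.integral_hasStrictDerivAt 0 θ).hasDerivAt.div_const _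

@[fun_prop]
lemma continuous_sinPowCDF (k : ℕ) : Continuous (sinPowCDF k) :=
  continuous_iff_continuousAt.2 fun θ => (hasDerivAt_sinPowCDF k θ).continuousAt

@[simp]
lemma sinPowCDF_zero (k : ℕ) : sinPowCDF k 0 = 0 := by simp [sinPowCDF]

@[simp]
lemma sinPowCDF_pi (k : ℕ) : sinPowCDF k π = 1 := div_self (wallisIntegral_pos k).ne'

lemma strictMonoOn_sinPowCDF (k : ℕ) : StrictMonoOn (sinPowCDF k) (Set.Icc 0 π) := by
  refine strictMonoOn_of_deriv_pos (convex_Icc _ _) (continuous_sinPowCDF k).continuousOn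
    fun x hx => ?_
  rw [interior_Icc] at hx
  rw [(hasDerivAt_sinPowCDF k x).deriv]
  exact div_pos (pow_pos (sin_pos_of_mem_Ioo hx) _) (wallisIntegral_pos k)

/-- The inverse of `sinPowCDF k : [0, π] → [0, 1]`, extended by constants to the whole line. -/
def sinPowQuantile (k : ℕ) (y : ℝ) : ℝ :=
  Function.invFunOn (sinPowCDF k) (Set.Icc 0 π) (Set.projIcc 0 1 zero_le_one y)

lemma projIcc_mem_image_sinPowCDF (k : ℕ) (y : ℝ) :
    (Set.projIcc 0 1 zero_le_one y : ℝ) ∈ sinPowCDF k '' Set.Icc 0 π := by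
  have hivt := intermediate_value_Icc pi_pos.le (continuous_sinPowCDF k).continuousOn
  rw [sinPowCDF_zero, sinPowCDF_pi] at hivt
  exact hivt (Set.projIcc 0 1 zero_le_one y).2

lemma sinPowQuantile_mem_Icc (k : ℕ) (y : ℝ) : sinPowQuantile k y ∈ Set.Icc 0 π :=
  Function.invFunOn_mem (projIcc_mem_image_sinPowCDF k y)

lemma sinPowCDF_sinPowQuantile_eq_projIcc (k : ℕ) (y : ℝ) :
    sinPowCDF k (sinPowQuantile k y) = Set.projIcc 0 1 zero_le_one y :=
  Function.invFunOn_eq (projIcc_mem_image_sinPowCDF k y)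

lemma sinPowCDF_sinPowQuantile {k : ℕ} {y : ℝ} (hy : y ∈ Set.Icc (0 : ℝ) 1) :
    sinPowCDF k (sinPowQuantile k y) = y := by
  rw [sinPowCDF_sinPowQuantile_eq_projIcc, Set.projIcc_of_mem _ hy]

@[fun_prop]
lemma continuous_sinPowQuantile (k : ℕ) : Continuous (sinPowQuantile k) := by
  have hemb : IsClosedEmbedding ((Set.Icc 0 π).domRestrict (sinPowCDF k)) :=
    (continuous_sinPowCDF k).continuousOn.domRestrict.isClosedEmbedding
      (Set.injOn_iff_injective.1 (strictMonoOn_sinPowCDF k).injOn)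
  have hlift : Continuous fun y => (⟨_, sinPowQuantile_mem_Icc k y⟩ : Set.Icc 0 π) := by
    rw [hemb.isInducing.continuous_iff]
    exact (continuous_subtype_val.comp continuous_projIcc).congr fun y =>
      (sinPowCDF_sinPowQuantile_eq_projIcc k y).symm
  exact continuous_subtype_val.comp hlift

lemma sinPowQuantile_mem_Ioo {k : ℕ} {y : ℝ} (hy : y ∈ Set.Ioo (0 : ℝ) 1) :
    sinPowQuantile k y ∈ Set.Ioo 0 π := by
  have hinv := sinPowCDF_sinPowQuantile (k := k) (Set.Ioo_subset_Icc_self hy)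
  refine ⟨(sinPowQuantile_mem_Icc k y).1.lt_of_ne' fun h => ?_,
    (sinPowQuantile_mem_Icc k y).2.lt_of_ne fun h => ?_⟩
  · exact hy.1.ne (by rw [← hinv, h, sinPowCDF_zero])
  · exact hy.2.ne (by rw [← hinv, h, sinPowCDF_pi])

lemma sin_sinPowQuantile_pos {k : ℕ} {y : ℝ} (hy : y ∈ Set.Ioo (0 : ℝ) 1) :
    0 < sin (sinPowQuantile k y) := sin_pos_of_mem_Ioo (sinPowQuantile_mem_Ioo hy)

lemma hasDerivAt_sinPowQuantile {k : ℕ} {y : ℝ} (hy : y ∈ Set.Ioo (0 : ℝ) 1) :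
    HasDerivAt (sinPowQuantile k) (wallisIntegral k / sin (sinPowQuantile k y) ^ k) y := by
  have hpos : 0 < sin (sinPowQuantile k y) ^ k / wallisIntegral k :=
    div_pos (pow_pos (sin_sinPowQuantile_pos hy) _) (wallisIntegral_pos k)
  rw [← inv_div]
  refine (hasDerivAt_sinPowCDF k _).of_local_left_inverse
    (continuous_sinPowQuantile k).continuousAt hpos.ne' ?_
  filter_upwards [Ioo_mem_nhds hy.1 hy.2] with z hz
  exact sinPowCDF_sinPowQuantile (Set.Ioo_subset_Icc_self hz)

lemma contDiffAt_sinPowQuantile {k : ℕ} {y : ℝ} (hy : y ∈ Set.Ioo (0 : ℝ) 1) :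
    ContDiffAt ℝ 1 (sinPowQuantile k) y := by
  have hon : ContDiffOn ℝ 1 (sinPowQuantile k) (Set.Ioo 0 1) := by
    rw [← zero_add 1, contDiffOn_succ_iff_deriv_of_isOpen isOpen_Ioo, contDiffOn_zero]
    refine ⟨fun z hz => (hasDerivAt_sinPowQuantile hz).differentiableAt.differentiableWithinAt,
      by simp, ?_⟩
    have hcont : ContinuousOn (fun z => wallisIntegral k / sin (sinPowQuantile k z) ^ k)
        (Set.Ioo 0 1) :=
      continuousOn_const.div (by fun_prop) fun z hz => (pow_pos (sin_sinPowQuantile_pos hz) _).ne'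
    exact hcont.congr fun z hz => (hasDerivAt_sinPowQuantile hz).deriv
  exact hon.contDiffAt (isOpen_Ioo.mem_nhds hy)

/-! ### The Knothe map of a mixture of product densities onto the unit ball -/

section ProdLT

variable {N : ℕ}

/-- The product of the values of `g` at the indices below `n`. -/
def prodLT (g : Fin N → ℝ) (n : ℕ) : ℝ := ∏ l : Fin N with l.val < n, g l

@[simp]
lemma prodLT_zero (g : Fin N → ℝ) : prodLT g 0 = 1 := by simp [prodLT]

lemma prodLT_val_succ (g : Fin N → ℝ) (j : Fin N) :
    prodLT g (j.val + 1) = prodLT g j.val * g j := by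
  have hinsert : ({l | l.val < j.val + 1} : Finset (Fin N)) =
      insert j ({l | l.val < j.val} : Finset (Fin N)) := by
    grind
  rw [prodLT, hinsert, Finset.prod_insert (by simp), mul_comm, prodLT]

lemma prodLT_eq_prod (g : Fin N → ℝ) : prodLT g N = ∏ l, g l := by simp [prodLT]

lemma prodLT_congr {g h : Fin N → ℝ} {n : ℕ} (hgh : ∀ l : Fin N, l.val < n → g l = h l) :
    prodLT g n = prodLT h n :=
  Finset.prod_congr rfl fun l hl => hgh l (by simpa using hl)

lemma prodLT_pos {g : Fin N → ℝ} (hg : ∀ l, 0 < g l) (n : ℕ) : 0 < prodLT g n :=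
  Finset.prod_pos fun l _ => hg l

lemma prod_prodLT (s : Fin N → ℝ) : ∏ j : Fin N, prodLT s j.val = ∏ l, s l ^ (N - 1 - l.val) := by
  simp_rw [prodLT, Finset.prod_filter]
  rw [Finset.prod_comm]
  refine Finset.prod_congr rfl fun l _ => ?_
  rw [← Finset.prod_filter, Finset.prod_const, ← Fin.card_Ioi]
  congr 2
  ext
  simp

lemma sum_sq_mul_prodLT_le_one {c s : Fin N → ℝ} (h : ∀ j, c j ^ 2 + s j ^ 2 = 1) :
    ∑ j, (c j * prodLT s j.val) ^ 2 ≤ 1 := by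
  have hterm : ∀ j : Fin N,
      (c j * prodLT s j.val) ^ 2 = prodLT s j.val ^ 2 - prodLT s (j.val + 1) ^ 2 := fun j => by
    rw [prodLT_val_succ, mul_pow, eq_sub_of_add_eq (h j)]
    ring
  simp_rw [hterm]
  rw [Fin.sum_univ_eq_sum_range (fun n => prodLT s n ^ 2 - prodLT s (n + 1) ^ 2),
    Finset.sum_range_sub', prodLT_zero, one_pow]
  exact sub_le_self _ (sq_nonneg _)

lemma contDiff_prodLT {E : Type*} [NormedAddCommGroup E] [NormedSpace ℝ E] {k : WithTop ℕ∞}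
    {f : Fin N → E → ℝ} (hf : ∀ l, ContDiff ℝ k (f l)) (n : ℕ) :
    ContDiff ℝ k (fun x => prodLT (fun l => f l x) n) :=
  contDiff_prod fun l _ => hf l

end ProdLT

/-- A finite convex combination of products of smooth positive probability densities on `ℝ^N`,
each one-dimensional density being encoded by its distribution function. -/
structure ProductMixture (N : ℕ) where
  ι : Type
  [fintype : Fintype ι]
  weight : ι → ℝ
  cdf : ι → Fin N → ℝ → ℝ
  weight_nonneg : ∀ i, 0 ≤ weight i
  sum_weight : ∑ i, weight i = 1
  contDiff_cdf : ∀ i j, ContDiff ℝ 2 (cdf i j)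
  deriv_cdf_pos : ∀ i j t, 0 < deriv (cdf i j) t
  tendsto_cdf_atBot : ∀ i j, Tendsto (cdf i j) atBot (𝓝 0)
  tendsto_cdf_atTop : ∀ i j, Tendsto (cdf i j) atTop (𝓝 1)

attribute [instance] ProductMixture.fintype

namespace ProductMixture

variable {N : ℕ} (m : ProductMixture N)

/-- The density of the mixture. -/
def density (x : Euc N) : ℝ := ∑ i, m.weight i * ∏ j, deriv (m.cdf i j) (x j)

/-- The density of the marginal of the mixture on the first `n` coordinates. -/
def marginal (n : ℕ) (x : Euc N) : ℝ :=
  ∑ i, m.weight i * prodLT (fun l => deriv (m.cdf i l) (x l)) n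

/-- The distribution function of the `j`-th coordinate conditioned on the previous ones. -/
def conditionalCDF (j : Fin N) (x : Euc N) : ℝ :=
  (∑ i, m.weight i * (prodLT (fun l => deriv (m.cdf i l) (x l)) j.val * m.cdf i j (x j))) /
    m.marginal j.val x

/-- The `j`-th spherical angle of the Knothe map. The exponent is the one for which the uniform
distribution on the unit ball makes the angles independent. -/
def angle (j : Fin N) (x : Euc N) : ℝ := sinPowQuantile (N - j.val) (m.conditionalCDF j x)

/-- The triangular map pushing the mixture forward to the uniform distribution on the unit ball. -/
def knothe (x : Euc N) : Euc N :=
  WithLp.toLp 2 fun j => -cos (m.angle j x) * prodLT (fun l => sin (m.angle l x)) j.val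

/-- The diagonal entries of the derivative of the Knothe map. -/
def stretch (j : Fin N) (x : Euc N) : ℝ :=
  sin (m.angle j x) * (wallisIntegral (N - j.val) / sin (m.angle j x) ^ (N - j.val) *
    (m.marginal (j.val + 1) x / m.marginal j.val x)) * prodLT (fun l => sin (m.angle l x)) j.val

lemma knothe_apply (x : Euc N) (j : Fin N) :
    m.knothe x j = -cos (m.angle j x) * prodLT (fun l => sin (m.angle l x)) j.val := rfl

section Positivity

lemma strictMono_cdf (i : m.ι) (j : Fin N) : StrictMono (m.cdf i j) :=
  strictMono_of_deriv_pos (m.deriv_cdf_pos i j)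

lemma cdf_mem_Ioo (i : m.ι) (j : Fin N) (t : ℝ) : m.cdf i j t ∈ Set.Ioo (0 : ℝ) 1 := by
  have hmono := m.strictMono_cdf i j
  exact ⟨(hmono.monotone.le_of_tendsto (m.tendsto_cdf_atBot i j) _).trans_lt
      (hmono (sub_one_lt t)),
    (hmono (lt_add_one t)).trans_le (hmono.monotone.ge_of_tendsto (m.tendsto_cdf_atTop i j) _)⟩

lemma sum_weight_mul_pos {b : m.ι → ℝ} (hb : ∀ i, 0 < b i) : 0 < ∑ i, m.weight i * b i := by
  obtain ⟨i, -, hi⟩ : ∃ i ∈ Finset.univ, 0 < m.weight i :=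
    Finset.exists_lt_of_sum_lt (by simp [m.sum_weight])
  exact Finset.sum_pos' (fun i _ => mul_nonneg (m.weight_nonneg i) (hb i).le)
    ⟨i, Finset.mem_univ i, mul_pos hi (hb i)⟩

lemma density_nonneg (x : Euc N) : 0 ≤ m.density x :=
  Finset.sum_nonneg fun i _ => mul_nonneg (m.weight_nonneg i)
    (Finset.prod_nonneg fun j _ => (m.deriv_cdf_pos i j _).le)

lemma marginal_pos (n : ℕ) (x : Euc N) : 0 < m.marginal n x :=
  m.sum_weight_mul_pos fun i => prodLT_pos (fun l => m.deriv_cdf_pos i l _) n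

@[simp]
lemma marginal_zero (x : Euc N) : m.marginal 0 x = 1 := by simp [marginal, m.sum_weight]

lemma marginal_eq_density (x : Euc N) : m.marginal N x = m.density x := by
  simp [marginal, prodLT_eq_prod, density]

lemma conditionalCDF_mem_Ioo (j : Fin N) (x : Euc N) :
    m.conditionalCDF j x ∈ Set.Ioo (0 : ℝ) 1 := by
  have hprod : ∀ i, 0 < prodLT (fun l => deriv (m.cdf i l) (x l)) j.val := fun i =>
    prodLT_pos (fun l => m.deriv_cdf_pos i l _) _
  refine ⟨div_pos (m.sum_weight_mul_pos fun i => mul_pos (hprod i) (m.cdf_mem_Ioo i j _).1)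
    (m.marginal_pos j.val x), (div_lt_one (m.marginal_pos j.val x)).2 ?_⟩
  rw [marginal, ← sub_pos, ← Finset.sum_sub_distrib]
  simp_rw [← mul_sub, ← mul_one_sub]
  exact m.sum_weight_mul_pos fun i => mul_pos (hprod i) (sub_pos.2 (m.cdf_mem_Ioo i j _).2)

lemma sin_angle_pos (j : Fin N) (x : Euc N) : 0 < sin (m.angle j x) :=
  sin_sinPowQuantile_pos (m.conditionalCDF_mem_Ioo j x)

lemma stretch_pos (j : Fin N) (x : Euc N) : 0 < m.stretch j x := by
  have hsin := m.sin_angle_pos j x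
  have hmarg := m.marginal_pos j.val x
  have hmarg' := m.marginal_pos (j.val + 1) x
  have hwallis := wallisIntegral_pos (N - j.val)
  have hprod := prodLT_pos (fun l => m.sin_angle_pos l x) j.val
  unfold stretch
  positivity

end Positivity

section Smoothness

lemma contDiff_deriv_cdf_apply (i : m.ι) (l : Fin N) :
    ContDiff ℝ 1 (fun x : Euc N => deriv (m.cdf i l) (x l)) :=
  contDiff_deriv_comp (m.contDiff_cdf i l) (by fun_prop)

lemma contDiff_marginal (n : ℕ) : ContDiff ℝ 1 (m.marginal n) :=
  ContDiff.sum fun i _ =>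
    contDiff_const.mul (contDiff_prodLT (fun l => m.contDiff_deriv_cdf_apply i l) n)

lemma contDiff_conditionalCDF (j : Fin N) : ContDiff ℝ 1 (m.conditionalCDF j) := by
  refine ContDiff.div (ContDiff.sum fun i _ => contDiff_const.mul ?_) (m.contDiff_marginal _)
    fun x => (m.marginal_pos _ x).ne'
  exact (contDiff_prodLT (fun l => m.contDiff_deriv_cdf_apply i l) _).mul
    (((m.contDiff_cdf i j).of_le one_le_two).comp (by fun_prop))

lemma contDiff_angle (j : Fin N) : ContDiff ℝ 1 (m.angle j) :=
  contDiff_iff_contDiffAt.2 fun x => (contDiffAt_sinPowQuantile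
    (m.conditionalCDF_mem_Ioo j x)).comp x (m.contDiff_conditionalCDF j).contDiffAt

lemma contDiff_knothe : ContDiff ℝ 1 m.knothe :=
  contDiff_euclidean.2 fun j => (m.contDiff_angle j).cos.neg.mul
    (contDiff_prodLT (fun l => (m.contDiff_angle l).sin) _)

end Smoothness

lemma norm_knothe_le_one (x : Euc N) : ‖m.knothe x‖ ≤ 1 := by
  rw [EuclideanSpace.norm_eq, Real.sqrt_le_one]
  simpa [knothe_apply, mul_pow] using sum_sq_mul_prodLT_le_one (c := fun j => cos (m.angle j x))
    (s := fun j => sin (m.angle j x)) fun j => cos_sq_add_sin_sq _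

lemma prod_marginal_succ_div_marginal (x : Euc N) :
    ∏ j : Fin N, m.marginal (j.val + 1) x / m.marginal j.val x = m.density x := by
  have htelescope : ∀ n,
      ∏ k ∈ Finset.range n, m.marginal (k + 1) x / m.marginal k x = m.marginal n x := fun n => by
    induction n with
    | zero => simp
    | succ n ih => rw [Finset.prod_range_succ, ih, mul_div_cancel₀ _ (m.marginal_pos n x).ne']
  rw [Fin.prod_univ_eq_prod_range (fun n => m.marginal (n + 1) x / m.marginal n x), htelescope,
    marginal_eq_density]

lemma prod_stretch (x : Euc N) : ∏ j, m.stretch j x = unitBallVolume N * m.density x := by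
  have hfactor : ∀ j : Fin N, m.stretch j x = wallisIntegral (N - j.val) *
      (m.marginal (j.val + 1) x / m.marginal j.val x) *
      (prodLT (fun l => sin (m.angle l x)) j.val / sin (m.angle j x) ^ (N - 1 - j.val)) :=
      fun j => by
    have hsin := (m.sin_angle_pos j x).ne'
    have hpow : sin (m.angle j x) ^ (N - j.val) =
        sin (m.angle j x) ^ (N - 1 - j.val) * sin (m.angle j x) := by
      rw [← pow_succ]
      congr 1
      lia
    rw [stretch, hpow]
    field_simp
  have hsin : ∏ j : Fin N, sin (m.angle j x) ^ (N - 1 - j.val) ≠ 0 :=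
    Finset.prod_ne_zero_iff.2 fun l _ => (pow_pos (m.sin_angle_pos l x) _).ne'
  simp_rw [hfactor]
  rw [Finset.prod_mul_distrib, Finset.prod_mul_distrib, prod_marginal_succ_div_marginal,
    prod_wallisIntegral_sub, Finset.prod_div_distrib, prod_prodLT, div_self hsin, mul_one]

section Triangular

variable {x y : Euc N} {j : Fin N}

lemma marginal_congr {n : ℕ} (h : ∀ l : Fin N, l.val < n → x l = y l) :
    m.marginal n x = m.marginal n y :=
  Finset.sum_congr rfl fun i _ => by rw [prodLT_congr fun l hl => by rw [h l hl]]

lemma conditionalCDF_congr (h : ∀ l ≤ j, x l = y l) :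
    m.conditionalCDF j x = m.conditionalCDF j y := by
  rw [conditionalCDF, conditionalCDF, m.marginal_congr fun l hl => h l hl.le, h j le_rfl]
  congr 1
  exact Finset.sum_congr rfl fun i _ => by rw [prodLT_congr fun l hl => by rw [h l hl.le]]

lemma angle_congr (h : ∀ l ≤ j, x l = y l) : m.angle j x = m.angle j y := by
  rw [angle, angle, m.conditionalCDF_congr h]

lemma knothe_apply_congr (h : ∀ l ≤ j, x l = y l) : m.knothe x j = m.knothe y j := by
  rw [knothe_apply, knothe_apply, m.angle_congr h,
    prodLT_congr fun l hl => by rw [m.angle_congr fun k hk => h k (hk.trans hl.le)]]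

lemma hasDerivAt_conditionalCDF_line (j : Fin N) (x : Euc N) :
    HasDerivAt (fun t : ℝ => m.conditionalCDF j (x + t • EuclideanSpace.single j 1))
      (m.marginal (j.val + 1) x / m.marginal j.val x) 0 := by
  have hcdf : ∀ i, HasDerivAt (fun t : ℝ => m.cdf i j (x j + t)) (deriv (m.cdf i j) (x j)) 0 :=
    fun i => by
    have hderiv := ((m.contDiff_cdf i j).differentiable two_ne_zero (x j + 0)).hasDerivAt
    simpa using hderiv.comp_const_add (x j) 0
  have hline : ∀ t : ℝ, m.conditionalCDF j (x + t • EuclideanSpace.single j 1) =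
      (∑ i, m.weight i * (prodLT (fun l => deriv (m.cdf i l) (x l)) j.val *
        m.cdf i j (x j + t))) / m.marginal j.val x := fun t => by
    have hbelow : ∀ l : Fin N, l.val < j.val → (x + t • EuclideanSpace.single j (1 : ℝ)) l = x l :=
      fun l hl => by simp [Fin.ne_of_lt hl]
    rw [conditionalCDF, m.marginal_congr hbelow]
    congr 1
    refine Finset.sum_congr rfl fun i _ => ?_
    rw [prodLT_congr fun l hl => by rw [hbelow l hl]]
    simp
  simp_rw [hline, marginal, prodLT_val_succ]
  exact (HasDerivAt.fun_sum fun i _ => ((hcdf i).const_mul _).const_mul _).div_const _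

lemma fderiv_knothe_apply_single (j : Fin N) (x : Euc N) :
    fderiv ℝ (fun y => m.knothe y j) x (EuclideanSpace.single j 1) = m.stretch j x := by
  have hdiff := (contDiff_euclidean.1 m.contDiff_knothe j).differentiable one_ne_zero x
  refine (hdiff.hasFDerivAt.hasLineDerivAt _).unique ?_
  have hline : ∀ t : ℝ, m.knothe (x + t • EuclideanSpace.single j 1) j =
      -cos (sinPowQuantile (N - j.val)
        (m.conditionalCDF j (x + t • EuclideanSpace.single j 1))) *
        prodLT (fun l => sin (m.angle l x)) j.val := fun t => by
    rw [knothe_apply, prodLT_congr fun l hl => ?_]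
    · rfl
    · rw [m.angle_congr fun k hk => ?_]
      simp [Fin.ne_of_lt (hk.trans_lt hl)]
  have hquantile := hasDerivAt_sinPowQuantile (k := N - j.val)
    (m.conditionalCDF_mem_Ioo j (x + (0 : ℝ) • EuclideanSpace.single j 1))
  have hcomp := (hquantile.comp (0 : ℝ) (m.hasDerivAt_conditionalCDF_line j x)).cos.neg.mul_const
    (prodLT (fun l => sin (m.angle l x)) j.val)
  rw [HasLineDerivAt]
  simp_rw [hline]
  refine hcomp.congr_deriv ?_
  simp [stretch, angle]

lemma divergence_knothe (x : Euc N) : divergence m.knothe x = ∑ j, m.stretch j x :=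
  Finset.sum_congr rfl fun j _ => m.fderiv_knothe_apply_single j x

lemma fderiv_knothe_apply_single_of_lt {l : Fin N} (h : j < l) (x : Euc N) :
    fderiv ℝ (fun y => m.knothe y j) x (EuclideanSpace.single l 1) = 0 := by
  have hdiff := (contDiff_euclidean.1 m.contDiff_knothe j).differentiable one_ne_zero x
  refine (hdiff.hasFDerivAt.hasLineDerivAt _).unique ?_
  have hline : ∀ t : ℝ, m.knothe (x + t • EuclideanSpace.single l 1) j = m.knothe x j :=
    fun t => m.knothe_apply_congr fun k hk => by simp [Fin.ne_of_lt (hk.trans_lt h)]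
  simp_rw [HasLineDerivAt, hline]
  exact hasDerivAt_const _ _

lemma fderiv_knothe_apply_of_val_eq_zero (hj : j.val = 0) (x v : Euc N) :
    fderiv ℝ (fun y => m.knothe y j) x v = m.stretch j x * v j := by
  have hv : v = ∑ l, v l • EuclideanSpace.single l (1 : ℝ) := by
    simpa using ((EuclideanSpace.basisFun (Fin N) ℝ).sum_repr v).symm
  rw [hv, map_sum, ← hv, Finset.sum_eq_single j]
  · rw [map_smul, fderiv_knothe_apply_single, smul_eq_mul, mul_comm]
  · intro l _ hl
    have hlt : j < l := Fin.lt_def.2 (by have := Fin.val_ne_of_ne hl; lia)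
    rw [map_smul, m.fderiv_knothe_apply_single_of_lt hlt, smul_zero]
  · simp

end Triangular

end ProductMixture

/-! ### Testing against fields with nonnegative divergence -/

lemma integrable_and_integral_le_of_ae_tendsto {α : Type*} [MeasurableSpace α] {μ : Measure α}
    {f : ℕ → α → ℝ} {g : α → ℝ} {B : ℕ → ℝ} {b : ℝ} (hg : AEStronglyMeasurable g μ)
    (hf : ∀ n, Integrable (f n) μ) (hf0 : ∀ n, 0 ≤ᵐ[μ] f n)
    (hfg : ∀ᵐ x ∂μ, Tendsto (fun n => f n x) atTop (𝓝 (g x)))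
    (hB : ∀ n, ∫ x, f n x ∂μ ≤ B n) (hb : Tendsto B atTop (𝓝 b)) :
    Integrable g μ ∧ ∫ x, g x ∂μ ≤ b := by
  have hg0 : 0 ≤ᵐ[μ] g := by
    filter_upwards [hfg, ae_all_iff.2 hf0] with x hx hpos using ge_of_tendsto' hx hpos
  have hb0 : 0 ≤ b := ge_of_tendsto' hb fun n => (integral_nonneg_of_ae (hf0 n)).trans (hB n)
  have hlint : ∫⁻ x, ENNReal.ofReal (g x) ∂μ ≤ ENNReal.ofReal b := by
    calc ∫⁻ x, ENNReal.ofReal (g x) ∂μ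
        = ∫⁻ x, liminf (fun n => ENNReal.ofReal (f n x)) atTop ∂μ := by
          refine lintegral_congr_ae ?_
          filter_upwards [hfg] with x hx using (ENNReal.tendsto_ofReal hx).liminf_eq.symm
      _ ≤ liminf (fun n => ∫⁻ x, ENNReal.ofReal (f n x) ∂μ) atTop :=
          lintegral_liminf_le' fun n => (hf n).1.aemeasurable.ennreal_ofReal
      _ ≤ liminf (fun n => ENNReal.ofReal (B n)) atTop := by
          refine liminf_le_liminf (Eventually.of_forall fun n => ?_)
          rw [← ofReal_integral_eq_lintegral_ofReal (hf n) (hf0 n)]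
          exact ENNReal.ofReal_le_ofReal (hB n)
      _ = ENNReal.ofReal b := (ENNReal.tendsto_ofReal hb).liminf_eq
  have hgi : Integrable g μ :=
    ⟨hg, (hasFiniteIntegral_iff_ofReal hg0).2 (hlint.trans_lt ENNReal.ofReal_lt_top)⟩
  rw [← ofReal_integral_eq_lintegral_ofReal hgi hg0] at hlint
  exact ⟨hgi, (ENNReal.ofReal_le_ofReal_iff hb0).1 hlint⟩

lemma norm_fderiv_apply_le {E : Type*} [NormedAddCommGroup E] [NormedSpace ℝ E] {η : E → ℝ}
    {T : E → E} {C : ℝ} (hη : ∀ x, ‖fderiv ℝ η x‖ ≤ C) (hT : ∀ x, ‖T x‖ ≤ 1) (x : E) :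
    ‖fderiv ℝ η x (T x)‖ ≤ C :=
  ((fderiv ℝ η x).le_opNorm _).trans
    ((mul_le_of_le_one_right (norm_nonneg _) (hT x)).trans (hη x))

lemma abs_integral_mul_le {α : Type*} [MeasurableSpace α] {μ : Measure α} {f g : α → ℝ} {C : ℝ}
    (hf : Integrable f μ) (hg : ∀ x, ‖g x‖ ≤ C) : |∫ x, f x * g x ∂μ| ≤ C * ∫ x, |f x| ∂μ := by
  rw [← integral_const_mul, ← Real.norm_eq_abs]
  refine norm_integral_le_of_norm_le (hf.abs.const_mul C) (ae_of_all _ fun x => ?_)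
  rw [norm_mul, mul_comm]
  exact mul_le_mul_of_nonneg_right (hg x) (abs_nonneg _)

section Cutoff

variable {E : Type*} [NormedAddCommGroup E] [InnerProductSpace ℝ E] [FiniteDimensional ℝ E]

/-- A smooth function equal to `1` on the ball of radius `n + 1`, with gradient `O(1 / n)`. -/
def cutoff (n : ℕ) (x : E) : ℝ :=
  (⟨1, 2, one_pos, one_lt_two⟩ : ContDiffBump (0 : E)) ((1 / ((n : ℝ) + 1)) • x)

lemma contDiff_cutoff (n : ℕ) : ContDiff ℝ 1 (cutoff (E := E) n) := by
  unfold cutoff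
  exact (ContDiffBump.contDiff _).comp (contDiff_id.const_smul (1 / ((n : ℝ) + 1)))

lemma hasCompactSupport_cutoff (n : ℕ) : HasCompactSupport (cutoff (E := E) n) :=
  (ContDiffBump.hasCompactSupport _).comp_smul (c := 1 / ((n : ℝ) + 1)) (by positivity)

lemma cutoff_nonneg (n : ℕ) (x : E) : 0 ≤ cutoff n x := ContDiffBump.nonneg _

lemma cutoff_le_one (n : ℕ) (x : E) : cutoff n x ≤ 1 := ContDiffBump.le_one _

lemma tendsto_cutoff (x : E) : Tendsto (fun n => cutoff n x) atTop (𝓝 1) := by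
  let χ : ContDiffBump (0 : E) := ⟨1, 2, one_pos, one_lt_two⟩
  have harg := (tendsto_one_div_add_atTop_nhds_zero_nat (𝕜 := ℝ)).smul_const x
  rw [zero_smul] at harg
  have hχ : χ 0 = 1 := χ.one_of_mem_closedBall (Metric.mem_closedBall_self zero_le_one)
  exact hχ ▸ (χ.continuous.tendsto 0).comp harg

lemma exists_norm_fderiv_cutoff_le :
    ∃ C, ∀ (n : ℕ) (x : E), ‖fderiv ℝ (cutoff n) x‖ ≤ C * (1 / ((n : ℝ) + 1)) := by
  let χ : ContDiffBump (0 : E) := ⟨1, 2, one_pos, one_lt_two⟩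
  have hcont := (χ.contDiff (n := 1)).continuous_fderiv one_ne_zero
  obtain ⟨C, hC⟩ := hcont.bounded_above_of_compact_support (χ.hasCompactSupport.fderiv ℝ)
  refine ⟨C, fun n x => ?_⟩
  have hchain : fderiv ℝ (cutoff n) x =
      (1 / ((n : ℝ) + 1)) • fderiv ℝ χ ((1 / ((n : ℝ) + 1)) • x) := fderiv_comp_smul _
  rw [hchain, norm_smul, Real.norm_of_nonneg (by positivity), mul_comm]
  gcongr
  exact hC _

end Cutoff

section NonnegDivergence

variable {N : ℕ} {u : Euc N → ℝ} {T : Euc N → Euc N}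

lemma IsTestField.cutoff_smul (hT : ContDiff ℝ 1 T) (hT1 : ∀ x, ‖T x‖ ≤ 1) (n : ℕ) :
    IsTestField (fun x => cutoff n x • T x) where
  contDiff := (contDiff_cutoff n).smul hT
  hasCompactSupport := (hasCompactSupport_cutoff n).smul_right (f' := T)
  norm_le_one x := by
    rw [norm_smul, Real.norm_of_nonneg (cutoff_nonneg n x)]
    exact mul_le_one₀ (cutoff_le_one n x) (norm_nonneg _) (hT1 x)

lemma integrable_mul_cutoff_mul_divergence (hu : Integrable u) (hT : ContDiff ℝ 1 T) (n : ℕ) :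
    Integrable (fun x => u x * (cutoff n x * divergence T x)) := by
  have hcont : Continuous (fun x => cutoff n x * divergence T x) :=
    (contDiff_cutoff n).continuous.mul (continuous_divergence hT)
  obtain ⟨K, hK⟩ := hcont.bounded_above_of_compact_support (hasCompactSupport_cutoff n).mul_right
  exact hu.mul_bdd hcont.aestronglyMeasurable (ae_of_all _ hK)

lemma MemBV.integral_mul_cutoff_mul_divergence_le (hu : MemBV N u) (hT : ContDiff ℝ 1 T)
    (hT1 : ∀ x, ‖T x‖ ≤ 1) {n : ℕ} {C : ℝ}
    (hC : ∀ x : Euc N, ‖fderiv ℝ (cutoff n) x‖ ≤ C) :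
    ∫ x, u x * (cutoff n x * divergence T x) ≤ tv N u + C * ∫ x, |u x| := by
  have hbound := norm_fderiv_apply_le hC hT1
  have hcont : Continuous (fun x => fderiv ℝ (cutoff n) x (T x)) :=
    ((contDiff_cutoff n).continuous_fderiv one_ne_zero).clm_apply hT.continuous
  have hint : Integrable (fun x => u x * fderiv ℝ (cutoff n) x (T x)) :=
    hu.1.mul_bdd hcont.aestronglyMeasurable (ae_of_all _ hbound)
  have htest := hu.integral_mul_divergence_le_tv (IsTestField.cutoff_smul hT hT1 n)
  have hdiv : ∀ x, divergence (fun y => cutoff n y • T y) x =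
      cutoff n x * divergence T x + fderiv ℝ (cutoff n) x (T x) := fun x =>
    divergence_smul (hT.differentiable one_ne_zero x)
      ((contDiff_cutoff n).differentiable one_ne_zero x)
  simp_rw [hdiv, mul_add] at htest
  rw [integral_add (integrable_mul_cutoff_mul_divergence hu.1 hT n) hint] at htest
  linarith [neg_le_of_abs_le (abs_integral_mul_le hu.1 hbound)]

lemma MemBV.integral_mul_divergence_le_tv_of_nonneg (hu : MemBV N u) (hu0 : 0 ≤ᵐ[volume] u)
    (hT : ContDiff ℝ 1 T) (hT1 : ∀ x, ‖T x‖ ≤ 1) (hdiv : ∀ x, 0 ≤ divergence T x) :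
    Integrable (fun x => u x * divergence T x) ∧ ∫ x, u x * divergence T x ≤ tv N u := by
  obtain ⟨C, hC⟩ := exists_norm_fderiv_cutoff_le (E := Euc N)
  have hlim : Tendsto (fun n : ℕ => tv N u + C * (1 / ((n : ℝ) + 1)) * ∫ x, |u x|) atTop
      (𝓝 (tv N u)) := by
    simpa using tendsto_const_nhds.add
      ((tendsto_one_div_add_atTop_nhds_zero_nat.const_mul C).mul_const (∫ x, |u x|))
  refine integrable_and_integral_le_of_ae_tendsto
    (hu.1.1.mul (continuous_divergence hT).aestronglyMeasurable)
    (integrable_mul_cutoff_mul_divergence hu.1 hT) (fun n => ?_) (ae_of_all _ fun x => ?_)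
    (fun n => hu.integral_mul_cutoff_mul_divergence_le hT hT1 (hC n)) hlim
  · filter_upwards [hu0] with x hx using
      mul_nonneg hx (mul_nonneg (cutoff_nonneg n x) (hdiv x))
  · simpa using ((tendsto_cutoff x).mul_const (divergence T x)).const_mul (u x)

end NonnegDivergence

section AMGM

variable {ι : Type*} [Fintype ι] {z : ι → ℝ}

lemma card_mul_geom_mean_le_sum (hz : ∀ j, 0 ≤ z j) :
    Fintype.card ι * (∏ j, z j) ^ (1 / (Fintype.card ι : ℝ)) ≤ ∑ j, z j := by
  rcases isEmpty_or_nonempty ι with _ | _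
  · simp
  have hcard : (0 : ℝ) < Fintype.card ι := by exact_mod_cast Fintype.card_pos
  have h := Real.geom_mean_le_arith_mean Finset.univ (fun _ => 1) z (fun _ _ => zero_le_one)
    (by simpa using hcard) fun j _ => hz j
  simpa [le_div_iff₀' hcard] using h

lemma sqrt_sub_sqrt_geom_mean_sq_le (hz : ∀ j, 0 ≤ z j) (i : ι) :
    (√(z i) - √((∏ j, z j) ^ (1 / (Fintype.card ι : ℝ)))) ^ 2 ≤
      ∑ j, z j - Fintype.card ι * (∏ j, z j) ^ (1 / (Fintype.card ι : ℝ)) := by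
  have hprod : 0 ≤ ∏ j, z j := Finset.prod_nonneg fun j _ => hz j
  have hamgm := card_mul_geom_mean_le_sum fun j => Real.sqrt_nonneg (z j)
  rw [← Real.sqrt_prod _ fun j _ => hz j, Real.sqrt_eq_rpow, ← Real.rpow_mul hprod,
    mul_comm (1 / 2 : ℝ), Real.rpow_mul hprod, ← Real.sqrt_eq_rpow] at hamgm
  set g := (∏ j, z j) ^ (1 / (Fintype.card ι : ℝ))
  have hg : 0 ≤ g := rpow_nonneg hprod _
  calc (√(z i) - √g) ^ 2 ≤ ∑ j, (√(z j) - √g) ^ 2 :=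
        Finset.single_le_sum (f := fun j => (√(z j) - √g) ^ 2) (fun j _ => sq_nonneg _)
          (Finset.mem_univ i)
    _ = ∑ j, z j - 2 * √g * ∑ j, √(z j) + Fintype.card ι * g := by
        have hterm : ∀ j, (√(z j) - √g) ^ 2 = z j - 2 * √g * √(z j) + g := fun j => by
          rw [sub_sq, Real.sq_sqrt (hz j), Real.sq_sqrt hg]
          ring
        simp_rw [hterm, Finset.sum_add_distrib, Finset.sum_sub_distrib, ← Finset.mul_sum]
        simp
    _ ≤ ∑ j, z j - 2 * √g * (Fintype.card ι * √g) + Fintype.card ι * g := by gcongr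
    _ = ∑ j, z j - Fintype.card ι * g := by
        linear_combination (-2 * Fintype.card ι : ℝ) * Real.mul_self_sqrt hg

end AMGM

namespace ProductMixture

variable {N : ℕ} (m : ProductMixture N)

@[fun_prop]
lemma continuous_density : Continuous m.density :=
  continuous_finsetSum _ fun i _ => continuous_const.mul
    (continuous_finsetProd _ fun j _ => (m.contDiff_deriv_cdf_apply i j).continuous)

lemma geom_mean_density_le_sum_stretch (x : Euc N) :
    N * (unitBallVolume N * m.density x) ^ (1 / (N : ℝ)) ≤ ∑ j, m.stretch j x := by
  simpa [prod_stretch] using card_mul_geom_mean_le_sum fun j => (m.stretch_pos j x).le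

lemma continuous_geom_mean_density :
    Continuous (fun x => N * (unitBallVolume N * m.density x) ^ (1 / (N : ℝ))) :=
  continuous_const.mul ((continuous_const.mul m.continuous_density).rpow_const
    fun _ => Or.inr (by positivity))

lemma geom_mean_density_nonneg (x : Euc N) :
    0 ≤ N * (unitBallVolume N * m.density x) ^ (1 / (N : ℝ)) := by
  have := unitBallVolume_pos N
  have := m.density_nonneg x
  positivity

variable {u : Euc N → ℝ}

lemma integral_mul_sum_stretch_le_tv (hu : MemBV N u) (hu0 : 0 ≤ᵐ[volume] u) :
    Integrable (fun x => u x * ∑ j, m.stretch j x) ∧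
      ∫ x, u x * ∑ j, m.stretch j x ≤ tv N u := by
  simp_rw [← divergence_knothe]
  refine hu.integral_mul_divergence_le_tv_of_nonneg hu0 m.contDiff_knothe m.norm_knothe_le_one
    fun x => ?_
  rw [divergence_knothe]
  exact Finset.sum_nonneg fun j _ => (m.stretch_pos j x).le

lemma integral_mul_geom_mean_density_le_tv (hu : MemBV N u) (hu0 : 0 ≤ᵐ[volume] u) :
    Integrable (fun x => u x * (N * (unitBallVolume N * m.density x) ^ (1 / (N : ℝ)))) ∧
      ∫ x, u x * (N * (unitBallVolume N * m.density x) ^ (1 / (N : ℝ))) ≤ tv N u := by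
  obtain ⟨hint, hle⟩ := m.integral_mul_sum_stretch_le_tv hu hu0
  have hmono : ∀ᵐ x, u x * (N * (unitBallVolume N * m.density x) ^ (1 / (N : ℝ))) ≤
      u x * ∑ j, m.stretch j x := by
    filter_upwards [hu0] with x hx using
      mul_le_mul_of_nonneg_left (m.geom_mean_density_le_sum_stretch x) hx
  have hint' : Integrable
      (fun x => u x * (N * (unitBallVolume N * m.density x) ^ (1 / (N : ℝ)))) := by
    refine hint.mono' (hu.1.1.mul m.continuous_geom_mean_density.aestronglyMeasurable) ?_
    filter_upwards [hu0, hmono] with x hx hle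
    rwa [Real.norm_of_nonneg (mul_nonneg hx (m.geom_mean_density_nonneg x))]
  exact ⟨hint', (integral_mono_ae hint' hint hmono).trans hle⟩

end ProductMixture

/-! ### Integrals against a product mixture -/

section EuclideanProduct

variable {N : ℕ}

lemma integral_prod_coord (f : Fin N → ℝ → ℝ) :
    ∫ x : Euc N, ∏ j, f j (x j) = ∏ j, ∫ t, f j t := by
  rw [← integral_fintype_prod_volume_eq_prod]
  exact (EuclideanSpace.volume_preserving_symm_measurableEquiv_toLp (Fin N)).integral_comp'
    (fun x : Fin N → ℝ => ∏ j, f j (x j))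

lemma integrable_prod_coord {f : Fin N → ℝ → ℝ} (hf : ∀ j, Integrable (f j)) :
    Integrable (fun x : Euc N => ∏ j, f j (x j)) :=
  (EuclideanSpace.volume_preserving_symm_measurableEquiv_toLp
    (Fin N)).integrable_comp_of_integrable (Integrable.fintype_prod hf)

end EuclideanProduct

lemma integrable_deriv_of_nonneg_of_tendsto {F : ℝ → ℝ} {a b : ℝ} (hF : ContDiff ℝ 1 F)
    (hF' : ∀ t, 0 ≤ deriv F t) (ha : Tendsto F atBot (𝓝 a)) (hb : Tendsto F atTop (𝓝 b)) :
    Integrable (deriv F) := by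
  have hd : ∀ t, HasDerivAt F (deriv F t) t := fun t =>
    (hF.differentiable one_ne_zero t).hasDerivAt
  have hcont : Continuous (deriv F) := hF.continuous_deriv le_rfl
  have hnorm : ∀ t : ℝ, ∫ s in (-t)..(id t), ‖deriv F s‖ = F t - F (-t) := fun t => by
    simp_rw [Real.norm_of_nonneg (hF' _)]
    exact intervalIntegral.integral_eq_sub_of_hasDerivAt (fun s _ => hd s)
      (hcont.intervalIntegrable _ _)
  refine integrable_of_intervalIntegral_norm_tendsto (μ := volume) (l := atTop) (b - a)
    (fun t => hcont.integrableOn_Icc.mono_set Set.Ioc_subset_Icc_self)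
    tendsto_neg_atTop_atBot tendsto_id ?_
  simp_rw [hnorm]
  exact hb.sub (ha.comp tendsto_neg_atTop_atBot)

section Quantile

variable (k : ℕ)

@[simp]
lemma sinPowQuantile_zero : sinPowQuantile k 0 = 0 :=
  (strictMonoOn_sinPowCDF k).injOn (sinPowQuantile_mem_Icc k 0) ⟨le_rfl, pi_pos.le⟩
    (by rw [sinPowCDF_sinPowQuantile ⟨le_rfl, zero_le_one⟩, sinPowCDF_zero])

@[simp]
lemma sinPowQuantile_one : sinPowQuantile k 1 = π :=
  (strictMonoOn_sinPowCDF k).injOn (sinPowQuantile_mem_Icc k 1) ⟨pi_pos.le, le_rfl⟩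
    (by rw [sinPowCDF_sinPowQuantile ⟨zero_le_one, le_rfl⟩, sinPowCDF_pi])

variable {k}

lemma hasDerivAt_sin_sinPowQuantile_pow {y : ℝ} (hy : y ∈ Set.Ioo (0 : ℝ) 1) :
    HasDerivAt (fun y => sin (sinPowQuantile k y) ^ (k + 1) / ((k + 1) * wallisIntegral k))
      (cos (sinPowQuantile k y)) y := by
  have hw := wallisIntegral_pos k
  have hs := sin_sinPowQuantile_pos hy (k := k)
  refine (((hasDerivAt_sinPowQuantile hy).sin.pow (k + 1)).div_const _).congr_deriv ?_
  push_cast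
  field_simp

lemma integral_cos_sinPowQuantile_comp_mul_deriv {F : ℝ → ℝ} (hF : ContDiff ℝ 1 F)
    (hF' : ∀ t, 0 ≤ deriv F t) (hF01 : ∀ t, F t ∈ Set.Ioo (0 : ℝ) 1)
    (h0 : Tendsto F atBot (𝓝 0)) (h1 : Tendsto F atTop (𝓝 1)) :
    ∫ t, cos (sinPowQuantile k (F t)) * deriv F t = 0 := by
  have hd : ∀ t, HasDerivAt
      ((fun y => sin (sinPowQuantile k y) ^ (k + 1) / ((k + 1) * wallisIntegral k)) ∘ F)
      (cos (sinPowQuantile k (F t)) * deriv F t) t := fun t =>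
    (hasDerivAt_sin_sinPowQuantile_pow (hF01 t)).comp t
      (hF.differentiable one_ne_zero t).hasDerivAt
  have hcont : Continuous
      (fun y => sin (sinPowQuantile k y) ^ (k + 1) / ((k + 1) * wallisIntegral k)) :=
    ((continuous_sin.comp (continuous_sinPowQuantile k)).pow (k + 1)).div_const _
  have hcos : Continuous fun t => cos (sinPowQuantile k (F t)) :=
    continuous_cos.comp ((continuous_sinPowQuantile k).comp hF.continuous)
  have hint : Integrable fun t => cos (sinPowQuantile k (F t)) * deriv F t :=
    (integrable_deriv_of_nonneg_of_tendsto hF hF' h0 h1).bdd_mul hcos.aestronglyMeasurable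
      (ae_of_all _ fun t => Real.abs_cos_le_one _)
  rw [integral_of_hasDerivAt_of_tendsto hd hint ((hcont.tendsto 0).comp h0)
    ((hcont.tendsto 1).comp h1)]
  simp

end Quantile

namespace ProductMixture

variable {N : ℕ} (m : ProductMixture N) (j : Fin N)

/-- The distribution function of the `j`-th coordinate. -/
def coordCDF (t : ℝ) : ℝ := ∑ i, m.weight i * m.cdf i j t

lemma contDiff_coordCDF : ContDiff ℝ 2 (m.coordCDF j) :=
  ContDiff.sum fun i _ => contDiff_const.mul (m.contDiff_cdf i j)

lemma deriv_coordCDF (t : ℝ) :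
    deriv (m.coordCDF j) t = ∑ i, m.weight i * deriv (m.cdf i j) t :=
  (HasDerivAt.fun_sum fun i _ =>
    ((m.contDiff_cdf i j).differentiable two_ne_zero t).hasDerivAt.const_mul _).deriv

lemma deriv_coordCDF_pos (t : ℝ) : 0 < deriv (m.coordCDF j) t := by
  rw [deriv_coordCDF]
  exact m.sum_weight_mul_pos fun i => m.deriv_cdf_pos i j t

lemma tendsto_coordCDF_atBot : Tendsto (m.coordCDF j) atBot (𝓝 0) := by
  unfold coordCDF
  simpa using tendsto_finsetSum Finset.univ fun i _ =>
    (m.tendsto_cdf_atBot i j).const_mul (m.weight i)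

lemma tendsto_coordCDF_atTop : Tendsto (m.coordCDF j) atTop (𝓝 1) := by
  unfold coordCDF
  simpa [m.sum_weight] using tendsto_finsetSum Finset.univ fun i _ =>
    (m.tendsto_cdf_atTop i j).const_mul (m.weight i)

lemma coordCDF_mem_Ioo (t : ℝ) : m.coordCDF j t ∈ Set.Ioo (0 : ℝ) 1 := by
  refine ⟨m.sum_weight_mul_pos fun i => (m.cdf_mem_Ioo i j t).1, ?_⟩
  rw [coordCDF, ← m.sum_weight, ← sub_pos, ← Finset.sum_sub_distrib]
  simp_rw [← mul_one_sub]
  exact m.sum_weight_mul_pos fun i => sub_pos.2 (m.cdf_mem_Ioo i j t).2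

lemma integrable_deriv_cdf (i : m.ι) : Integrable (deriv (m.cdf i j)) :=
  integrable_deriv_of_nonneg_of_tendsto ((m.contDiff_cdf i j).of_le one_le_two)
    (fun t => (m.deriv_cdf_pos i j t).le) (m.tendsto_cdf_atBot i j) (m.tendsto_cdf_atTop i j)

lemma integral_deriv_cdf (i : m.ι) : ∫ t, deriv (m.cdf i j) t = 1 := by
  rw [integral_of_hasDerivAt_of_tendsto
    (fun t => ((m.contDiff_cdf i j).differentiable two_ne_zero t).hasDerivAt)
    (m.integrable_deriv_cdf j i) (m.tendsto_cdf_atBot i j) (m.tendsto_cdf_atTop i j), sub_zero]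

lemma integrable_deriv_coordCDF : Integrable (deriv (m.coordCDF j)) := by
  rw [funext (m.deriv_coordCDF j)]
  exact integrable_finsetSum _ fun i _ => (m.integrable_deriv_cdf j i).const_mul _

lemma integral_Iic_deriv_coordCDF (t : ℝ) :
    ∫ s in Set.Iic t, deriv (m.coordCDF j) s = m.coordCDF j t := by
  rw [integral_Iic_of_hasDerivAt_of_tendsto'
    (fun s _ => ((m.contDiff_coordCDF j).differentiable two_ne_zero s).hasDerivAt)
    (m.integrable_deriv_coordCDF j).integrableOn (m.tendsto_coordCDF_atBot j), sub_zero]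

section Observable

variable {φ : ℝ → ℝ} {C : ℝ}

lemma integrable_comp_mul_prod_and_integral_eq (i : m.ι) (hφ : Measurable φ)
    (hC : ∀ t, ‖φ t‖ ≤ C) :
    Integrable (fun x : Euc N => φ (x j) * ∏ l, deriv (m.cdf i l) (x l)) ∧
      ∫ x : Euc N, φ (x j) * ∏ l, deriv (m.cdf i l) (x l) =
        ∫ t, φ t * deriv (m.cdf i j) t := by
  let f : Fin N → ℝ → ℝ := fun l t => (if l = j then φ t else 1) * deriv (m.cdf i l) t
  have hprod : ∀ x : Euc N, φ (x j) * ∏ l, deriv (m.cdf i l) (x l) = ∏ l, f l (x l) := fun x => by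
    simp only [f, Finset.prod_mul_distrib]
    simp
  have hf : ∀ l, Integrable (f l) := fun l => by
    by_cases hl : l = j
    · simpa [f, hl] using
        (m.integrable_deriv_cdf j i).bdd_mul hφ.aestronglyMeasurable (ae_of_all _ hC)
    · simpa [f, hl] using m.integrable_deriv_cdf l i
  simp_rw [hprod]
  refine ⟨integrable_prod_coord hf, ?_⟩
  rw [integral_prod_coord, Finset.prod_eq_single j]
  · simp [f]
  · intro l _ hl
    simpa [f, hl] using m.integral_deriv_cdf l i
  · simp

lemma integrable_comp_mul_density_and_integral_eq (hφ : Measurable φ) (hC : ∀ t, ‖φ t‖ ≤ C) :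
    Integrable (fun x : Euc N => φ (x j) * m.density x) ∧
      ∫ x : Euc N, φ (x j) * m.density x = ∫ t, φ t * deriv (m.coordCDF j) t := by
  have h := fun i => m.integrable_comp_mul_prod_and_integral_eq j i hφ hC
  have hint : ∀ i, Integrable fun t => φ t * deriv (m.cdf i j) t := fun i =>
    (m.integrable_deriv_cdf j i).bdd_mul hφ.aestronglyMeasurable (ae_of_all _ hC)
  simp_rw [density, deriv_coordCDF, Finset.mul_sum, mul_left_comm (φ _) (m.weight _)]
  refine ⟨integrable_finsetSum _ fun i _ => (h i).1.const_mul _, ?_⟩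
  rw [integral_finsetSum _ fun i _ => (h i).1.const_mul _,
    integral_finsetSum _ fun i _ => (hint i).const_mul _]
  simp_rw [integral_const_mul, (h _).2]

end Observable

lemma integrable_density [NeZero N] : Integrable m.density := by
  simpa using (m.integrable_comp_mul_density_and_integral_eq 0 (φ := fun _ => 1)
    measurable_const (C := 1) (by simp)).1

lemma integral_density [NeZero N] : ∫ x, m.density x = 1 := by
  have h := (m.integrable_comp_mul_density_and_integral_eq 0 (φ := fun _ => 1)
    measurable_const (C := 1) (by simp)).2
  simp only [one_mul] at h
  rw [h, integral_of_hasDerivAt_of_tendsto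
    (fun t => ((m.contDiff_coordCDF 0).differentiable two_ne_zero t).hasDerivAt)
    (m.integrable_deriv_coordCDF 0) (m.tendsto_coordCDF_atBot 0) (m.tendsto_coordCDF_atTop 0),
    sub_zero]

lemma integral_indicator_Iic_mul_density (t : ℝ) :
    ∫ x : Euc N, (Set.Iic t).indicator 1 (x j) * m.density x = m.coordCDF j t := by
  have hbound : ∀ s, ‖(Set.Iic t).indicator (1 : ℝ → ℝ) s‖ ≤ 1 := fun s => by
    by_cases hs : s ∈ Set.Iic t <;> simp [hs]
  rw [(m.integrable_comp_mul_density_and_integral_eq j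
    (measurable_one.indicator measurableSet_Iic) hbound).2, ← integral_Iic_deriv_coordCDF,
    ← integral_indicator measurableSet_Iic]
  simp_rw [← Set.indicator_mul_left, Pi.one_apply, one_mul]

lemma knothe_apply_of_val_eq_zero {j : Fin N} (hj : j.val = 0) (x : Euc N) :
    m.knothe x j = -cos (sinPowQuantile N (m.coordCDF j (x j))) := by
  simp [knothe_apply, angle, conditionalCDF, coordCDF, hj]

lemma integrable_knothe_mul_density_and_integral_eq_zero {j : Fin N} (hj : j.val = 0) :
    Integrable (fun x : Euc N => m.knothe x j * m.density x) ∧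
      ∫ x : Euc N, m.knothe x j * m.density x = 0 := by
  have hcont : Continuous fun t => -cos (sinPowQuantile N (m.coordCDF j t)) :=
    (continuous_cos.comp ((continuous_sinPowQuantile N).comp
      (m.contDiff_coordCDF j).continuous)).neg
  have h := m.integrable_comp_mul_density_and_integral_eq j hcont.measurable (C := 1)
    fun t => by simpa using Real.abs_cos_le_one _
  simp_rw [m.knothe_apply_of_val_eq_zero hj]
  refine ⟨h.1, h.2.trans ?_⟩
  simp_rw [neg_mul, integral_neg]
  rw [integral_cos_sinPowQuantile_comp_mul_deriv ((m.contDiff_coordCDF j).of_le one_le_two)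
    (fun t => (m.deriv_coordCDF_pos j t).le) (m.coordCDF_mem_Ioo j) (m.tendsto_coordCDF_atBot j)
    (m.tendsto_coordCDF_atTop j), neg_zero]

end ProductMixture

/-! ### Density of product mixtures in `L¹` -/

section Softplus

/-- The primitive of the sigmoid function that vanishes at `-∞`. -/
def softplus (x : ℝ) : ℝ := log (1 + exp x)

lemma contDiff_softplus {n : WithTop ℕ∞} : ContDiff ℝ n softplus :=
  (contDiff_const.add contDiff_exp).log fun x => by positivity

lemma hasDerivAt_softplus (x : ℝ) : HasDerivAt softplus (sigmoid x) x := by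
  refine (((Real.hasDerivAt_exp x).const_add 1).log (by positivity)).congr_deriv ?_
  rw [sigmoid_def, Real.exp_neg]
  field_simp
  ring

lemma tendsto_softplus_atBot : Tendsto softplus atBot (𝓝 0) := by
  unfold softplus
  simpa using (Real.tendsto_exp_atBot.const_add 1).log (by norm_num)

lemma softplus_eq_add_softplus_neg (x : ℝ) : softplus x = x + softplus (-x) := by
  have hfactor : 1 + exp x = exp x * (1 + exp (-x)) := by
    rw [mul_add, ← Real.exp_add, add_neg_cancel, Real.exp_zero, mul_one, add_comm]
  rw [softplus, hfactor, Real.log_mul (by positivity) (by positivity), Real.log_exp, softplus]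

end Softplus

section SmoothUniformCDF

variable {a b : ℝ}

/-- A smooth approximation of the distribution function of the uniform law on `[a, b)`, obtained by
smoothing at scale `1 / n²` after a shift by `1 / n`; the shift makes the densities converge at the
endpoints too. -/
def smoothUniformCDF (a b n x : ℝ) : ℝ :=
  (softplus (n ^ 2 * (x - a) + n) - softplus (n ^ 2 * (x - b) + n)) / (n ^ 2 * (b - a))

lemma contDiff_smoothUniformCDF (a b n : ℝ) {r : WithTop ℕ∞} :
    ContDiff ℝ r (smoothUniformCDF a b n) := by
  have hsp : ∀ c : ℝ, ContDiff ℝ r fun x : ℝ => softplus (n ^ 2 * (x - c) + n) := fun c =>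
    contDiff_softplus.comp (by fun_prop)
  exact ((hsp a).sub (hsp b)).div_const _

lemma deriv_smoothUniformCDF (a b : ℝ) {n : ℝ} (hn : n ≠ 0) (x : ℝ) :
    deriv (smoothUniformCDF a b n) x =
      (sigmoid (n ^ 2 * (x - a) + n) - sigmoid (n ^ 2 * (x - b) + n)) / (b - a) := by
  have hsp : ∀ c : ℝ, HasDerivAt (fun x => softplus (n ^ 2 * (x - c) + n))
      (sigmoid (n ^ 2 * (x - c) + n) * n ^ 2) x := fun c =>
    (hasDerivAt_softplus _).comp x
      (by simpa using (((hasDerivAt_id x).sub_const c).const_mul (n ^ 2)).add_const n)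
  refine (((hsp a).sub (hsp b)).div_const (n ^ 2 * (b - a))).deriv.trans ?_
  rw [← sub_mul, mul_comm (n ^ 2) (b - a), mul_div_mul_right _ _ (pow_ne_zero 2 hn)]

lemma deriv_smoothUniformCDF_pos {n : ℝ} (hn : n ≠ 0) (hab : a < b) (x : ℝ) :
    0 < deriv (smoothUniformCDF a b n) x := by
  rw [deriv_smoothUniformCDF a b hn]
  refine div_pos (sub_pos.2 (sigmoid_lt ?_)) (sub_pos.2 hab)
  gcongr

lemma tendsto_smoothUniformCDF_atBot (a b : ℝ) {n : ℝ} (hn : n ≠ 0) :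
    Tendsto (smoothUniformCDF a b n) atBot (𝓝 0) := by
  have hsp : ∀ c : ℝ, Tendsto (fun x => softplus (n ^ 2 * (x - c) + n)) atBot (𝓝 0) := fun c =>
    tendsto_softplus_atBot.comp (tendsto_atBot_add_const_right _ _
      ((tendsto_atBot_add_const_right _ (-c) tendsto_id).const_mul_atBot (by positivity)))
  unfold smoothUniformCDF
  simpa using ((hsp a).sub (hsp b)).div_const (n ^ 2 * (b - a))

lemma tendsto_smoothUniformCDF_atTop {n : ℝ} (hn : n ≠ 0) (hab : a < b) :
    Tendsto (smoothUniformCDF a b n) atTop (𝓝 1) := by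
  have hsp : ∀ c : ℝ, Tendsto (fun x => softplus (-(n ^ 2 * (x - c) + n))) atTop (𝓝 0) := fun c =>
    tendsto_softplus_atBot.comp (tendsto_neg_atTop_atBot.comp (tendsto_atTop_add_const_right _ _
      ((tendsto_atTop_add_const_right _ (-c) tendsto_id).const_mul_atTop (by positivity))))
  have hlim := (((hsp a).sub (hsp b)).div_const (n ^ 2 * (b - a))).const_add 1
  simp only [sub_zero, zero_div, add_zero] at hlim
  refine hlim.congr fun x => ?_
  have hab' : b - a ≠ 0 := (sub_pos.2 hab).ne'
  rw [smoothUniformCDF, softplus_eq_add_softplus_neg (n ^ 2 * (x - a) + n),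
    softplus_eq_add_softplus_neg (n ^ 2 * (x - b) + n)]
  field_simp
  ring

lemma tendsto_sigmoid_sq_mul_add (c x : ℝ) :
    Tendsto (fun n : ℕ => sigmoid (((n : ℝ) + 1) ^ 2 * (x - c) + ((n : ℝ) + 1))) atTop
      (𝓝 ((Set.Ici c).indicator 1 x)) := by
  have hn : Tendsto (fun n : ℕ => (n : ℝ) + 1) atTop atTop :=
    tendsto_atTop_add_const_right _ _ tendsto_natCast_atTop_atTop
  have harg : ∀ n : ℕ, ((n : ℝ) + 1) ^ 2 * (x - c) + ((n : ℝ) + 1) =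
      ((n : ℝ) + 1) * (((n : ℝ) + 1) * (x - c) + 1) := fun n => by ring
  simp_rw [harg]
  by_cases hx : x ∈ Set.Ici c
  · rw [Set.indicator_of_mem hx]
    refine tendsto_sigmoid_atTop.comp (tendsto_atTop_mono (fun n => ?_) hn)
    refine le_mul_of_one_le_right (by positivity) (le_add_of_nonneg_left ?_)
    exact mul_nonneg (by positivity) (sub_nonneg.2 hx)
  · rw [Set.indicator_of_notMem hx]
    refine tendsto_sigmoid_atBot.comp (hn.atTop_mul_atBot₀ ?_)
    exact tendsto_atBot_add_const_right _ _
      (hn.atTop_mul_const_of_neg (sub_neg.2 (not_le.1 hx)))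

lemma tendsto_deriv_smoothUniformCDF (hab : a ≤ b) (x : ℝ) :
    Tendsto (fun n : ℕ => deriv (smoothUniformCDF a b (n + 1)) x) atTop
      (𝓝 ((b - a)⁻¹ * (Set.Ico a b).indicator 1 x)) := by
  have hlim := ((tendsto_sigmoid_sq_mul_add a x).sub (tendsto_sigmoid_sq_mul_add b x)).div_const
    (b - a)
  have hind : (Set.Ico a b).indicator (1 : ℝ → ℝ) x =
      (Set.Ici a).indicator 1 x - (Set.Ici b).indicator 1 x := by
    rcases lt_or_ge x a with hxa | hxa
    · simp [hxa, hxa.trans_le hab]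
    · rcases lt_or_ge x b with hxb | hxb <;> simp [hxa, hxb]
  rw [hind, mul_comm, ← div_eq_mul_inv]
  exact hlim.congr fun n => (deriv_smoothUniformCDF a b n.cast_add_one_ne_zero x).symm

end SmoothUniformCDF

section Grid

variable {N : ℕ} (n : ℕ)

/-- The interval of the partition of the line into intervals of length `1 / (n + 1)` that starts at
`k / (n + 1)`. -/
def gridInterval (k : ℤ) : Set ℝ := Set.Ico (k / ((n : ℝ) + 1)) ((k + 1) / ((n : ℝ) + 1))

/-- The index of the cube of side `1 / (n + 1)` containing `x`. -/
def gridIndex (x : Euc N) : Fin N → ℤ := fun j => ⌊((n : ℝ) + 1) * x j⌋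

/-- The lowest corner of the cube of side `1 / (n + 1)` with index `k`. -/
def gridPoint (k : Fin N → ℤ) : Euc N := WithLp.toLp 2 fun j => k j / ((n : ℝ) + 1)

/-- The step function equal to `w k` on the cube with index `k ∈ F`, and to zero elsewhere. -/
def gridStep (F : Finset (Fin N → ℤ)) (w : (Fin N → ℤ) → ℝ) (x : Euc N) : ℝ :=
  ∑ k ∈ F, w k * ∏ j, (gridInterval n (k j)).indicator 1 (x j)

lemma mem_gridInterval {x : ℝ} {k : ℤ} : x ∈ gridInterval n k ↔ ⌊((n : ℝ) + 1) * x⌋ = k := by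
  have hn : (0 : ℝ) < (n : ℝ) + 1 := by positivity
  rw [gridInterval, Int.floor_eq_iff, Set.mem_Ico, div_le_iff₀ hn, lt_div_iff₀ hn, mul_comm]

lemma gridInterval_endpoints_lt (k : ℤ) :
    (k / ((n : ℝ) + 1) : ℝ) < (k + 1) / ((n : ℝ) + 1) := by
  gcongr
  exact lt_add_one _

lemma prod_indicator_gridInterval (k : Fin N → ℤ) (x : Euc N) :
    ∏ j, (gridInterval n (k j)).indicator (1 : ℝ → ℝ) (x j) =
      if gridIndex n x = k then 1 else 0 := by
  split_ifs with h
  · refine Finset.prod_eq_one fun j _ => Set.indicator_of_mem ?_ _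
    exact (mem_gridInterval n).2 (congrFun h j)
  · obtain ⟨j, hj⟩ := Function.ne_iff.1 h
    exact Finset.prod_eq_zero (Finset.mem_univ j)
      (Set.indicator_of_notMem (fun hx => hj ((mem_gridInterval n).1 hx)) _)

lemma gridStep_apply (F : Finset (Fin N → ℤ)) (w : (Fin N → ℤ) → ℝ) (x : Euc N) :
    gridStep n F w x = if gridIndex n x ∈ F then w (gridIndex n x) else 0 := by
  simp [gridStep, prod_indicator_gridInterval]

lemma gridStep_nonneg {F : Finset (Fin N → ℤ)} {w : (Fin N → ℤ) → ℝ} (hw : ∀ k, 0 ≤ w k)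
    (x : Euc N) : 0 ≤ gridStep n F w x := by
  rw [gridStep_apply]
  split_ifs
  exacts [hw _, le_rfl]

lemma integrable_indicator_gridInterval (k : ℤ) :
    Integrable ((gridInterval n k).indicator (1 : ℝ → ℝ)) :=
  (integrable_indicator_iff measurableSet_Ico).2 (integrableOn_const (by simp))

lemma integral_indicator_gridInterval (k : ℤ) :
    ∫ t, (gridInterval n k).indicator (1 : ℝ → ℝ) t = ((n : ℝ) + 1)⁻¹ := by
  rw [gridInterval, integral_indicator_one measurableSet_Ico, measureReal_def, Real.volume_Ico,
    ENNReal.toReal_ofReal (sub_nonneg.2 (gridInterval_endpoints_lt n k).le), ← sub_div,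
    add_sub_cancel_left, one_div]

lemma integrable_prod_indicator_gridInterval (k : Fin N → ℤ) :
    Integrable fun x : Euc N => ∏ j, (gridInterval n (k j)).indicator (1 : ℝ → ℝ) (x j) :=
  integrable_prod_coord (f := fun j => (gridInterval n (k j)).indicator 1) fun j =>
    integrable_indicator_gridInterval n (k j)

lemma integral_prod_indicator_gridInterval (k : Fin N → ℤ) :
    ∫ x : Euc N, ∏ j, (gridInterval n (k j)).indicator (1 : ℝ → ℝ) (x j) =
      ((n : ℝ) + 1)⁻¹ ^ N := by
  rw [integral_prod_coord fun j => (gridInterval n (k j)).indicator (1 : ℝ → ℝ)]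
  simp only [integral_indicator_gridInterval, Finset.prod_const, Finset.card_univ,
    Fintype.card_fin]

lemma integrable_gridStep (F : Finset (Fin N → ℤ)) (w : (Fin N → ℤ) → ℝ) :
    Integrable (gridStep n F w) :=
  integrable_finsetSum F fun k _ => (integrable_prod_indicator_gridInterval n k).const_mul (w k)

lemma integral_gridStep (F : Finset (Fin N → ℤ)) (w : (Fin N → ℤ) → ℝ) :
    ∫ x, gridStep n F w x = ((n : ℝ) + 1)⁻¹ ^ N * ∑ k ∈ F, w k := by
  unfold gridStep
  rw [integral_finsetSum F fun k _ =>
    (integrable_prod_indicator_gridInterval n k).const_mul (w k), Finset.mul_sum]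
  refine Finset.sum_congr rfl fun k _ => ?_
  rw [integral_const_mul, integral_prod_indicator_gridInterval, mul_comm]

lemma abs_floor_div_sub_le (t : ℝ) : |(⌊((n : ℝ) + 1) * t⌋ : ℝ) / ((n : ℝ) + 1) - t| ≤
    1 / ((n : ℝ) + 1) := by
  have hn : (0 : ℝ) < (n : ℝ) + 1 := by positivity
  rw [div_sub' hn.ne', abs_div, abs_of_pos hn, abs_sub_comm, Int.self_sub_floor, Int.abs_fract]
  gcongr
  exact (Int.fract_lt_one _).le

variable (N) in
lemma exists_dist_gridPoint_gridIndex_le : ∃ C, 0 ≤ C ∧ ∀ (n : ℕ) (x : Euc N),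
    dist (gridPoint n (gridIndex n x)) x ≤ C * (1 / ((n : ℝ) + 1)) := by
  obtain ⟨K, hK⟩ : ∃ K, LipschitzWith K (WithLp.toLp 2 : (Fin N → ℝ) → Euc N) :=
    ⟨_, PiLp.lipschitzWith_toLp 2 fun _ => ℝ⟩
  refine ⟨K, K.coe_nonneg, fun n x => (hK.dist_le_mul _ (WithLp.ofLp x)).trans ?_⟩
  gcongr
  exact (dist_pi_le_iff (by positivity)).2 fun j => abs_floor_div_sub_le n (x j)

lemma exists_gridStep_eq {g : Euc N → ℝ} (hg : HasCompactSupport g) :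
    ∃ F : Finset (Fin N → ℤ), ∀ x,
      gridStep n F (g ∘ gridPoint n) x = g (gridPoint n (gridIndex n x)) := by
  obtain ⟨R, -, hR⟩ := hg.exists_pos_le_norm
  have hn : (0 : ℝ) < (n : ℝ) + 1 := by positivity
  obtain ⟨M, hM⟩ := exists_int_ge (((n : ℝ) + 1) * R)
  refine ⟨Fintype.piFinset fun _ => Finset.Icc (-M) M, fun x => ?_⟩
  rw [gridStep_apply, Function.comp_apply, ite_eq_left_iff]
  refine fun hout => (hR _ ?_).symm
  contrapose! hout
  refine Fintype.mem_piFinset.2 fun j => ?_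
  have hcoord := (PiLp.norm_apply_le (gridPoint n (gridIndex n x)) j).trans hout.le
  simp only [gridPoint, Real.norm_eq_abs, abs_div, abs_of_pos hn] at hcoord
  rw [div_le_iff₀' hn] at hcoord
  have hindex := abs_le.1 (hcoord.trans hM)
  exact Finset.mem_Icc.2 ⟨by exact_mod_cast hindex.1, by exact_mod_cast hindex.2⟩

lemma tendsto_gridPoint_gridIndex (x : Euc N) :
    Tendsto (fun n => gridPoint n (gridIndex n x)) atTop (𝓝 x) := by
  obtain ⟨C, -, hC⟩ := exists_dist_gridPoint_gridIndex_le N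
  refine tendsto_iff_dist_tendsto_zero.2 (squeeze_zero (fun _ => dist_nonneg) (hC · x) ?_)
  simpa using tendsto_one_div_add_atTop_nhds_zero_nat.const_mul C

lemma exists_norm_comp_gridPoint_le {g : Euc N → ℝ} (hg : Continuous g)
    (hs : HasCompactSupport g) : ∃ R K, ∀ (n : ℕ) (x : Euc N),
      ‖g (gridPoint n (gridIndex n x))‖ ≤ (Metric.closedBall 0 R).indicator (fun _ => K) x := by
  obtain ⟨R, -, hR⟩ := hs.exists_pos_le_norm
  obtain ⟨K, hK⟩ := hg.bounded_above_of_compact_support hs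
  obtain ⟨C, hC0, hC⟩ := exists_dist_gridPoint_gridIndex_le N
  refine ⟨R + C, K, fun n x => ?_⟩
  by_cases hx : x ∈ Metric.closedBall 0 (R + C)
  · simpa [hx] using hK _
  · rw [hR, norm_zero, Set.indicator_of_notMem hx]
    have hdist : dist (gridPoint n (gridIndex n x)) x ≤ C :=
      (hC n x).trans (mul_le_of_le_one_right hC0 (div_le_one_of_le₀ (by simp) (by positivity)))
    rw [mem_closedBall_zero_iff, not_le] at hx
    linarith [norm_sub_norm_le x (gridPoint n (gridIndex n x)), dist_eq_norm'
      (gridPoint n (gridIndex n x)) x]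

lemma exists_integral_norm_gridStep_sub_lt {g : Euc N → ℝ} (hg : Continuous g)
    (hs : HasCompactSupport g) {ε : ℝ} (hε : 0 < ε) :
    ∃ (n : ℕ) (F : Finset (Fin N → ℤ)),
      ∫ x, ‖gridStep n F (g ∘ gridPoint n) x - g x‖ < ε := by
  choose F hF using fun n => exists_gridStep_eq n hs
  obtain ⟨R, K, hK⟩ := exists_norm_comp_gridPoint_le hg hs
  have hgi : Integrable g := hg.integrable_of_hasCompactSupport hs
  have hdom : Integrable ((Metric.closedBall (0 : Euc N) R).indicator fun _ => K) :=
    (integrable_indicator_iff measurableSet_closedBall).2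
      (integrableOn_const measure_closedBall_lt_top.ne)
  have hlim : Tendsto (fun n => ∫ x, ‖gridStep n (F n) (g ∘ gridPoint n) x - g x‖) atTop
      (𝓝 (∫ _ : Euc N, (0 : ℝ))) := by
    refine tendsto_integral_of_dominated_convergence _
      (fun n => ((integrable_gridStep n _ _).sub hgi).norm.1) (hdom.add hgi.norm)
      (fun n => ae_of_all _ fun x => ?_) (ae_of_all _ fun x => ?_)
    · rw [hF n, norm_norm]
      exact (norm_sub_le _ _).trans (add_le_add (hK n x) le_rfl)
    · simp_rw [hF]
      simpa using
        (((hg.tendsto x).comp (tendsto_gridPoint_gridIndex x)).sub_const (g x)).norm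
  rw [integral_zero] at hlim
  obtain ⟨n, hn⟩ := (hlim.eventually (gt_mem_nhds hε)).exists
  exact ⟨n, F n, hn⟩

/-- The product mixture with weights `w` on `F` whose components are smoothings, at scale `s`, of
the uniform laws on the grid cubes. -/
def gridMixture (F : Finset (Fin N → ℤ)) (w : (Fin N → ℤ) → ℝ) (hw : ∀ k, 0 ≤ w k)
    (hw1 : ∑ k ∈ F, w k = 1) (s : ℕ) : ProductMixture N where
  ι := F
  weight k := w k
  cdf k j := smoothUniformCDF (k.1 j / ((n : ℝ) + 1)) ((k.1 j + 1) / ((n : ℝ) + 1)) (s + 1)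
  weight_nonneg _ := hw _
  sum_weight := (Finset.sum_coe_sort F w).trans hw1
  contDiff_cdf _ _ := contDiff_smoothUniformCDF _ _ _
  deriv_cdf_pos _ _ := deriv_smoothUniformCDF_pos s.cast_add_one_ne_zero
    (gridInterval_endpoints_lt n _)
  tendsto_cdf_atBot _ _ := tendsto_smoothUniformCDF_atBot _ _ s.cast_add_one_ne_zero
  tendsto_cdf_atTop _ _ := tendsto_smoothUniformCDF_atTop s.cast_add_one_ne_zero
    (gridInterval_endpoints_lt n _)

variable {F : Finset (Fin N → ℤ)} {w : (Fin N → ℤ) → ℝ} (hw : ∀ k, 0 ≤ w k)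
  (hw1 : ∑ k ∈ F, w k = 1)

lemma tendsto_density_gridMixture (x : Euc N) :
    Tendsto (fun s => (gridMixture n F w hw hw1 s).density x) atTop
      (𝓝 (((n : ℝ) + 1) ^ N * gridStep n F w x)) := by
  have hdens : ∀ s, (gridMixture n F w hw hw1 s).density x = ∑ k ∈ F, w k * ∏ j,
      deriv (smoothUniformCDF (k j / ((n : ℝ) + 1)) ((k j + 1) / ((n : ℝ) + 1)) (s + 1)) (x j) :=
    fun s => Finset.sum_coe_sort F fun k => w k * ∏ j,
      deriv (smoothUniformCDF (k j / ((n : ℝ) + 1)) ((k j + 1) / ((n : ℝ) + 1)) (s + 1)) (x j)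
  simp_rw [hdens, gridStep, Finset.mul_sum]
  refine tendsto_finsetSum _ fun k _ => ?_
  have hlim := (tendsto_finsetProd Finset.univ fun j _ => tendsto_deriv_smoothUniformCDF
    (gridInterval_endpoints_lt n (k j)).le (x j)).const_mul (w k)
  simpa [← sub_div, Finset.prod_mul_distrib, mul_left_comm, gridInterval] using hlim

lemma exists_integral_norm_density_sub_gridStep_lt [NeZero N] (hw : ∀ k, 0 ≤ w k)
    (hw1 : ∑ k ∈ F, w k = 1) {ε : ℝ} (hε : 0 < ε) :
    ∃ m : ProductMixture N, ∫ x, ‖m.density x - ((n : ℝ) + 1) ^ N * gridStep n F w x‖ < ε := by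
  have hlim := tendsto_integral_norm_sub_of_ae_tendsto
    (fun s => (gridMixture n F w hw hw1 s).integrable_density)
    ((integrable_gridStep n F w).const_mul (((n : ℝ) + 1) ^ N))
    (ae_of_all volume (tendsto_density_gridMixture n hw hw1)) fun s => by
      simp_rw [Real.norm_of_nonneg (ProductMixture.density_nonneg _ _),
        Real.norm_of_nonneg (mul_nonneg (pow_nonneg n.cast_add_one_pos.le N)
          (gridStep_nonneg n hw _)), integral_const_mul]
      rw [ProductMixture.integral_density, integral_gridStep, hw1, ← mul_assoc, ← mul_pow,
        mul_inv_cancel₀ n.cast_add_one_ne_zero]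
      simp
  obtain ⟨s, hs⟩ := (hlim.eventually (gt_mem_nhds hε)).exists
  exact ⟨_, hs⟩

end Grid

lemma integral_norm_div_integral_sub_le {α : Type*} [MeasurableSpace α] {μ : Measure α}
    {s h : α → ℝ} (hs : Integrable s μ) (hs0 : ∀ x, 0 ≤ s x) (hpos : 0 < ∫ x, s x ∂μ)
    (hh : Integrable h μ) (hh1 : ∫ x, h x ∂μ = 1) :
    ∫ x, ‖(∫ y, s y ∂μ)⁻¹ * s x - h x‖ ∂μ ≤ 2 * ∫ x, ‖s x - h x‖ ∂μ := by
  set M := ∫ y, s y ∂μ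
  have hmass : |1 - M| ≤ ∫ x, ‖s x - h x‖ ∂μ := by
    rw [abs_sub_comm, ← hh1, ← integral_sub hs hh]
    exact norm_integral_le_integral_norm fun x => s x - h x
  have hscale : ∫ x, ‖M⁻¹ * s x - s x‖ ∂μ = |1 - M| := by
    calc ∫ x, ‖M⁻¹ * s x - s x‖ ∂μ = ∫ x, |M⁻¹ - 1| * s x ∂μ := integral_congr_ae <|
          ae_of_all _ fun x => by
            beta_reduce
            rw [← sub_one_mul M⁻¹, norm_mul, Real.norm_of_nonneg (hs0 x), Real.norm_eq_abs]
      _ = |M⁻¹ - 1| * |M| := by rw [integral_const_mul, abs_of_pos hpos]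
      _ = |1 - M| := by rw [← abs_mul, sub_mul, inv_mul_cancel₀ hpos.ne', one_mul]
  linarith [integral_norm_sub_le_add (hs.const_mul M⁻¹) hs hh]

namespace ProductMixture

variable {N : ℕ} {h : Euc N → ℝ}

lemma exists_gridStep_approx (hi : Integrable h) (h0 : 0 ≤ᵐ[volume] h) {ε : ℝ} (hε : 0 < ε) :
    ∃ (n : ℕ) (F : Finset (Fin N → ℤ)) (w : (Fin N → ℤ) → ℝ), (∀ k, 0 ≤ w k) ∧
      ∫ x, ‖gridStep n F w x - h x‖ < ε := by
  obtain ⟨g, hgs, hgh, hgc, hgi⟩ := hi.exists_hasCompactSupport_integral_sub_le (half_pos hε)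
  let g' : Euc N → ℝ := fun x => max (g x) 0
  have hg'c : Continuous g' := hgc.max continuous_const
  have hg's : HasCompactSupport g' := hgs.comp_left (g := fun t => max t 0) (by simp)
  have hg'i : Integrable g' := hg'c.integrable_of_hasCompactSupport hg's
  have hg'h : ∫ x, ‖g' x - h x‖ ≤ ε / 2 := by
    refine (integral_mono_ae (hg'i.sub hi).norm (hi.sub hgi).norm ?_).trans hgh
    filter_upwards [h0] with x (hx : 0 ≤ h x)
    have hle := abs_max_sub_max_le_abs (g x) (h x) 0
    rwa [max_eq_left hx, abs_sub_comm (g x)] at hle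
  obtain ⟨n, F, hF⟩ := exists_integral_norm_gridStep_sub_lt hg'c hg's (half_pos hε)
  refine ⟨n, F, g' ∘ gridPoint n, fun k => le_max_right _ _, ?_⟩
  linarith [integral_norm_sub_le_add (integrable_gridStep n F (g' ∘ gridPoint n)) hg'i hi]

lemma exists_integral_norm_density_sub_lt [NeZero N] (hi : Integrable h) (h0 : 0 ≤ᵐ[volume] h)
    (h1 : ∫ x, h x = 1) {ε : ℝ} (hε : 0 < ε) :
    ∃ m : ProductMixture N, ∫ x, ‖m.density x - h x‖ < ε := by
  obtain ⟨n, F, w, hw, hstep⟩ := exists_gridStep_approx hi h0 (lt_min (half_pos one_pos)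
    (div_pos hε (by norm_num : (0 : ℝ) < 4)))
  have hs := integrable_gridStep n F w
  have hmass : 0 < ∫ x, gridStep n F w x := by
    have hle := norm_integral_le_integral_norm (μ := volume) fun x => gridStep n F w x - h x
    rw [integral_sub hs hi, h1, Real.norm_eq_abs] at hle
    linarith [(abs_le.1 hle).1, hstep.trans_le (min_le_left _ _)]
  have hnorm := integral_norm_div_integral_sub_le hs (gridStep_nonneg n hw) hmass hi h1
  rw [integral_gridStep] at hnorm hmass
  have hW : 0 < ∑ k ∈ F, w k := pos_of_mul_pos_right hmass (by positivity)
  obtain ⟨m, hm⟩ := exists_integral_norm_density_sub_gridStep_lt n (F := F)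
    (w := fun k => (∑ l ∈ F, w l)⁻¹ * w k) (fun k => mul_nonneg (inv_nonneg.2 hW.le) (hw k))
    (by rw [← Finset.mul_sum, inv_mul_cancel₀ hW.ne']) (half_pos hε)
  have hrescale : ∀ x, ((n : ℝ) + 1) ^ N * gridStep n F (fun k => (∑ l ∈ F, w l)⁻¹ * w k) x =
      (((n : ℝ) + 1)⁻¹ ^ N * ∑ k ∈ F, w k)⁻¹ * gridStep n F w x := fun x => by
    simp only [gridStep, mul_assoc, ← Finset.mul_sum, mul_inv, inv_pow, inv_inv]
  simp_rw [hrescale] at hm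
  refine ⟨m, ?_⟩
  linarith [integral_norm_sub_le_add m.integrable_density
    (hs.const_mul (((n : ℝ) + 1)⁻¹ ^ N * ∑ k ∈ F, w k)⁻¹) hi,
    hstep.trans_le (min_le_right _ _)]

lemma exists_seq_tendsto_density [NeZero N] (hi : Integrable h) (h0 : 0 ≤ᵐ[volume] h)
    (h1 : ∫ x, h x = 1) : ∃ m : ℕ → ProductMixture N,
      (∀ᵐ x, Tendsto (fun n => (m n).density x) atTop (𝓝 (h x))) ∧
      Tendsto (fun n => ∫ x, ‖(m n).density x - h x‖) atTop (𝓝 0) := by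
  choose m hm using fun n : ℕ => exists_integral_norm_density_sub_lt hi h0 h1
    (Nat.one_div_pos_of_nat (α := ℝ) (n := n))
  have hlim : Tendsto (fun n => ∫ x, ‖(m n).density x - h x‖) atTop (𝓝 0) :=
    squeeze_zero (fun n => integral_nonneg fun x => norm_nonneg _) (fun n => (hm n).le)
      tendsto_one_div_add_atTop_nhds_zero_nat
  have hmeas : TendstoInMeasure volume (fun n => (m n).density) atTop h := by
    refine tendstoInMeasure_of_tendsto_eLpNorm one_ne_zero
      (fun n => (m n).integrable_density.1) hi.1 ?_
    have heLp : ∀ n, eLpNorm ((m n).density - h) 1 volume =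
        ENNReal.ofReal (∫ x, ‖(m n).density x - h x‖) := fun n =>
      eLpNorm_one_eq_lintegral_enorm.trans
        (ofReal_integral_norm_eq_lintegral_enorm ((m n).integrable_density.sub hi)).symm
    simpa [heLp, Function.comp_def] using (ENNReal.continuous_ofReal.tendsto 0).comp hlim
  obtain ⟨ns, hns, hae⟩ := hmeas.exists_seq_tendsto_ae
  exact ⟨m ∘ ns, hae, hlim.comp hns.tendsto_atTop⟩

end ProductMixture

/-! ### The Sobolev inequality -/

section JensenRpow

variable {α : Type*} [MeasurableSpace α] {p : ℝ} {m : α → ℝ}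

section Probability

variable {ν : Measure α} [IsProbabilityMeasure ν]

lemma integrable_of_ae_mem_Icc (hm : AEStronglyMeasurable m ν)
    (h01 : ∀ᵐ x ∂ν, m x ∈ Set.Icc 0 1) : Integrable m ν := by
  refine (integrable_const (1 : ℝ)).mono' hm ?_
  filter_upwards [h01] with x hx
  rw [Real.norm_of_nonneg hx.1]
  exact hx.2

lemma integrable_rpow_of_ae_mem_Icc (hm : AEStronglyMeasurable m ν)
    (h01 : ∀ᵐ x ∂ν, m x ∈ Set.Icc 0 1) (hp : 0 ≤ p) : Integrable ((· ^ p) ∘ m) ν := by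
  refine integrable_of_ae_mem_Icc
    ((Real.continuous_rpow_const hp).comp_aestronglyMeasurable hm) ?_
  filter_upwards [h01] with x hx using ⟨rpow_nonneg hx.1 p, rpow_le_one hx.1 hx.2 hp⟩

lemma integral_le_integral_rpow_rpow_inv (hm : AEStronglyMeasurable m ν)
    (h01 : ∀ᵐ x ∂ν, m x ∈ Set.Icc 0 1) (hp : 1 ≤ p) :
    ∫ x, m x ∂ν ≤ (∫ x, m x ^ p ∂ν) ^ p⁻¹ := by
  have hp0 : 0 < p := one_pos.trans_le hp
  have h0 : ∀ᵐ x ∂ν, 0 ≤ m x := h01.mono fun x hx => hx.1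
  rw [le_rpow_inv_iff_of_pos (integral_nonneg_of_ae h0)
    (integral_nonneg_of_ae (h0.mono fun x hx => rpow_nonneg hx p)) hp0]
  exact (convexOn_rpow hp).map_integral_le (Real.continuous_rpow_const hp0.le).continuousOn
    isClosed_Ici h0 (integrable_of_ae_mem_Icc hm h01)
    (integrable_rpow_of_ae_mem_Icc hm h01 hp0.le)

lemma ae_eq_const_or_integral_lt_integral_rpow_rpow_inv (hm : AEStronglyMeasurable m ν)
    (h01 : ∀ᵐ x ∂ν, m x ∈ Set.Icc 0 1) (hp : 1 < p) :
    (∃ c, ∀ᵐ x ∂ν, m x = c) ∨ ∫ x, m x ∂ν < (∫ x, m x ^ p ∂ν) ^ p⁻¹ := by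
  have hp0 : 0 < p := one_pos.trans hp
  have h0 : ∀ᵐ x ∂ν, 0 ≤ m x := h01.mono fun x hx => hx.1
  have hjensen := (strictConvexOn_rpow hp).ae_eq_const_or_map_average_lt
    (Real.continuous_rpow_const hp0.le).continuousOn isClosed_Ici h0
    (integrable_of_ae_mem_Icc hm h01) (integrable_rpow_of_ae_mem_Icc hm h01 hp0.le)
  rw [average_eq_integral, average_eq_integral, ← lt_rpow_inv_iff_of_pos
    (integral_nonneg_of_ae h0) (integral_nonneg_of_ae (h0.mono fun x hx => rpow_nonneg hx p)) hp0]
    at hjensen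
  exact hjensen.imp_left fun h => ⟨_, h⟩

lemma exists_ae_eq_const_of_rpow_inv_add_le_one (hm : AEStronglyMeasurable m ν)
    (h01 : ∀ᵐ x ∂ν, m x ∈ Set.Icc 0 1) (hp : 1 < p)
    (h : (∫ x, m x ^ p ∂ν) ^ p⁻¹ + (∫ x, (1 - m x) ^ p ∂ν) ^ p⁻¹ ≤ 1) :
    ∃ c, ∀ᵐ x ∂ν, m x = c := by
  refine (ae_eq_const_or_integral_lt_integral_rpow_rpow_inv hm h01 hp).resolve_right fun hlt => ?_
  have hcompl : ∫ x, (1 - m x) ∂ν ≤ (∫ x, (1 - m x) ^ p ∂ν) ^ p⁻¹ :=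
    integral_le_integral_rpow_rpow_inv (aestronglyMeasurable_const.sub hm)
      (h01.mono fun x hx => ⟨sub_nonneg.2 hx.2, sub_le_self 1 hx.1⟩) hp.le
  rw [integral_sub (integrable_const _) (integrable_of_ae_mem_Icc hm h01), integral_const,
    probReal_univ, one_smul] at hcompl
  linarith

end Probability

variable {μ : Measure α} {w : α → ℝ}

lemma integral_withDensity_div (hw : Integrable w μ) (hw0 : ∀ x, 0 ≤ w x) {Z : ℝ} (hZ : 0 ≤ Z)
    (f : α → ℝ) : ∫ x, f x ∂(μ.withDensity fun x => ENNReal.ofReal (w x / Z)) =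
      (∫ x, f x * w x ∂μ) / Z := by
  rw [integral_withDensity_eq_integral_toReal_smul₀
    (hw.1.aemeasurable.div_const Z).ennreal_ofReal (ae_of_all _ fun x => ENNReal.ofReal_lt_top),
    ← integral_div]
  refine integral_congr_ae (ae_of_all _ fun x => ?_)
  simp only [smul_eq_mul, ENNReal.toReal_ofReal (div_nonneg (hw0 x) hZ)]
  ring

lemma isProbabilityMeasure_withDensity_div (hw : Integrable w μ) (hw0 : ∀ x, 0 ≤ w x)
    (hZ : 0 < ∫ x, w x ∂μ) :
    IsProbabilityMeasure (μ.withDensity fun x => ENNReal.ofReal (w x / ∫ y, w y ∂μ)) := by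
  refine ⟨?_⟩
  rw [withDensity_apply _ MeasurableSet.univ, Measure.restrict_univ,
    ← ofReal_integral_eq_lintegral_ofReal (hw.div_const _)
      (ae_of_all _ fun x => div_nonneg (hw0 x) hZ.le), integral_div, div_self hZ.ne',
    ENNReal.ofReal_one]

lemma exists_ae_eq_const_of_rpow_inv_add_le (hw : Integrable w μ) (hw0 : ∀ x, 0 ≤ w x)
    (hm : AEStronglyMeasurable m μ) (h01 : ∀ x, m x ∈ Set.Icc 0 1) (hp : 1 < p)
    (h : (∫ x, m x ^ p * w x ∂μ) ^ p⁻¹ + (∫ x, (1 - m x) ^ p * w x ∂μ) ^ p⁻¹ ≤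
      (∫ x, w x ∂μ) ^ p⁻¹) :
    ∃ c, ∀ᵐ x ∂μ, w x ≠ 0 → m x = c := by
  rcases (integral_nonneg (μ := μ) (f := w) hw0).eq_or_lt with hZ | hZ
  · have hw_zero := (integral_eq_zero_iff_of_nonneg hw0 hw).1 hZ.symm
    exact ⟨0, hw_zero.mono fun x hx hne => absurd hx hne⟩
  have hprob := isProbabilityMeasure_withDensity_div hw hw0 hZ
  have hpow : 0 ≤ ∫ x, m x ^ p * w x ∂μ := integral_nonneg fun x =>
    mul_nonneg (rpow_nonneg (h01 x).1 p) (hw0 x)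
  have hpow' : 0 ≤ ∫ x, (1 - m x) ^ p * w x ∂μ := integral_nonneg fun x =>
    mul_nonneg (rpow_nonneg (sub_nonneg.2 (h01 x).2) p) (hw0 x)
  obtain ⟨c, hc⟩ := exists_ae_eq_const_of_rpow_inv_add_le_one
    (hm.mono_ac (withDensity_absolutelyContinuous μ _)) (ae_of_all _ h01) hp (by
      rw [integral_withDensity_div hw hw0 hZ.le, integral_withDensity_div hw hw0 hZ.le,
        Real.div_rpow hpow hZ.le, Real.div_rpow hpow' hZ.le, ← add_div]
      exact div_le_one_of_le₀ h (rpow_nonneg hZ.le _))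
  rw [ae_withDensity_iff' (hw.1.aemeasurable.div_const _).ennreal_ofReal] at hc
  refine ⟨c, hc.mono fun x hx hne => hx ?_⟩
  simpa using div_pos ((hw0 x).lt_of_ne' hne) hZ

end JensenRpow

section Sobolev

variable {N : ℕ} {u h w : Euc N → ℝ}

/-- The Sobolev exponent `1* = N / (N - 1)`. -/
def sobolevExponent (N : ℕ) : ℝ := N / (N - 1)

/-- The constant `N |B₁|^{1/N}` of the isoperimetric inequality. -/
def isoperimetricConst (N : ℕ) : ℝ := N * unitBallVolume N ^ (1 / (N : ℝ))

lemma holderConjugate_sobolevExponent (hN : 2 ≤ N) :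
    (N : ℝ).HolderConjugate (sobolevExponent N) :=
  Real.HolderConjugate.conjExponent (by exact_mod_cast hN)

lemma one_lt_sobolevExponent (hN : 2 ≤ N) : 1 < sobolevExponent N :=
  (holderConjugate_sobolevExponent hN).symm.lt

lemma isoperimetricConst_pos [NeZero N] : 0 < isoperimetricConst N :=
  mul_pos (by exact_mod_cast NeZero.pos N) (rpow_pos_of_pos (unitBallVolume_pos N) _)

lemma integral_mul_geom_mean_le_tv [NeZero N] (hu : MemBV N u) (hu0 : 0 ≤ᵐ[volume] u)
    (hh : Integrable h) (hh0 : 0 ≤ᵐ[volume] h) (hh1 : ∫ x, h x = 1) :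
    Integrable (fun x => u x * (N * (unitBallVolume N * h x) ^ (1 / (N : ℝ)))) ∧
      ∫ x, u x * (N * (unitBallVolume N * h x) ^ (1 / (N : ℝ))) ≤ tv N u := by
  obtain ⟨m, hm, -⟩ := ProductMixture.exists_seq_tendsto_density hh hh0 hh1
  have hcont : Continuous fun t : ℝ => N * (unitBallVolume N * t) ^ (1 / (N : ℝ)) :=
    continuous_const.mul ((by fun_prop : Continuous fun t => unitBallVolume N * t).rpow_const
      fun _ => Or.inr (by positivity))
  refine integrable_and_integral_le_of_ae_tendsto
    (hu.1.1.mul (hcont.comp_aestronglyMeasurable hh.1))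
    (fun n => ((m n).integral_mul_geom_mean_density_le_tv hu hu0).1) (fun n => ?_) ?_
    (fun n => ((m n).integral_mul_geom_mean_density_le_tv hu hu0).2) tendsto_const_nhds
  · filter_upwards [hu0] with x hx using mul_nonneg hx ((m n).geom_mean_density_nonneg x)
  · filter_upwards [hm] with x hx using ((hcont.tendsto _).comp hx).const_mul (u x)

lemma mul_geom_mean_rpow_div (hN : 2 ≤ N) {t Z : ℝ} (ht : 0 ≤ t) (hZ : 0 ≤ Z) :
    t * (N * (unitBallVolume N * (t ^ sobolevExponent N / Z)) ^ (1 / (N : ℝ))) =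
      isoperimetricConst N * Z ^ (-(1 / (N : ℝ))) * t ^ sobolevExponent N := by
  have hp := holderConjugate_sobolevExponent hN
  have htp : 0 ≤ t ^ sobolevExponent N := rpow_nonneg ht _
  have hexp : 1 + sobolevExponent N * (1 / (N : ℝ)) = sobolevExponent N := by
    have := hp.symm.sub_one_mul_conj
    field_simp [hp.ne_zero]
    linarith
  rw [Real.mul_rpow (unitBallVolume_pos N).le (div_nonneg htp hZ), Real.div_rpow htp hZ,
    ← Real.rpow_mul ht, Real.rpow_neg hZ, isoperimetricConst]
  have hpow : t ^ sobolevExponent N = t * t ^ (sobolevExponent N * (1 / (N : ℝ))) := by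
    rw [← Real.rpow_one_add' ht (by rw [hexp]; exact hp.symm.ne_zero), hexp]
  rw [hpow]
  ring

lemma isoperimetricConst_mul_le_tv_of_le (hN : 2 ≤ N) (hu : MemBV N u) (hw0 : ∀ x, 0 ≤ w x)
    (hwu : w ≤ᵐ[volume] u) (hw : Integrable fun x => w x ^ sobolevExponent N) :
    isoperimetricConst N * (∫ x, w x ^ sobolevExponent N) ^ (sobolevExponent N)⁻¹ ≤ tv N u := by
  have : NeZero N := ⟨by omega⟩
  have hp := holderConjugate_sobolevExponent hN
  have hu0 : 0 ≤ᵐ[volume] u := hwu.mono fun x hx => (hw0 x).trans hx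
  have hwp : ∀ x, 0 ≤ w x ^ sobolevExponent N := fun x => rpow_nonneg (hw0 x) _
  rcases (integral_nonneg (μ := volume) (f := fun x => w x ^ sobolevExponent N) hwp).eq_or_lt
    with hZ | hZ
  · rw [← hZ, Real.zero_rpow (inv_ne_zero hp.symm.ne_zero), mul_zero]
    exact hu.tv_nonneg
  set Z := ∫ x, w x ^ sobolevExponent N
  obtain ⟨hint, hle⟩ := integral_mul_geom_mean_le_tv hu hu0 (hw.div_const Z)
    (ae_of_all _ fun x => div_nonneg (hwp x) hZ.le) (by rw [integral_div, div_self hZ.ne'])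
  have hexp : Z ^ (sobolevExponent N)⁻¹ = Z ^ (-(1 / (N : ℝ))) * Z := by
    rw [← Real.rpow_add_one hZ.ne', ← hp.one_sub_inv, one_div, sub_eq_neg_add]
  calc isoperimetricConst N * Z ^ (sobolevExponent N)⁻¹
      = ∫ x, isoperimetricConst N * Z ^ (-(1 / (N : ℝ))) * w x ^ sobolevExponent N := by
        rw [integral_const_mul, hexp, mul_assoc]
    _ ≤ ∫ x, u x * (N * (unitBallVolume N * (w x ^ sobolevExponent N / Z)) ^ (1 / (N : ℝ))) := by
        refine integral_mono_ae (hw.const_mul _) hint (hwu.mono fun x hx => ?_)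
        beta_reduce
        rw [← mul_geom_mean_rpow_div hN (hw0 x) hZ.le]
        gcongr
        exact mul_nonneg (Nat.cast_nonneg N)
          (rpow_nonneg (mul_nonneg (unitBallVolume_pos N).le (div_nonneg (hwp x) hZ.le)) _)
    _ ≤ tv N u := hle

lemma integrable_min_rpow (hu : Integrable u) (hu0 : ∀ x, 0 ≤ u x) {M p : ℝ} (hM : 0 ≤ M)
    (hp : 1 ≤ p) : Integrable fun x => (min (u x) M) ^ p := by
  have hcont : Continuous fun t : ℝ => (min t M) ^ p :=
    (continuous_id.min continuous_const).rpow_const fun _ => Or.inr (zero_le_one.trans hp)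
  refine (hu.const_mul (M ^ (p - 1))).mono' (hcont.comp_aestronglyMeasurable hu.1)
    (ae_of_all _ fun x => ?_)
  have hmin : 0 ≤ min (u x) M := le_min (hu0 x) hM
  calc ‖(min (u x) M) ^ p‖ = (min (u x) M) ^ (p - 1) * min (u x) M := by
        rw [Real.norm_of_nonneg (rpow_nonneg hmin p),
          ← Real.rpow_add_one' hmin (by linarith), sub_add_cancel]
    _ ≤ M ^ (p - 1) * u x := by
        gcongr
        exacts [min_le_right _ _, min_le_left _ _]

lemma integrable_rpow_of_memBV_of_nonneg (hN : 2 ≤ N) (hu : MemBV N u) (hu0 : ∀ x, 0 ≤ u x) :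
    Integrable fun x => u x ^ sobolevExponent N := by
  have : NeZero N := ⟨by omega⟩
  have hp := one_lt_sobolevExponent hN
  have hp0 := one_pos.trans hp
  have hmin : ∀ (n : ℕ) x, 0 ≤ min (u x) n := fun n x => le_min (hu0 x) n.cast_nonneg
  have hint : ∀ n : ℕ, Integrable fun x => (min (u x) n) ^ sobolevExponent N := fun n =>
    integrable_min_rpow hu.1 hu0 n.cast_nonneg hp.le
  refine (integrable_and_integral_le_of_ae_tendsto
    ((Real.continuous_rpow_const hp0.le).comp_aestronglyMeasurable hu.1.1) hint
    (fun n => ae_of_all _ fun x => rpow_nonneg (hmin n x) _) (ae_of_all _ fun x => ?_)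
    (B := fun _ => (tv N u / isoperimetricConst N) ^ sobolevExponent N) (fun n => ?_)
    tendsto_const_nhds).1
  · obtain ⟨k, hk⟩ := exists_nat_ge (u x)
    refine tendsto_const_nhds.congr' ?_
    filter_upwards [eventually_ge_atTop k] with n hn
    rw [min_eq_left (hk.trans (by exact_mod_cast hn))]
  · rw [← rpow_inv_le_iff_of_pos (integral_nonneg fun x => rpow_nonneg (hmin n x) _)
      (div_nonneg hu.tv_nonneg isoperimetricConst_pos.le) hp0, le_div_iff₀' isoperimetricConst_pos]
    exact isoperimetricConst_mul_le_tv_of_le hN hu (hmin n)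
      (ae_of_all _ fun x => min_le_left _ _) (hint n)

lemma MemBV.integrable_abs_rpow_sobolevExponent (hN : 2 ≤ N) (hu : MemBV N u) :
    Integrable fun x => |u x| ^ sobolevExponent N :=
  integrable_rpow_of_memBV_of_nonneg hN hu.abs.1 fun _ => abs_nonneg _

lemma MemBV.isoperimetricConst_mul_le_tv (hN : 2 ≤ N) (hu : MemBV N u) :
    isoperimetricConst N * (∫ x, |u x| ^ sobolevExponent N) ^ (sobolevExponent N)⁻¹ ≤ tv N u :=
  (isoperimetricConst_mul_le_tv_of_le hN hu.abs.1 (fun _ => abs_nonneg _)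
    (EventuallyLE.refl _ _) (hu.integrable_abs_rpow_sobolevExponent hN)).trans hu.abs.2

end Sobolev

/-! ### Functions attaining equality in the Sobolev inequality -/

section CenteredSoftplus

/-- The softplus function shifted so as to vanish at the origin; it and its complement
`s - centeredSoftplus s` split a function into two parts whose total variations add up. -/
def centeredSoftplus (s : ℝ) : ℝ := softplus s - log 2

lemma centeredSoftplus_zero : centeredSoftplus 0 = 0 := by
  norm_num [centeredSoftplus, softplus]

lemma contDiff_centeredSoftplus {n : WithTop ℕ∞} : ContDiff ℝ n centeredSoftplus :=
  contDiff_softplus.sub contDiff_const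

lemma hasDerivAt_centeredSoftplus (s : ℝ) : HasDerivAt centeredSoftplus (sigmoid s) s :=
  (hasDerivAt_softplus s).sub_const _

lemma deriv_centeredSoftplus : deriv centeredSoftplus = sigmoid :=
  funext fun s => (hasDerivAt_centeredSoftplus s).deriv

lemma abs_deriv_centeredSoftplus_add (s : ℝ) :
    |deriv centeredSoftplus s| + |deriv (fun t => t - centeredSoftplus t) s| ≤ 1 := by
  have hcompl : HasDerivAt (fun t => t - centeredSoftplus t) (1 - sigmoid s) s :=
    (hasDerivAt_id s).sub (hasDerivAt_centeredSoftplus s)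
  rw [hcompl.deriv, deriv_centeredSoftplus,
    abs_of_nonneg (sigmoid_nonneg s), abs_of_nonneg (sub_nonneg.2 (sigmoid_le_one s)),
    add_sub_cancel]

lemma injOn_centeredSoftplus_div : Set.InjOn (fun s => centeredSoftplus s / s) {0}ᶜ := by
  have hconv : StrictConvexOn ℝ Set.univ centeredSoftplus :=
    StrictMono.strictConvexOn_univ_of_deriv (contDiff_centeredSoftplus (n := 0)).continuous
      (deriv_centeredSoftplus ▸ sigmoid_strictMono)
  have hmono : StrictMonoOn (fun s => centeredSoftplus s / s) {0}ᶜ := fun s hs t ht hst => by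
    simpa [centeredSoftplus_zero] using hconv.secant_strict_mono (a := 0) trivial trivial trivial
      hs ht hst
  exact hmono.injOn

lemma centeredSoftplus_div_nonneg (s : ℝ) : 0 ≤ centeredSoftplus s / s := by
  have hmono : Monotone centeredSoftplus := monotone_of_deriv_nonneg
    (fun t => (hasDerivAt_centeredSoftplus t).differentiableAt)
    fun t => deriv_centeredSoftplus ▸ sigmoid_nonneg t
  rcases le_total 0 s with hs | hs
  · exact div_nonneg (centeredSoftplus_zero ▸ hmono hs) hs
  · exact div_nonneg_of_nonpos (centeredSoftplus_zero ▸ hmono hs) hs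

lemma centeredSoftplus_div_mem_Icc (s : ℝ) : centeredSoftplus s / s ∈ Set.Icc 0 1 := by
  refine ⟨centeredSoftplus_div_nonneg s, ?_⟩
  have hneg := centeredSoftplus_div_nonneg (-s)
  rcases eq_or_ne s 0 with rfl | hs
  · simp
  have hsum : centeredSoftplus s / s = 1 - centeredSoftplus (-s) / -s := by
    rw [centeredSoftplus, centeredSoftplus, softplus_eq_add_softplus_neg s]
    field_simp
    ring
  linarith

lemma centeredSoftplus_eq_div_mul (s : ℝ) : centeredSoftplus s = centeredSoftplus s / s * s := by
  rcases eq_or_ne s 0 with rfl | hs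
  · rw [mul_zero, centeredSoftplus_zero]
  · rw [div_mul_cancel₀ _ hs]

end CenteredSoftplus

section SobolevEquality

variable {N : ℕ} {u : Euc N → ℝ}

lemma rpow_inv_add_rpow_inv_le_of_eq (hN : 2 ≤ N) (hu : MemBV N u)
    (heq : tv N u = isoperimetricConst N *
      (∫ x, |u x| ^ sobolevExponent N) ^ (sobolevExponent N)⁻¹) :
    (∫ x, |centeredSoftplus (u x)| ^ sobolevExponent N) ^ (sobolevExponent N)⁻¹ +
        (∫ x, |u x - centeredSoftplus (u x)| ^ sobolevExponent N) ^ (sobolevExponent N)⁻¹ ≤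
      (∫ x, |u x| ^ sobolevExponent N) ^ (sobolevExponent N)⁻¹ := by
  have : NeZero N := ⟨by omega⟩
  obtain ⟨hG, hH, hle⟩ := hu.tv_comp_add_tv_comp_le contDiff_centeredSoftplus
    (H := fun t => t - centeredSoftplus t)
    (contDiff_id.sub contDiff_centeredSoftplus) abs_deriv_centeredSoftplus_add
    centeredSoftplus_zero (by rw [centeredSoftplus_zero, sub_zero])
  refine le_of_mul_le_mul_left ?_ (isoperimetricConst_pos (N := N))
  rw [mul_add, ← heq]
  exact (add_le_add (hG.isoperimetricConst_mul_le_tv hN)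
    (hH.isoperimetricConst_mul_le_tv hN)).trans hle

lemma exists_ae_eq_const_of_tv_eq (hN : 2 ≤ N) (hu : MemBV N u)
    (heq : tv N u = isoperimetricConst N *
      (∫ x, |u x| ^ sobolevExponent N) ^ (sobolevExponent N)⁻¹) :
    ∃ c, ∀ᵐ x, u x ≠ 0 → u x = c := by
  have hsum := rpow_inv_add_rpow_inv_le_of_eq hN hu heq
  have hG : ∀ x, |centeredSoftplus (u x)| ^ sobolevExponent N =
      (centeredSoftplus (u x) / u x) ^ sobolevExponent N * |u x| ^ sobolevExponent N := fun x => by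
    have hr := (centeredSoftplus_div_mem_Icc (u x)).1
    nth_rewrite 1 [centeredSoftplus_eq_div_mul (u x)]
    rw [abs_mul, abs_of_nonneg hr, Real.mul_rpow hr (abs_nonneg _)]
  have hH : ∀ x, |u x - centeredSoftplus (u x)| ^ sobolevExponent N =
      (1 - centeredSoftplus (u x) / u x) ^ sobolevExponent N * |u x| ^ sobolevExponent N :=
    fun x => by
      have hr := sub_nonneg.2 (centeredSoftplus_div_mem_Icc (u x)).2
      have hmul : u x - centeredSoftplus (u x) = (1 - centeredSoftplus (u x) / u x) * u x := by
        rw [sub_mul, one_mul, ← centeredSoftplus_eq_div_mul]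
      rw [hmul, abs_mul, abs_of_nonneg hr, Real.mul_rpow hr (abs_nonneg _)]
  simp_rw [hG, hH] at hsum
  have hmeas : AEStronglyMeasurable (fun x => centeredSoftplus (u x) / u x) volume :=
    ((contDiff_centeredSoftplus (n := 0)).continuous.comp_aestronglyMeasurable hu.1.1).div₀
      hu.1.1
  obtain ⟨r, hr⟩ := exists_ae_eq_const_of_rpow_inv_add_le
    (hu.integrable_abs_rpow_sobolevExponent hN) (fun x => by positivity) hmeas
    (fun x => centeredSoftplus_div_mem_Icc (u x)) (one_lt_sobolevExponent hN) hsum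
  replace hr : ∀ᵐ x, u x ≠ 0 → centeredSoftplus (u x) / u x = r := hr.mono fun x hx hne =>
    hx (rpow_pos_of_pos (abs_pos.2 hne) _).ne'
  by_cases hex : ∃ s ≠ 0, centeredSoftplus s / s = r
  · obtain ⟨s, hs0, hs⟩ := hex
    exact ⟨s, hr.mono fun x hx hne =>
      injOn_centeredSoftplus_div hne hs0 ((hx hne).trans hs.symm)⟩
  · exact ⟨0, hr.mono fun x hx hne => absurd ⟨u x, hne, hx hne⟩ hex⟩

end SobolevEquality

/-! ### Rigidity of isoperimetric sets -/

section Splitting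

variable {N : ℕ} {u g B : Euc N → ℝ} {ψ φ : Euc N → Euc N}

lemma integrable_mul_fderiv_apply_and_abs_integral_le (hu : AEStronglyMeasurable u volume)
    (hu0 : ∀ x, 0 ≤ u x) (hg : ContDiff ℝ 1 g) (hB : ∀ x, ‖fderiv ℝ g x‖ ≤ B x)
    (hint : Integrable fun x => u x * B x) (hψ : IsTestField ψ) :
    Integrable (fun x => u x * fderiv ℝ g x (ψ x)) ∧
      |∫ x, u x * fderiv ℝ g x (ψ x)| ≤ ∫ x, u x * B x := by
  have hbound : ∀ x, ‖u x * fderiv ℝ g x (ψ x)‖ ≤ u x * B x := fun x => by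
    rw [norm_mul, Real.norm_of_nonneg (hu0 x)]
    refine mul_le_mul_of_nonneg_left (((fderiv ℝ g x).le_opNorm (ψ x)).trans ?_) (hu0 x)
    exact (mul_le_of_le_one_right (norm_nonneg _) (hψ.norm_le_one x)).trans (hB x)
  exact ⟨hint.mono' (hu.mul ((hg.continuous_fderiv one_ne_zero).clm_apply
    hψ.contDiff.continuous).aestronglyMeasurable) (ae_of_all _ hbound),
    norm_integral_le_of_norm_le hint (ae_of_all _ hbound)⟩

lemma divergence_smul_add_one_sub_smul (hg : ContDiff ℝ 1 g) (hψ : ContDiff ℝ 1 ψ)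
    (hφ : ContDiff ℝ 1 φ) (x : Euc N) :
    divergence (fun y => g y • ψ y + (1 - g y) • φ y) x =
      g x * divergence ψ x + (1 - g x) * divergence φ x +
        (fderiv ℝ g x (ψ x) - fderiv ℝ g x (φ x)) := by
  have hg' := hg.differentiable one_ne_zero x
  have hψ' := hψ.differentiable one_ne_zero x
  have hφ' := hφ.differentiable one_ne_zero x
  rw [divergence_add (hg'.fun_smul hψ') ((hg'.const_sub 1).fun_smul hφ'),
    divergence_smul hψ' hg', divergence_smul hφ' (hg'.const_sub 1), fderiv_const_sub,
    neg_apply]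
  ring

lemma MemBV.tv_mul_add_tv_mul_one_sub_le (hu : MemBV N u) (hu0 : ∀ x, 0 ≤ u x)
    (hg : ContDiff ℝ 1 g) (hg01 : ∀ x, g x ∈ Set.Icc 0 1) (hB : ∀ x, ‖fderiv ℝ g x‖ ≤ B x)
    (hint : Integrable fun x => u x * B x) :
    MemBV N (fun x => u x * g x) ∧ MemBV N (fun x => u x * (1 - g x)) ∧
      tv N (fun x => u x * g x) + tv N (fun x => u x * (1 - g x)) ≤
        tv N u + 2 * ∫ x, u x * B x := by
  have hug : Integrable fun x => u x * g x :=
    hu.1.mul_bdd (c := 1) hg.continuous.aestronglyMeasurable (ae_of_all _ fun x => by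
      rw [Real.norm_of_nonneg (hg01 x).1]
      exact (hg01 x).2)
  have hug' : Integrable fun x => u x * (1 - g x) := by
    simp_rw [mul_one_sub]
    exact hu.1.sub hug
  refine memBV_and_tv_add_tv_le hug hug' fun ψ φ hψ hφ => ?_
  obtain ⟨hψi, hψle⟩ := integrable_mul_fderiv_apply_and_abs_integral_le hu.1.1 hu0 hg hB hint hψ
  obtain ⟨hφi, hφle⟩ := integrable_mul_fderiv_apply_and_abs_integral_le hu.1.1 hu0 hg hB hint hφ
  have hψu := integrable_mul_divergence hψ.contDiff hψ.hasCompactSupport hug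
  have hφu := integrable_mul_divergence hφ.contDiff hφ.hasCompactSupport hug'
  have htest := hu.integral_mul_divergence_le_tv (hψ.smul_add_smul hφ hg (contDiff_const.sub hg)
    fun x => by
      rw [abs_of_nonneg (hg01 x).1, abs_of_nonneg (sub_nonneg.2 (hg01 x).2), add_sub_cancel])
  have hexpand : ∀ x, u x * divergence (fun y => g y • ψ y + (1 - g y) • φ y) x =
      (u x * g x * divergence ψ x + u x * (1 - g x) * divergence φ x) +
        (u x * fderiv ℝ g x (ψ x) - u x * fderiv ℝ g x (φ x)) := fun x => by
    rw [divergence_smul_add_one_sub_smul hg hψ.contDiff hφ.contDiff]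
    ring
  simp_rw [hexpand] at htest
  rw [integral_add (by exact hψu.add hφu) (by exact hψi.sub hφi), integral_add hψu hφu,
    integral_sub hψi hφi] at htest
  linarith [(abs_le.1 hψle).1, (abs_le.1 hφle).2]

end Splitting

section Deficit

/-- The geometric mean of the stretches of the Knothe map of a mixture. -/
def ProductMixture.meanStretch {N : ℕ} (m : ProductMixture N) (x : Euc N) : ℝ :=
  (unitBallVolume N * m.density x) ^ (1 / (N : ℝ))

lemma abs_sub_le_mul_sqrt_sub_sq_add {a b ε : ℝ} (ha : 0 ≤ a) (hb : 0 ≤ b) (hε : 0 < ε) :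
    |a - b| ≤ (1 + ε⁻¹) * (√a - √b) ^ 2 + ε * b := by
  have hfactor : |a - b| ≤ |√a - √b| ^ 2 + 2 * (√b * |√a - √b|) := by
    have hab : a - b = (√a - √b) ^ 2 + 2 * (√b * (√a - √b)) := by
      linear_combination -(Real.sq_sqrt ha) + Real.sq_sqrt hb
    calc |a - b| ≤ |(√a - √b) ^ 2| + |2 * (√b * (√a - √b))| := hab ▸ abs_add_le _ _
      _ = _ := by rw [abs_mul, abs_mul, abs_pow, abs_two, abs_of_nonneg (Real.sqrt_nonneg b)]
  have hamgm : 2 * (√b * |√a - √b|) ≤ ε⁻¹ * |√a - √b| ^ 2 + ε * b := by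
    have hsq : ε⁻¹ * (|√a - √b| - ε * √b) ^ 2 =
        ε⁻¹ * |√a - √b| ^ 2 + ε * b - 2 * (√b * |√a - √b|) := by
      rw [sub_sq, mul_pow, Real.sq_sqrt hb]
      field_simp
      ring
    linarith [mul_nonneg (inv_nonneg.2 hε.le) (sq_nonneg (|√a - √b| - ε * √b))]
  rw [sq_abs] at hfactor hamgm
  linarith

lemma tendsto_zero_of_le_one_add_inv_mul_add {a δ : ℕ → ℝ} {K : ℝ} (ha : ∀ n, 0 ≤ a n)
    (hδ : Tendsto δ atTop (𝓝 0)) (h : ∀ n, ∀ ε > 0, a n ≤ (1 + ε⁻¹) * δ n + ε * K) :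
    Tendsto a atTop (𝓝 0) := by
  refine tendsto_order.2 ⟨fun b hb => Eventually.of_forall fun n => hb.trans_le (ha n),
    fun η hη => ?_⟩
  have hsmall : ∀ᶠ ε in 𝓝[>] (0 : ℝ), ε * K < η :=
    tendsto_nhdsWithin_of_tendsto_nhds (Continuous.tendsto' (by fun_prop) 0 0 (zero_mul K))
      |>.eventually (gt_mem_nhds hη)
  obtain ⟨ε, hεη, hε⟩ := (hsmall.and self_mem_nhdsWithin).exists
  have hlim : Tendsto (fun n => (1 + ε⁻¹) * δ n + ε * K) atTop (𝓝 (ε * K)) := by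
    simpa using (hδ.const_mul (1 + ε⁻¹)).add_const (ε * K)
  filter_upwards [hlim.eventually (gt_mem_nhds hεη)] with n hn using (h n ε hε).trans_lt hn

namespace ProductMixture

variable {N : ℕ} (m : ProductMixture N) {u : Euc N → ℝ} {j : Fin N}

lemma continuous_stretch_of_val_eq_zero (hj : j.val = 0) : Continuous (m.stretch j) := by
  have hderiv : m.stretch j = fun x => fderiv ℝ (fun y => m.knothe y j) x
      (EuclideanSpace.single j 1) := funext fun x => by
    rw [m.fderiv_knothe_apply_of_val_eq_zero hj, PiLp.single_apply, if_pos rfl, mul_one]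
  rw [hderiv]
  exact ((contDiff_euclidean.1 m.contDiff_knothe j).continuous_fderiv one_ne_zero).clm_apply
    continuous_const

lemma meanStretch_nonneg (x : Euc N) : 0 ≤ m.meanStretch x :=
  rpow_nonneg (mul_nonneg (unitBallVolume_pos N).le (m.density_nonneg x)) _

lemma integrable_mul_stretch (hu : MemBV N u) (hu0 : ∀ x, 0 ≤ u x) (hj : j.val = 0) :
    Integrable fun x => u x * m.stretch j x := by
  refine (m.integral_mul_sum_stretch_le_tv hu (ae_of_all _ hu0)).1.mono'
    (hu.1.1.mul (m.continuous_stretch_of_val_eq_zero hj).aestronglyMeasurable)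
    (ae_of_all _ fun x => ?_)
  rw [Real.norm_of_nonneg (mul_nonneg (hu0 x) (m.stretch_pos j x).le)]
  exact mul_le_mul_of_nonneg_left (Finset.single_le_sum (f := fun l => m.stretch l x)
    (fun l _ => (m.stretch_pos l x).le) (Finset.mem_univ j)) (hu0 x)

lemma integrable_mul_meanStretch_and_integral_le_tv [NeZero N] (hu : MemBV N u)
    (hu0 : ∀ x, 0 ≤ u x) :
    Integrable (fun x => u x * m.meanStretch x) ∧ N * ∫ x, u x * m.meanStretch x ≤ tv N u := by
  obtain ⟨hint, hle⟩ := m.integral_mul_geom_mean_density_le_tv hu (ae_of_all _ hu0)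
  have hN : (N : ℝ) ≠ 0 := NeZero.ne _
  simp_rw [mul_left_comm (u _) (N : ℝ)] at hint hle
  rw [integral_const_mul] at hle
  exact ⟨(integrable_const_mul_iff (isUnit_iff_ne_zero.2 hN) _).1 hint, hle⟩

lemma abs_stretch_sub_meanStretch_le {ε : ℝ} (hε : 0 < ε) (j : Fin N) (x : Euc N) :
    |m.stretch j x - m.meanStretch x| ≤
      (1 + ε⁻¹) * (∑ l, m.stretch l x - N * m.meanStretch x) + ε * m.meanStretch x := by
  have hdeficit := sqrt_sub_sqrt_geom_mean_sq_le (fun l => (m.stretch_pos l x).le) j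
  rw [m.prod_stretch, Fintype.card_fin] at hdeficit
  refine (abs_sub_le_mul_sqrt_sub_sq_add (m.stretch_pos j x).le (m.meanStretch_nonneg x)
    hε).trans ?_
  gcongr
  exact hdeficit

lemma integral_mul_abs_stretch_sub_meanStretch_le [NeZero N] (hu : MemBV N u)
    (hu0 : ∀ x, 0 ≤ u x) (hj : j.val = 0) {ε : ℝ} (hε : 0 < ε) :
    ∫ x, |u x * m.stretch j x - u x * m.meanStretch x| ≤
      (1 + ε⁻¹) * (tv N u - N * ∫ x, u x * m.meanStretch x) +
        ε * ∫ x, u x * m.meanStretch x := by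
  obtain ⟨hsum, hsum_le⟩ := m.integral_mul_sum_stretch_le_tv hu (ae_of_all _ hu0)
  obtain ⟨hmean, -⟩ := m.integrable_mul_meanStretch_and_integral_le_tv hu hu0
  have hdeficit : Integrable fun x =>
      u x * ∑ l, m.stretch l x - N * (u x * m.meanStretch x) := hsum.sub (hmean.const_mul _)
  calc ∫ x, |u x * m.stretch j x - u x * m.meanStretch x|
      ≤ ∫ x, ((1 + ε⁻¹) * (u x * ∑ l, m.stretch l x - N * (u x * m.meanStretch x)) +
          ε * (u x * m.meanStretch x)) := by
        refine integral_mono ((m.integrable_mul_stretch hu hu0 hj).sub hmean).abs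
          ((hdeficit.const_mul _).add (hmean.const_mul _)) fun x => ?_
        beta_reduce
        rw [← mul_sub, abs_mul, abs_of_nonneg (hu0 x)]
        refine (mul_le_mul_of_nonneg_left (m.abs_stretch_sub_meanStretch_le hε j x)
          (hu0 x)).trans_eq ?_
        ring
    _ = (1 + ε⁻¹) * ((∫ x, u x * ∑ l, m.stretch l x) - N * ∫ x, u x * m.meanStretch x) +
          ε * ∫ x, u x * m.meanStretch x := by
        rw [integral_add (hdeficit.const_mul _) (hmean.const_mul _), integral_const_mul,
          integral_const_mul, integral_sub hsum (hmean.const_mul _), integral_const_mul]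
    _ ≤ _ := by gcongr

end ProductMixture

end Deficit

section Isoperimetric

variable {N : ℕ} {E : Set (Euc N)}

/-- A set attaining equality in the isoperimetric inequality; only the inequality that does not
hold for every set is recorded. -/
structure IsIsoperimetric (E : Set (Euc N)) : Prop where
  measurableSet : MeasurableSet E
  volume_ne_top : volume E ≠ ⊤
  volume_ne_zero : volume E ≠ 0
  memBV : MemBV N (E.indicator 1)
  tv_le : tv N (E.indicator 1) ≤
    isoperimetricConst N * volume.real E ^ (sobolevExponent N)⁻¹

/-- The radius of the balls having the volume of `E`. -/
def volumeRadius (E : Set (Euc N)) : ℝ := (volume.real E / unitBallVolume N) ^ (1 / (N : ℝ))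

lemma indicator_one_nonneg (E : Set (Euc N)) (x : Euc N) : 0 ≤ E.indicator (1 : Euc N → ℝ) x :=
  Set.indicator_nonneg (fun _ _ => zero_le_one) x

lemma tendsto_integral_abs_indicator_mul_rpow {α : Type*} [MeasurableSpace α] {μ : Measure α}
    {s : Set α} (hs : MeasurableSet s) (hμ : μ s ≠ ⊤) {p : ℝ} (hp : 0 < p) {φ : ℕ → α → ℝ}
    {Φ : α → ℝ} (hφ : ∀ n, AEStronglyMeasurable (φ n) μ) (h01 : ∀ n x, φ n x ∈ Set.Icc 0 1)
    (hlim : ∀ x, Tendsto (fun n => φ n x) atTop (𝓝 (Φ x))) :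
    Tendsto (fun n => ∫ x, |s.indicator 1 x * φ n x| ^ p ∂μ) atTop
      (𝓝 (∫ x, Φ x ^ p * s.indicator 1 x ∂μ)) := by
  have hpow : ∀ (f : α → ℝ) x, 0 ≤ f x →
      |s.indicator 1 x * f x| ^ p = f x ^ p * s.indicator 1 x := fun f x hf => by
    by_cases hx : x ∈ s
    · simp [hx, abs_of_nonneg hf]
    · simp [hx, hp.ne']
  simp_rw [hpow _ _ (h01 _ _).1]
  have hint : Integrable (s.indicator (1 : α → ℝ)) μ :=
    (integrable_indicator_iff hs).2 (integrableOn_const hμ)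
  refine tendsto_integral_of_dominated_convergence (s.indicator 1) (fun n => ?_) hint
    (fun n => ae_of_all _ fun x => ?_) (ae_of_all _ fun x => ?_)
  · exact ((Real.continuous_rpow_const hp.le).comp_aestronglyMeasurable (hφ n)).mul hint.1
  · have hs0 : 0 ≤ s.indicator (1 : α → ℝ) x := Set.indicator_nonneg (fun _ _ => zero_le_one) x
    rw [Real.norm_of_nonneg (mul_nonneg (rpow_nonneg (h01 n x).1 p) hs0)]
    exact mul_le_of_le_one_left hs0 (rpow_le_one (h01 n x).1 (h01 n x).2 hp.le)
  · exact ((hlim x).rpow_const (Or.inr hp.le)).mul_const _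

namespace IsIsoperimetric

lemma volume_real_pos (h : IsIsoperimetric E) : 0 < volume.real E :=
  ENNReal.toReal_pos h.volume_ne_zero h.volume_ne_top

lemma volumeRadius_pos (h : IsIsoperimetric E) : 0 < volumeRadius E :=
  rpow_pos_of_pos (div_pos h.volume_real_pos (unitBallVolume_pos N)) _

lemma tv_le_mul_inv_volumeRadius_mul (hN : 2 ≤ N) (h : IsIsoperimetric E) :
    tv N (E.indicator 1) ≤ N * ((volumeRadius E)⁻¹ * volume.real E) := by
  refine h.tv_le.trans_eq ?_
  have hV := h.volume_real_pos
  rw [isoperimetricConst, volumeRadius, ← (holderConjugate_sobolevExponent hN).one_sub_inv,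
    Real.div_rpow hV.le (unitBallVolume_pos N).le, Real.rpow_sub hV, Real.rpow_one, one_div]
  field

lemma indicator_mul_meanStretch_tendsto [NeZero N] (h : IsIsoperimetric E)
    {m : ℕ → ProductMixture N} {x : Euc N}
    (hm : Tendsto (fun n => (m n).density x) atTop (𝓝 (E.indicator 1 x / volume.real E))) :
    Tendsto (fun n => E.indicator 1 x * (m n).meanStretch x) atTop
      (𝓝 (E.indicator 1 x * (volumeRadius E)⁻¹)) := by
  by_cases hx : x ∈ E
  · have hcont : Continuous fun t : ℝ => (unitBallVolume N * t) ^ (1 / (N : ℝ)) :=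
      (by fun_prop : Continuous fun t => unitBallVolume N * t).rpow_const
        fun _ => Or.inr (by positivity)
    have hlim := (hcont.tendsto _).comp hm
    simp only [Set.indicator_of_mem hx, Pi.one_apply, mul_one_div, one_mul] at hlim ⊢
    rwa [← inv_div (volume.real E), Real.inv_rpow
      (div_nonneg h.volume_real_pos.le (unitBallVolume_pos N).le)] at hlim
  · simp [hx]

lemma tendsto_integral_norm_meanStretch_sub (hN : 2 ≤ N) (h : IsIsoperimetric E)
    {m : ℕ → ProductMixture N} (hm : ∀ᵐ x, Tendsto (fun n => (m n).density x) atTop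
      (𝓝 (E.indicator 1 x / volume.real E))) :
    Tendsto (fun n => ∫ x, ‖E.indicator 1 x * (m n).meanStretch x -
      E.indicator 1 x * (volumeRadius E)⁻¹‖) atTop (𝓝 0) := by
  have : NeZero N := ⟨by omega⟩
  have hmean := fun n =>
    (m n).integrable_mul_meanStretch_and_integral_le_tv h.memBV (indicator_one_nonneg E)
  refine tendsto_integral_norm_sub_of_ae_tendsto (fun n => (hmean n).1) (h.memBV.1.mul_const _)
    (hm.mono fun x hx => h.indicator_mul_meanStretch_tendsto hx) fun n => ?_
  simp_rw [Real.norm_of_nonneg (mul_nonneg (indicator_one_nonneg E _)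
    ((m n).meanStretch_nonneg _)), Real.norm_of_nonneg (mul_nonneg (indicator_one_nonneg E _)
    (inv_nonneg.2 h.volumeRadius_pos.le))]
  rw [integral_mul_const, integral_indicator_one h.measurableSet, mul_comm (volume.real E)]
  exact le_of_mul_le_mul_left ((hmean n).2.trans (h.tv_le_mul_inv_volumeRadius_mul hN))
    (by exact_mod_cast NeZero.pos N)

lemma tendsto_integral_norm_stretch_sub_meanStretch (hN : 2 ≤ N) (h : IsIsoperimetric E)
    {m : ℕ → ProductMixture N} (hm : ∀ᵐ x, Tendsto (fun n => (m n).density x) atTop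
      (𝓝 (E.indicator 1 x / volume.real E))) {j : Fin N} (hj : j.val = 0) :
    Tendsto (fun n => ∫ x, ‖E.indicator 1 x * (m n).stretch j x -
      E.indicator 1 x * (m n).meanStretch x‖) atTop (𝓝 0) := by
  have : NeZero N := ⟨by omega⟩
  set K := (volumeRadius E)⁻¹ * volume.real E with hK
  have hmean := fun n =>
    (m n).integrable_mul_meanStretch_and_integral_le_tv h.memBV (indicator_one_nonneg E)
  have hle : ∀ n, ∫ x, E.indicator 1 x * (m n).meanStretch x ≤ K := fun n =>
    le_of_mul_le_mul_left ((hmean n).2.trans (h.tv_le_mul_inv_volumeRadius_mul hN))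
      (by exact_mod_cast NeZero.pos N)
  have hlim : Tendsto (fun n => ∫ x, E.indicator 1 x * (m n).meanStretch x) atTop (𝓝 K) := by
    have := tendsto_integral_mul_of_tendsto_integral_norm_sub (w := fun _ => 1) (C := 1)
      (fun n => (hmean n).1) (h.memBV.1.mul_const _) aestronglyMeasurable_const
      (ae_of_all _ fun _ => norm_one.le) (h.tendsto_integral_norm_meanStretch_sub hN hm)
    simp_rw [mul_one] at this
    rwa [integral_mul_const, integral_indicator_one h.measurableSet, mul_comm, ← hK] at this
  refine tendsto_zero_of_le_one_add_inv_mul_add (K := K)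
    (δ := fun n => N * K - N * ∫ x, E.indicator 1 x * (m n).meanStretch x)
    (fun n => integral_nonneg fun x => norm_nonneg _) (by
      simpa using (hlim.const_mul (N : ℝ)).const_sub (N * K)) fun n ε hε => ?_
  refine ((m n).integral_mul_abs_stretch_sub_meanStretch_le h.memBV (indicator_one_nonneg E) hj
    hε).trans ?_
  gcongr
  exacts [h.tv_le_mul_inv_volumeRadius_mul hN, hle n]

lemma tendsto_integral_mul_norm_stretch_sub (hN : 2 ≤ N) (h : IsIsoperimetric E)
    {m : ℕ → ProductMixture N} (hm : ∀ᵐ x, Tendsto (fun n => (m n).density x) atTop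
      (𝓝 (E.indicator 1 x / volume.real E))) {j : Fin N} (hj : j.val = 0) :
    Tendsto (fun n => ∫ x, E.indicator 1 x * ‖(m n).stretch j x - (volumeRadius E)⁻¹‖) atTop
      (𝓝 0) := by
  have : NeZero N := ⟨by omega⟩
  have hpull : ∀ n x, E.indicator 1 x * ‖(m n).stretch j x - (volumeRadius E)⁻¹‖ =
      ‖E.indicator 1 x * (m n).stretch j x - E.indicator 1 x * (volumeRadius E)⁻¹‖ :=
    fun n x => by
      rw [← mul_sub, norm_mul, Real.norm_of_nonneg (indicator_one_nonneg E x)]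
  simp_rw [hpull]
  refine squeeze_zero (fun n => integral_nonneg fun x => norm_nonneg _)
    (fun n => integral_norm_sub_le_add
      ((m n).integrable_mul_stretch h.memBV (indicator_one_nonneg E) hj)
      ((m n).integrable_mul_meanStretch_and_integral_le_tv h.memBV (indicator_one_nonneg E)).1
      (h.memBV.1.mul_const _)) ?_
  simpa using (h.tendsto_integral_norm_stretch_sub_meanStretch hN hm hj).add
    (h.tendsto_integral_norm_meanStretch_sub hN hm)

/-- Isoperimetric sets are indecomposable: cutting with vanishing weighted gradient keeps the
Sobolev inequality almost sharp for both pieces, so the limit of the cuts is constant. -/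
lemma exists_ae_eq_const_of_tendsto (hN : 2 ≤ N) (h : IsIsoperimetric E) {g B : ℕ → Euc N → ℝ}
    {G : Euc N → ℝ} (hg : ∀ n, ContDiff ℝ 1 (g n)) (h01 : ∀ n x, g n x ∈ Set.Icc 0 1)
    (hB : ∀ n x, ‖fderiv ℝ (g n) x‖ ≤ B n x)
    (hint : ∀ n, Integrable fun x => E.indicator 1 x * B n x)
    (hBlim : Tendsto (fun n => ∫ x, E.indicator 1 x * B n x) atTop (𝓝 0))
    (hlim : ∀ x, Tendsto (fun n => g n x) atTop (𝓝 (G x))) :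
    ∃ c, ∀ᵐ x, x ∈ E → G x = c := by
  have : NeZero N := ⟨by omega⟩
  have hp := one_lt_sobolevExponent hN
  have hp0 := one_pos.trans hp
  have hmeas : ∀ n, AEStronglyMeasurable (g n) volume := fun n =>
    (hg n).continuous.aestronglyMeasurable
  have hG := tendsto_integral_abs_indicator_mul_rpow h.measurableSet h.volume_ne_top hp0 hmeas h01
    hlim
  have hG' := tendsto_integral_abs_indicator_mul_rpow h.measurableSet h.volume_ne_top hp0
    (φ := fun n x => 1 - g n x) (fun n => aestronglyMeasurable_const.sub (hmeas n))
    (fun n x => ⟨sub_nonneg.2 (h01 n x).2, sub_le_self 1 (h01 n x).1⟩)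
    fun x => (hlim x).const_sub 1
  have hinv : 0 ≤ (sobolevExponent N)⁻¹ := (inv_pos.2 hp0).le
  have hpieces := le_of_tendsto_of_tendsto'
    (((hG.rpow_const (Or.inr hinv)).add (hG'.rpow_const (Or.inr hinv))).const_mul
      (isoperimetricConst N))
    ((hBlim.const_mul 2).const_add (isoperimetricConst N *
      volume.real E ^ (sobolevExponent N)⁻¹)) fun n => by
    obtain ⟨hcut, hcut', hle⟩ := h.memBV.tv_mul_add_tv_mul_one_sub_le (indicator_one_nonneg E)
      (hg n) (h01 n) (hB n) (hint n)
    rw [mul_add]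
    linarith [hcut.isoperimetricConst_mul_le_tv hN, hcut'.isoperimetricConst_mul_le_tv hN, h.tv_le]
  rw [mul_zero, add_zero, ← integral_indicator_one h.measurableSet] at hpieces
  obtain ⟨c, hc⟩ := exists_ae_eq_const_of_rpow_inv_add_le h.memBV.1 (indicator_one_nonneg E)
    (aestronglyMeasurable_of_tendsto_ae atTop hmeas (ae_of_all _ hlim))
    (fun x => isClosed_Icc.mem_of_tendsto (hlim x) (Eventually.of_forall fun n => h01 n x)) hp
    (le_of_mul_le_mul_left hpieces isoperimetricConst_pos)
  exact ⟨c, hc.mono fun x hx hxE => hx (by simp [hxE])⟩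

end IsIsoperimetric

end Isoperimetric

lemma norm_fderiv_sigmoid_comp_le {E : Type*} [NormedAddCommGroup E] [NormedSpace ℝ E] {f : E → ℝ}
    {x : E} (hf : DifferentiableAt ℝ f x) :
    ‖fderiv ℝ (fun y => sigmoid (f y)) x‖ ≤ ‖fderiv ℝ f x‖ := by
  have h := ((hasDerivAt_sigmoid (f x)).comp_hasFDerivAt x hf.hasFDerivAt).fderiv
  rw [Function.comp_def] at h
  rw [h, norm_smul, Real.norm_eq_abs]
  refine mul_le_of_le_one_left (norm_nonneg _) (abs_le.2 ?_)
  have := sigmoid_nonneg (f x)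
  have := sigmoid_le_one (f x)
  constructor <;> nlinarith

lemma integrable_and_abs_sub_average_le {α : Type*} [MeasurableSpace α] {ν : Measure α}
    [IsFiniteMeasure ν] {f T : α → ℝ} {r b : ℝ} (hr : 0 < r) (hT : AEStronglyMeasurable T ν)
    (hT1 : ∀ᵐ x ∂ν, |T x| ≤ 1) (hT0 : ∫ x, T x ∂ν = 0) (hb : ∀ᵐ x ∂ν, T x - r⁻¹ * f x = b) :
    Integrable f ν ∧ ∀ᵐ x ∂ν, |f x - ⨍ y, f y ∂ν| ≤ r := by
  have hf : f =ᵐ[ν] fun x => r * (T x - b) := hb.mono fun x hx => by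
    simp only [← hx]
    field
  have hTi : Integrable T ν := .of_bound hT 1 hT1
  have hsub : Integrable (fun x => T x - b) ν := hTi.sub (integrable_const b)
  refine ⟨(hsub.const_mul r).congr hf.symm, ?_⟩
  rcases eq_zero_or_neZero ν with rfl | hν
  · simp
  have hmean : ⨍ y, f y ∂ν = -(r * b) := by
    rw [average_congr hf, average_eq, integral_const_mul, integral_sub hTi (integrable_const b),
      hT0, integral_const, smul_eq_mul, smul_eq_mul]
    have : ν.real Set.univ ≠ 0 := measureReal_univ_ne_zero
    field
  filter_upwards [hf, hT1] with x hx hTx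
  rw [hmean, hx, show r * (T x - b) - -(r * b) = r * T x by ring, abs_mul, abs_of_pos hr]
  exact mul_le_of_le_one_right hr.le hTx

namespace ProductMixture

variable {N : ℕ} {m : ℕ → ProductMixture N} {h : Euc N → ℝ} {j : Fin N}

lemma norm_knothe_apply_le_one (m : ProductMixture N) (x : Euc N) (j : Fin N) :
    ‖m.knothe x j‖ ≤ 1 :=
  (PiLp.norm_apply_le _ j).trans (m.norm_knothe_le_one x)

lemma contDiff_knothe_apply (m : ProductMixture N) (j : Fin N) :
    ContDiff ℝ 1 fun x => m.knothe x j :=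
  (EuclideanSpace.proj j : Euc N →L[ℝ] ℝ).contDiff.comp m.contDiff_knothe

lemma norm_fderiv_knothe_apply_sub_le (m : ProductMixture N) (hj : j.val = 0) (c : ℝ)
    (x : Euc N) :
    ‖fderiv ℝ (fun y : Euc N => m.knothe y j - c * y j) x‖ ≤ ‖m.stretch j x - c‖ := by
  have hcoord : HasFDerivAt (fun y : Euc N => c * y j)
      (c • (EuclideanSpace.proj j : Euc N →L[ℝ] ℝ)) x :=
    (EuclideanSpace.proj j : Euc N →L[ℝ] ℝ).hasFDerivAt.const_mul c
  rw [(((m.contDiff_knothe_apply j).differentiable one_ne_zero x).hasFDerivAt.fun_sub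
    hcoord).fderiv]
  refine ContinuousLinearMap.opNorm_le_bound _ (norm_nonneg _) fun v => ?_
  rw [sub_apply, m.fderiv_knothe_apply_of_val_eq_zero hj]
  simp only [FunLike.coe_smul, Pi.smul_apply, PiLp.proj_apply, smul_eq_mul]
  rw [← sub_mul, norm_mul]
  exact mul_le_mul_of_nonneg_left (PiLp.norm_apply_le v j) (norm_nonneg _)

lemma tendsto_coordCDF (hh : Integrable h)
    (hm : Tendsto (fun n => ∫ x, ‖(m n).density x - h x‖) atTop (𝓝 0)) (j : Fin N) (t : ℝ) :
    Tendsto (fun n => (m n).coordCDF j t) atTop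
      (𝓝 (∫ x : Euc N, (Set.Iic t).indicator 1 (x j) * h x)) := by
  have : NeZero N := ⟨j.pos.ne'⟩
  simp_rw [← integral_indicator_Iic_mul_density, mul_comm (Set.indicator _ _ _)]
  refine tendsto_integral_mul_of_tendsto_integral_norm_sub (C := 1)
    (fun n => (m n).integrable_density) hh ?_ (ae_of_all _ fun x => ?_) hm
  · exact ((measurable_one.indicator measurableSet_Iic).comp
      (by fun_prop : Measurable fun x : Euc N => x j)).aestronglyMeasurable
  · by_cases hx : x j ∈ Set.Iic t <;> simp [hx]

lemma tendsto_integral_knothe_mul (hh : Integrable h)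
    (hm : Tendsto (fun n => ∫ x, ‖(m n).density x - h x‖) atTop (𝓝 0)) (hj : j.val = 0) :
    Tendsto (fun n => ∫ x, (m n).knothe x j * h x) atTop (𝓝 0) := by
  have : NeZero N := ⟨j.pos.ne'⟩
  refine squeeze_zero_norm (fun n => ?_) hm
  obtain ⟨hint, hzero⟩ := (m n).integrable_knothe_mul_density_and_integral_eq_zero hj
  have hint' : Integrable fun x => (m n).knothe x j * h x :=
    hh.bdd_mul ((m n).contDiff_knothe_apply j).continuous.aestronglyMeasurable
      (ae_of_all _ ((m n).norm_knothe_apply_le_one · j))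
  rw [← norm_neg, ← zero_sub, ← hzero, ← integral_sub hint hint']
  refine (norm_integral_le_integral_norm _).trans (integral_mono (hint.sub hint').norm
    ((m n).integrable_density.sub hh).norm fun x => ?_)
  beta_reduce
  rw [← mul_sub, norm_mul]
  exact mul_le_of_le_one_left (norm_nonneg _) ((m n).norm_knothe_apply_le_one x j)

lemma exists_tendsto_knothe_apply (hh : Integrable h)
    (hm : Tendsto (fun n => ∫ x, ‖(m n).density x - h x‖) atTop (𝓝 0)) (hj : j.val = 0) :
    ∃ T : Euc N → ℝ, Measurable T ∧ (∀ x, ‖T x‖ ≤ 1) ∧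
      (∀ x, Tendsto (fun n => (m n).knothe x j) atTop (𝓝 (T x))) ∧ ∫ x, T x * h x = 0 := by
  have hlim : ∀ x : Euc N, ∃ y : ℝ, Tendsto (fun n => (m n).knothe x j) atTop (𝓝 y) := fun x => by
    simp_rw [knothe_apply_of_val_eq_zero _ hj]
    exact ⟨_, ((continuous_cos.comp (continuous_sinPowQuantile N)).neg.tendsto _).comp
      (tendsto_coordCDF hh hm j (x j))⟩
  choose T hT using hlim
  have hmeas : ∀ n, AEStronglyMeasurable (fun x => (m n).knothe x j) volume := fun n =>
    ((m n).contDiff_knothe_apply j).continuous.aestronglyMeasurable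
  refine ⟨T, measurable_of_tendsto_metrizable
    (fun n => ((m n).contDiff_knothe_apply j).continuous.measurable) (tendsto_pi_nhds.2 hT),
    fun x => le_of_tendsto' (hT x).norm fun n => (m n).norm_knothe_apply_le_one x j, hT,
    tendsto_nhds_unique (tendsto_integral_of_dominated_convergence (fun x => ‖h x‖)
      (fun n => (hmeas n).mul hh.1) hh.norm (fun n => ae_of_all _ fun x => ?_)
      (ae_of_all _ fun x => (hT x).mul_const _)) (tendsto_integral_knothe_mul hh hm hj)⟩
  rw [Pi.mul_apply, norm_mul]
  exact mul_le_of_le_one_left (norm_nonneg _) ((m n).norm_knothe_apply_le_one x j)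

end ProductMixture

section IsoperimetricBall

variable {N : ℕ} {E : Set (Euc N)}

namespace IsIsoperimetric

lemma exists_ae_sub_eq_const (hN : 2 ≤ N) (h : IsIsoperimetric E) {j : Fin N} (hj : j.val = 0) :
    ∃ (T : Euc N → ℝ) (b : ℝ), Measurable T ∧ (∀ x, ‖T x‖ ≤ 1) ∧ ∫ x in E, T x = 0 ∧
      ∀ᵐ x, x ∈ E → T x - (volumeRadius E)⁻¹ * x j = b := by
  have : NeZero N := ⟨by omega⟩
  set c := (volumeRadius E)⁻¹
  have hV := h.volume_real_pos
  have hdens : Integrable fun x => E.indicator (1 : Euc N → ℝ) x / volume.real E :=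
    h.memBV.1.div_const _
  obtain ⟨m, hae, hL1⟩ := ProductMixture.exists_seq_tendsto_density hdens
    (ae_of_all _ fun x => div_nonneg (indicator_one_nonneg E x) hV.le)
    (by rw [integral_div, integral_indicator_one h.measurableSet, div_self hV.ne'])
  obtain ⟨T, hTm, hT1, hT, hT0⟩ := ProductMixture.exists_tendsto_knothe_apply hdens hL1 hj
  have hsmooth : ∀ n, ContDiff ℝ 1 fun x : Euc N => (m n).knothe x j - c * x j := fun n =>
    ((m n).contDiff_knothe_apply j).sub (contDiff_const.mul (by fun_prop))
  obtain ⟨s, hs⟩ := h.exists_ae_eq_const_of_tendsto hN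
    (g := fun n x => sigmoid ((m n).knothe x j - c * x j))
    (B := fun n x => ‖(m n).stretch j x - c‖) (G := fun x => sigmoid (T x - c * x j))
    (fun n => (contDiff_sigmoid.of_le le_top).comp (hsmooth n))
    (fun n x => ⟨sigmoid_nonneg _, sigmoid_le_one _⟩)
    (fun n x => (norm_fderiv_sigmoid_comp_le ((hsmooth n).differentiable one_ne_zero x)).trans
      ((m n).norm_fderiv_knothe_apply_sub_le hj c x))
    (fun n => (((m n).integrable_mul_stretch h.memBV (indicator_one_nonneg E) hj).sub
      (h.memBV.1.mul_const c)).norm.congr (ae_of_all _ fun x => by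
        beta_reduce
        rw [Pi.sub_apply, ← mul_sub, norm_mul, Real.norm_of_nonneg (indicator_one_nonneg E x)]))
    (h.tendsto_integral_mul_norm_stretch_sub hN hae hj)
    fun x => (continuous_sigmoid.tendsto _).comp ((hT x).sub_const _)
  have hb : ∃ b, ∀ᵐ x, x ∈ E → T x - c * x j = b := by
    by_cases hsr : ∃ b, sigmoid b = s
    · obtain ⟨b, rfl⟩ := hsr
      exact ⟨b, hs.mono fun x hx hxE => sigmoid_injective (hx hxE)⟩
    · exact ⟨0, hs.mono fun x hx hxE => absurd ⟨_, hx hxE⟩ hsr⟩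
  obtain ⟨b, hb⟩ := hb
  refine ⟨T, b, hTm, hT1, ?_, hb⟩
  simp_rw [← mul_div_assoc, integral_div, div_eq_zero_iff, hV.ne', or_false] at hT0
  rw [← integral_indicator h.measurableSet, ← hT0]
  congr 1 with x
  by_cases hx : x ∈ E <;> simp [hx]

lemma integrableOn_and_abs_sub_average_le (hN : 2 ≤ N) (h : IsIsoperimetric E) {j : Fin N}
    (hj : j.val = 0) :
    IntegrableOn (fun x => x j) E ∧
      ∀ᵐ x ∂volume.restrict E, |x j - ⨍ y in E, y j| ≤ volumeRadius E := by
  obtain ⟨T, b, hTm, hT1, hT0, hb⟩ := h.exists_ae_sub_eq_const hN hj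
  have : IsFiniteMeasure (volume.restrict E) :=
    isFiniteMeasure_restrict.2 h.volume_ne_top
  exact integrable_and_abs_sub_average_le h.volumeRadius_pos hTm.aestronglyMeasurable
    (ae_of_all _ hT1) hT0 ((ae_restrict_iff' h.measurableSet).2 hb)

lemma preimage_linearIsometryEquiv (h : IsIsoperimetric E) (A : Euc N ≃ₗᵢ[ℝ] Euc N) :
    IsIsoperimetric (A ⁻¹' E) := by
  have hvol : volume (A ⁻¹' E) = volume E :=
    A.measurePreserving.measure_preimage h.measurableSet.nullMeasurableSet
  have hBV := h.memBV.comp_linearIsometryEquiv A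
  exact ⟨A.continuous.measurable h.measurableSet, hvol ▸ h.volume_ne_top, hvol ▸ h.volume_ne_zero,
    hBV.1, hBV.2.trans (by rw [measureReal_def, hvol]; exact h.tv_le)⟩

/-- The estimate along the first coordinate axis holds in every direction by reflecting `E`. -/
lemma integrableOn_inner_and_abs_sub_average_le (hN : 2 ≤ N) (h : IsIsoperimetric E) {e : Euc N}
    (he : ‖e‖ = 1) :
    IntegrableOn (fun x => inner ℝ e x) E ∧
      ∀ᵐ x ∂volume.restrict E, |inner ℝ e x - ⨍ y in E, inner ℝ e y| ≤ volumeRadius E := by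
  let j : Fin N := ⟨0, by omega⟩
  let e₀ : Euc N := EuclideanSpace.single j 1
  let A : Euc N ≃ₗᵢ[ℝ] Euc N := (ℝ ∙ (e₀ - e))ᗮ.reflection
  have hA : A e₀ = e := Submodule.reflection_sub (by simp [e₀, he])
  have hinner : ∀ x, x j = inner ℝ e (A x) := fun x => by
    rw [← hA, A.inner_map_map]
    simp [e₀, EuclideanSpace.inner_single_left]
  have hA_emb : MeasurableEmbedding A := A.toHomeomorph.measurableEmbedding
  have hA_pres : MeasurePreserving A (volume.restrict (A ⁻¹' E)) (volume.restrict E) :=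
    A.measurePreserving.restrict_preimage_emb hA_emb E
  have hvol : volume.real (A ⁻¹' E) = volume.real E := by
    simpa [measureReal_def] using
      congrArg ENNReal.toReal (hA_pres.measure_preimage_emb hA_emb Set.univ)
  obtain ⟨hint, hle⟩ :=
    (h.preimage_linearIsometryEquiv A).integrableOn_and_abs_sub_average_le hN (j := j) rfl
  simp_rw [setAverage_eq, volumeRadius, hvol, hinner] at hint hle ⊢
  rw [hA_pres.integral_comp hA_emb (inner ℝ e)] at hle
  refine ⟨(hA_pres.integrable_comp_emb hA_emb).1 hint, ?_⟩
  have hmap := (hA_emb.ae_map_iff (p := fun x => |inner ℝ e x - _| ≤ _)).2 hle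
  rwa [hA_pres.map_eq] at hmap

lemma volume_closedBall_volumeRadius [NeZero N] (h : IsIsoperimetric E) (x₀ : Euc N) :
    volume (Metric.closedBall x₀ (volumeRadius E)) = volume E := by
  have hball := (unitBallVolume_pos N).le
  rw [Measure.addHaar_closedBall _ _ h.volumeRadius_pos.le, finrank_euclideanSpace_fin,
    volumeRadius, one_div, Real.rpow_inv_natCast_pow (div_nonneg measureReal_nonneg hball)
      (NeZero.ne N), ← ofReal_measureReal measure_ball_lt_top.ne,
    ← ENNReal.ofReal_mul (div_nonneg measureReal_nonneg hball), ← unitBallVolume,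
    div_mul_cancel₀ _ (unitBallVolume_pos N).ne', ofReal_measureReal h.volume_ne_top]

end IsIsoperimetric

lemma ae_mem_closedBall_of_forall_ae_inner_le {F : Type*} [NormedAddCommGroup F]
    [InnerProductSpace ℝ F] [TopologicalSpace.SeparableSpace F] [MeasurableSpace F] {ν : Measure F}
    {x₀ : F} {r : ℝ}
    (hr : 0 ≤ r) (h : ∀ e, ‖e‖ = 1 → ∀ᵐ x ∂ν, inner ℝ e (x - x₀) ≤ r) :
    ∀ᵐ x ∂ν, x ∈ Metric.closedBall x₀ r := by
  have hdir : ∀ e, ∀ᵐ x ∂ν, inner ℝ e (x - x₀) ≤ r * ‖e‖ := fun e => by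
    rcases eq_or_ne e 0 with rfl | he
    · simp
    filter_upwards [h (‖e‖⁻¹ • e) (norm_smul_inv_norm he)] with x hx
    rwa [real_inner_smul_left, inv_mul_le_iff₀ (norm_pos_iff.2 he), mul_comm] at hx
  filter_upwards [ae_all_iff.2 fun n => hdir (TopologicalSpace.denseSeq F n)] with x hx
  have hall : ∀ e, inner ℝ e (x - x₀) ≤ r * ‖e‖ := fun e =>
    (TopologicalSpace.denseRange_denseSeq F).induction_on e
      (isClosed_le (by fun_prop) (by fun_prop)) hx
  have hself := hall (x - x₀)
  rw [real_inner_self_eq_norm_mul_norm] at hself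
  rw [mem_closedBall_iff_norm]
  rcases (norm_nonneg (x - x₀)).eq_or_lt with h0 | hpos
  · rwa [← h0]
  · exact le_of_mul_le_mul_right hself hpos

lemma IsIsoperimetric.exists_ae_eq_ball (hN : 2 ≤ N) (h : IsIsoperimetric E) :
    ∃ x₀ R, 0 < R ∧ E =ᵐ[volume] Metric.ball x₀ R := by
  have : NeZero N := ⟨by omega⟩
  have hint : Integrable (fun x => x) (volume.restrict E) := .of_eval_piLp fun i => by
    simpa [IntegrableOn, EuclideanSpace.inner_single_left] using
      (h.integrableOn_inner_and_abs_sub_average_le hN (e := EuclideanSpace.single i 1) (by simp)).1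
  have hcentroid : ∀ e, ⨍ x in E, inner ℝ e x = inner ℝ e (⨍ x in E, x) := fun e => by
    rw [setAverage_eq, setAverage_eq, inner_smul_right, integral_inner hint, smul_eq_mul]
  have hsub : ∀ᵐ x ∂volume.restrict E, x ∈ Metric.closedBall (⨍ y in E, y) (volumeRadius E) :=
    ae_mem_closedBall_of_forall_ae_inner_le h.volumeRadius_pos.le fun e he => by
      filter_upwards [(h.integrableOn_inner_and_abs_sub_average_le hN he).2] with x hx
      rw [inner_sub_right, ← hcentroid]
      exact (le_abs_self _).trans hx
  have hclosed : E =ᵐ[volume] Metric.closedBall (⨍ y in E, y) (volumeRadius E) :=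
    ae_eq_of_ae_subset_of_measure_ge ((ae_restrict_iff' h.measurableSet).1 hsub)
      (h.volume_closedBall_volumeRadius _).le h.measurableSet.nullMeasurableSet
      measure_closedBall_lt_top.ne
  refine ⟨⨍ y in E, y, _, h.volumeRadius_pos, hclosed.trans ?_⟩
  rw [← Metric.ball_union_sphere]
  exact union_ae_eq_left_of_ae_eq_empty (ae_eq_empty.2 (Measure.addHaar_sphere _ _ _))

end IsoperimetricBall

/-! ### The perimeter of a ball -/

section BallPerimeter

lemma integrableOn_and_setIntegral_pow_mul_deriv_le {F ρ : ℝ → ℝ} {S : ℝ} (hS : 0 ≤ S)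
    (hF : ∀ r, HasDerivAt F (ρ r) r) (hρ : Continuous ρ) (hρ0 : ∀ r, 0 ≤ r → 0 ≤ ρ r)
    (hρS : ∀ r, S < r → ρ r = 0) (n : ℕ) :
    IntegrableOn (fun r => r ^ n * ρ r) (Set.Ioi 0) ∧
      ∫ r in Set.Ioi 0, r ^ n * ρ r ≤ S ^ n * (F S - F 0) := by
  have hcont : Continuous fun r => r ^ n * ρ r := (continuous_pow n).mul hρ
  have htail : ∀ r ∈ Set.Ioi S, r ^ n * ρ r = 0 := fun r hr => by rw [hρS r hr, mul_zero]
  constructor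
  · rw [← Set.Ioc_union_Ioi_eq_Ioi hS]
    exact (hcont.integrableOn_Ioc).union
      (integrableOn_zero.congr_fun (fun r hr => (htail r hr).symm) measurableSet_Ioi)
  · rw [setIntegral_eq_of_subset_of_forall_sdiff_eq_zero measurableSet_Ioi
      (Set.Ioc_subset_Ioi_self : Set.Ioc 0 S ⊆ Set.Ioi 0)
      fun r hr => htail r (not_le.1 fun hrS => hr.2 ⟨hr.1, hrS⟩),
      ← intervalIntegral.integral_of_le hS,
      ← intervalIntegral.integral_eq_sub_of_hasDerivAt (fun r _ => hF r)
        (hρ.intervalIntegrable _ _), ← intervalIntegral.integral_const_mul]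
    refine intervalIntegral.integral_mono_on hS (hcont.intervalIntegrable _ _)
      ((continuous_const.mul hρ).intervalIntegrable _ _) fun r hr => ?_
    exact mul_le_mul_of_nonneg_right (pow_le_pow_left₀ hr.1 hr.2 n) (hρ0 r hr.1)

lemma norm_fderiv_comp_norm_sub_sq {E : Type*} [NormedAddCommGroup E] [InnerProductSpace ℝ E]
    {Q : ℝ → ℝ} (hQ : Differentiable ℝ Q) (x₀ x : E) :
    ‖fderiv ℝ (fun y => Q (‖y - x₀‖ ^ 2)) x‖ =
      |deriv Q (‖x - x₀‖ ^ 2)| * (2 * ‖x - x₀‖) := by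
  have h := ((hQ (‖x - x₀‖ ^ 2)).hasDerivAt.comp_hasFDerivAt x
    ((hasFDerivAt_id x).sub_const x₀).norm_sq).fderiv
  rw [Function.comp_def] at h
  rw [show (fun y => Q (‖y - x₀‖ ^ 2)) = fun y => Q (‖id y - x₀‖ ^ 2) from rfl, h, norm_smul,
    ContinuousLinearMap.comp_id, ← Nat.cast_smul_eq_nsmul ℝ, norm_smul, innerSL_apply_norm]
  simp

variable {N : ℕ} {ψ : Euc N → Euc N}

lemma IsTestField.integral_mul_divergence_le_integral {g B : Euc N → ℝ} (hψ : IsTestField ψ)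
    (hg : ContDiff ℝ 1 g) (hB : ∀ x, ‖fderiv ℝ g x‖ ≤ B x) (hint : Integrable B) :
    ∫ x, g x * divergence ψ x ≤ ∫ x, B x := by
  rw [integral_mul_divergence_eq_neg hψ.contDiff hψ.hasCompactSupport hg]
  refine (neg_le_abs _).trans
    ((Real.norm_eq_abs _).ge.trans (norm_integral_le_of_norm_le hint (ae_of_all _ fun x => ?_)))
  refine ((fderiv ℝ g x).le_opNorm _).trans ?_
  exact (mul_le_of_le_one_right (norm_nonneg _) (hψ.norm_le_one x)).trans (hB x)

lemma IsTestField.integral_one_sub_comp_mul_divergence_le [NeZero N] (hψ : IsTestField ψ)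
    {Q : ℝ → ℝ} {R : ℝ} (hQ : ContDiff ℝ 1 Q) (hQ_mono : Monotone Q) (hQ0 : 0 ≤ Q 0)
    (hR : 0 ≤ R) (hQR : ∀ t, R ^ 2 ≤ t → Q t = 1) (x₀ : Euc N) :
    ∫ x, (1 - Q (‖x - x₀‖ ^ 2)) * divergence ψ x ≤ N * unitBallVolume N * R ^ (N - 1) := by
  set ρ : ℝ → ℝ := fun r => deriv Q (r ^ 2) * (2 * r) with hρ_def
  have hQd := hQ.differentiable one_ne_zero
  have hρ0 : ∀ r, 0 ≤ r → 0 ≤ ρ r := fun r hr =>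
    mul_nonneg hQ_mono.deriv_nonneg (by positivity)
  have hderiv : ∀ r, HasDerivAt (fun r => Q (r ^ 2)) (ρ r) r := fun r => by
    simpa [Function.comp_def] using (hQd (r ^ 2)).hasDerivAt.comp r (hasDerivAt_pow 2 r)
  have hρR : ∀ r, R < r → ρ r = 0 := fun r hr => by
    have hloc : Q =ᶠ[𝓝 (r ^ 2)] fun _ => 1 := by
      filter_upwards [lt_mem_nhds (pow_lt_pow_left₀ hr hR two_ne_zero)] with t ht using hQR t ht.le
    simp only [hρ_def, hloc.deriv_eq, deriv_const, zero_mul]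
  obtain ⟨hint, hle⟩ := integrableOn_and_setIntegral_pow_mul_deriv_le hR hderiv
    (((hQ.continuous_deriv_one).comp (continuous_pow 2)).mul (by fun_prop)) hρ0 hρR (N - 1)
  have hρ_int : Integrable fun x : Euc N => ρ ‖x‖ := by
    rw [integrable_fun_norm_addHaar volume (f := ρ), finrank_euclideanSpace_fin]
    exact hint
  have hsmooth : ContDiff ℝ 1 fun x : Euc N => 1 - Q (‖x - x₀‖ ^ 2) :=
    contDiff_const.sub (hQ.comp ((contDiff_id.sub contDiff_const).norm_sq ℝ))
  refine (hψ.integral_mul_divergence_le_integral hsmooth (fun x => ?_)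
    (hρ_int.comp_sub_right x₀)).trans ?_
  · rw [fderiv_const_sub, norm_neg, norm_fderiv_comp_norm_sub_sq hQd,
      abs_of_nonneg hQ_mono.deriv_nonneg]
  · rw [integral_sub_right_eq_self (fun x : Euc N => ρ ‖x‖) x₀, integral_fun_norm_addHaar volume ρ,
      finrank_euclideanSpace_fin, nsmul_eq_mul, smul_eq_mul, ← mul_assoc]
    refine mul_le_mul_of_nonneg_left (hle.trans ?_)
      (mul_nonneg (Nat.cast_nonneg _) (unitBallVolume_pos N).le)
    refine mul_le_of_le_one_right (pow_nonneg hR _) ?_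
    rw [hQR _ le_rfl, zero_pow two_ne_zero]
    exact sub_le_self 1 hQ0

lemma tendsto_one_sub_smoothTransition {F : Type*} [SeminormedAddCommGroup F] (x₀ x : F) {R : ℝ}
    (hR : 0 ≤ R) :
    Tendsto (fun n : ℕ => 1 - smoothTransition (1 + n * (‖x - x₀‖ ^ 2 - R ^ 2))) atTop
      (𝓝 ((Metric.ball x₀ R).indicator 1 x)) := by
  by_cases hx : x ∈ Metric.ball x₀ R
  · have hneg : ‖x - x₀‖ ^ 2 - R ^ 2 < 0 :=
      sub_neg.2 (pow_lt_pow_left₀ (mem_ball_iff_norm.1 hx) (norm_nonneg _) two_ne_zero)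
    have hlim := tendsto_atBot_add_const_left atTop 1
      (tendsto_natCast_atTop_atTop (R := ℝ).atTop_mul_const_of_neg hneg)
    refine tendsto_const_nhds.congr' ?_
    filter_upwards [hlim.eventually_le_atBot 0] with n hn
    rw [smoothTransition.zero_of_nonpos hn, sub_zero, Set.indicator_of_mem hx, Pi.one_apply]
  · have hpos : 0 ≤ ‖x - x₀‖ ^ 2 - R ^ 2 :=
      sub_nonneg.2 (pow_le_pow_left₀ hR (not_lt.1 (mt mem_ball_iff_norm.2 hx)) 2)
    refine tendsto_const_nhds.congr fun n => ?_
    rw [smoothTransition.one_of_one_le (le_add_of_nonneg_right (by positivity)), sub_self,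
      Set.indicator_of_notMem hx]

lemma memBV_and_tv_indicator_ball_le [NeZero N] (x₀ : Euc N) {R : ℝ} (hR : 0 ≤ R) :
    MemBV N ((Metric.ball x₀ R).indicator 1) ∧
      tv N ((Metric.ball x₀ R).indicator 1) ≤ N * unitBallVolume N * R ^ (N - 1) := by
  refine memBV_and_tv_le ((integrable_indicator_iff measurableSet_ball).2
    (integrableOn_const measure_ball_lt_top.ne)) fun ψ hψ => ?_
  have hdiv := continuous_divergence hψ.contDiff
  have hcut : ∀ n : ℕ, Continuous fun x : Euc N =>
      1 - smoothTransition (1 + n * (‖x - x₀‖ ^ 2 - R ^ 2)) := fun n =>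
    continuous_const.sub (smoothTransition.continuous.comp (by fun_prop))
  refine le_of_tendsto' (tendsto_integral_of_dominated_convergence (fun x => ‖divergence ψ x‖)
    (fun n => ((hcut n).mul hdiv).aestronglyMeasurable)
    (hdiv.integrable_of_hasCompactSupport (hasCompactSupport_divergence hψ.hasCompactSupport)).norm
    (fun n => ae_of_all _ fun x => ?_)
    (ae_of_all _ fun x => (tendsto_one_sub_smoothTransition x₀ x hR).mul_const _)) fun n => ?_
  · rw [Pi.mul_apply, norm_mul]
    refine mul_le_of_le_one_left (norm_nonneg _) (abs_le.2 ⟨?_, ?_⟩) <;>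
      linarith [smoothTransition.nonneg (1 + n * (‖x - x₀‖ ^ 2 - R ^ 2)),
        smoothTransition.le_one (1 + n * (‖x - x₀‖ ^ 2 - R ^ 2))]
  · refine hψ.integral_one_sub_comp_mul_divergence_le
      (Q := fun t => smoothTransition (1 + n * (t - R ^ 2)))
      (smoothTransition.contDiff.comp (by fun_prop))
      (smoothTransition.monotone.comp fun s t hst => by gcongr) (smoothTransition.nonneg _) hR
      (fun t ht => smoothTransition.one_of_one_le (le_add_of_nonneg_right ?_)) x₀
    exact mul_nonneg n.cast_nonneg (sub_nonneg.2 ht)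

end BallPerimeter

/-! ### The Gagliardo–Nirenberg ratio -/

section Interpolation

variable {α : Type*} [MeasurableSpace α] {μ : Measure α}

lemma integral_rpow_mul_rpow_le {f g : α → ℝ} (hf : Integrable f μ) (hg : Integrable g μ)
    (hf0 : ∀ x, 0 ≤ f x) (hg0 : ∀ x, 0 ≤ g x) {a b : ℝ} (ha : 0 ≤ a) (hb : 0 ≤ b)
    (hab : a + b = 1) :
    ∫ x, f x ^ a * g x ^ b ∂μ ≤ (∫ x, f x ∂μ) ^ a * (∫ x, g x ∂μ) ^ b := by
  have hF := ofReal_integral_eq_lintegral_ofReal hf (ae_of_all _ hf0)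
  have hG := ofReal_integral_eq_lintegral_ofReal hg (ae_of_all _ hg0)
  rw [integral_eq_lintegral_of_nonneg_ae
    (ae_of_all _ fun x => mul_nonneg (rpow_nonneg (hf0 x) a) (rpow_nonneg (hg0 x) b))
    (((Real.continuous_rpow_const ha).comp_aestronglyMeasurable hf.1).mul
      ((Real.continuous_rpow_const hb).comp_aestronglyMeasurable hg.1))]
  have hF0 := integral_nonneg (μ := μ) (show 0 ≤ f from hf0)
  have hG0 := integral_nonneg (μ := μ) (show 0 ≤ g from hg0)
  refine ENNReal.toReal_le_of_le_ofReal (by positivity) ?_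
  rw [ENNReal.ofReal_mul (by positivity), ← ENNReal.ofReal_rpow_of_nonneg hF0 ha,
    ← ENNReal.ofReal_rpow_of_nonneg hG0 hb, hF, hG]
  refine (lintegral_congr fun x => ?_).trans_le (ENNReal.lintegral_mul_norm_pow_le
    hf.1.aemeasurable.ennreal_ofReal hg.1.aemeasurable.ennreal_ofReal ha hb hab)
  rw [ENNReal.ofReal_mul (rpow_nonneg (hf0 x) a), ← ENNReal.ofReal_rpow_of_nonneg (hf0 x) ha,
    ← ENNReal.ofReal_rpow_of_nonneg (hg0 x) hb]

lemma integral_abs_rpow_le_of_holderConjugate {r p q : ℝ} (h : r.HolderConjugate p) (hq1 : 1 ≤ q)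
    (hqp : q ≤ p) {u : α → ℝ} (hu : Integrable u μ) (hup : Integrable (fun x => |u x| ^ p) μ) :
    ∫ x, |u x| ^ q ∂μ ≤
      (∫ x, |u x| ∂μ) ^ (q - (q - 1) * r) * ((∫ x, |u x| ^ p ∂μ) ^ p⁻¹) ^ ((q - 1) * r) := by
  have hp := h.symm.pos
  have hr := h.pos
  have hrp : p⁻¹ * r = r - 1 := by rw [← h.one_sub_inv]; field
  have hexp : p⁻¹ * ((q - 1) * r) = (q - 1) * (r - 1) := by rw [← hrp]; ring
  have ha : 0 ≤ q - (q - 1) * r := by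
    have hpr : p * (r - 1) = r := by rw [← hrp, mul_inv_cancel_left₀ hp.ne']
    have hr1 := h.lt
    nlinarith
  have hb : 0 ≤ p⁻¹ * ((q - 1) * r) :=
    mul_nonneg (inv_nonneg.2 hp.le) (mul_nonneg (sub_nonneg.2 hq1) hr.le)
  rw [← rpow_mul (integral_nonneg fun x => by positivity)]
  refine (integral_congr_ae (ae_of_all _ fun x => ?_)).trans_le (integral_rpow_mul_rpow_le hu.abs
    hup (fun _ => abs_nonneg _) (fun x => by positivity) ha hb (by rw [hexp]; ring))
  rw [← rpow_mul (abs_nonneg _), mul_inv_cancel_left₀ hp.ne', ← rpow_add_of_nonneg (abs_nonneg _) ha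
    (by positivity), sub_add_cancel]

lemma integral_abs_indicator_const_rpow {s : Set α} (hs : MeasurableSet s) (c : ℝ) {p : ℝ}
    (hp : p ≠ 0) : ∫ x, |s.indicator (fun _ => c) x| ^ p ∂μ = |c| ^ p * μ.real s := by
  have hpow : (fun x => |s.indicator (fun _ => c) x| ^ p) = s.indicator fun _ => |c| ^ p := by
    funext x
    by_cases hx : x ∈ s <;> simp [hx, hp]
  rw [hpow, integral_indicator_const _ hs, smul_eq_mul, mul_comm]

end Interpolation

section Ratio

variable {N : ℕ} {q : ℝ} {u : Euc N → ℝ}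

/-- The optimal constant `E_q` of the interpolation inequality between `L¹`, `L^q` and `BV`. -/
def gagliardoNirenbergConst (N : ℕ) (q : ℝ) : ℝ := (isoperimetricConst N ^ ((q - 1) * N))⁻¹

lemma gagliardoNirenbergConst_pos [NeZero N] : 0 < gagliardoNirenbergConst N q :=
  inv_pos.2 (rpow_pos_of_pos isoperimetricConst_pos _)

lemma nrm1_eq_integral (hu : AEStronglyMeasurable u volume) : nrm1 N u = ∫ x, |u x| := by
  simp only [nrm1, toReal_eLpNorm hu, lpNorm_one_eq_integral_norm hu, Real.norm_eq_abs]

lemma nrmq_rpow_eq_integral (hq : 0 < q) (hu : AEStronglyMeasurable u volume) :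
    nrmq N q u ^ q = ∫ x, |u x| ^ q := by
  rw [nrmq, toReal_eLpNorm hu, lpNorm_eq_integral_norm_rpow_toReal
      (ENNReal.ofReal_pos.2 hq).ne' ENNReal.ofReal_ne_top hu, ENNReal.toReal_ofReal hq.le,
    rpow_inv_rpow (integral_nonneg fun x => by positivity) hq.ne']
  simp only [Real.norm_eq_abs]

lemma ratioQ_eq_div (hq : 0 < q) (hu : AEStronglyMeasurable u volume) :
    ratioQ N q u =
      (∫ x, |u x| ^ q) / ((∫ x, |u x|) ^ (q - (q - 1) * N) * tv N u ^ ((q - 1) * (N : ℝ))) := by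
  rw [ratioQ, nrmq_rpow_eq_integral hq hu, nrm1_eq_integral hu]

lemma ratioQ_eq_zero_of_ae_eq_zero (hq : 0 < q) (hu : u =ᵐ[volume] 0) : ratioQ N q u = 0 := by
  have hzero : (fun x => |u x| ^ q) =ᵐ[volume] 0 := by
    filter_upwards [hu] with x hx
    simp [hx, hq.ne']
  rw [ratioQ_eq_div hq (aestronglyMeasurable_zero.congr hu.symm), integral_congr_ae hzero]
  simp

lemma MemBV.integral_abs_rpow_le (hN : 2 ≤ N) (hq1 : 1 ≤ q) (hq2 : q ≤ sobolevExponent N)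
    (hu : MemBV N u) :
    ∫ x, |u x| ^ q ≤ (∫ x, |u x|) ^ (q - (q - 1) * N) *
      ((∫ x, |u x| ^ sobolevExponent N) ^ (sobolevExponent N)⁻¹) ^ ((q - 1) * (N : ℝ)) :=
  integral_abs_rpow_le_of_holderConjugate (holderConjugate_sobolevExponent hN) hq1 hq2 hu.1
    (hu.integrable_abs_rpow_sobolevExponent hN)

lemma MemBV.ratioQ_le (hN : 2 ≤ N) (hq1 : 1 ≤ q) (hq2 : q ≤ sobolevExponent N) (hu : MemBV N u) :
    ratioQ N q u ≤ gagliardoNirenbergConst N q := by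
  have : NeZero N := ⟨by omega⟩
  have hC := isoperimetricConst_pos (N := N)
  have hS := hu.isoperimetricConst_mul_le_tv hN
  have hT := hu.tv_nonneg
  rw [ratioQ_eq_div (by linarith) hu.1.1]
  refine div_le_of_le_mul₀ (by positivity) gagliardoNirenbergConst_pos.le
    ((hu.integral_abs_rpow_le hN hq1 hq2).trans ?_)
  rw [gagliardoNirenbergConst, mul_left_comm, ← div_eq_inv_mul, ← Real.div_rpow hT hC.le]
  gcongr
  rwa [le_div_iff₀' hC]

lemma MemBV.tv_eq_of_ratioQ_eq (hN : 2 ≤ N) (hq1 : 1 < q) (hq2 : q ≤ sobolevExponent N)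
    (hu : MemBV N u) (h : ratioQ N q u = gagliardoNirenbergConst N q) :
    tv N u =
      isoperimetricConst N * (∫ x, |u x| ^ sobolevExponent N) ^ (sobolevExponent N)⁻¹ := by
  have : NeZero N := ⟨by omega⟩
  have hC := isoperimetricConst_pos (N := N)
  have hA : 0 ≤ ∫ x, |u x| := integral_nonneg fun _ => abs_nonneg _
  have hs : 0 < (q - 1) * (N : ℝ) :=
    mul_pos (sub_pos.2 hq1) (Nat.cast_pos.2 (NeZero.pos N))
  rw [ratioQ_eq_div (by linarith) hu.1.1] at h
  have hden : (∫ x, |u x|) ^ (q - (q - 1) * N) * tv N u ^ ((q - 1) * (N : ℝ)) ≠ 0 := fun h0 =>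
    gagliardoNirenbergConst_pos.ne (by rw [← h, h0, div_zero])
  have hA' := (rpow_nonneg hA _).lt_of_ne' (left_ne_zero_of_mul hden)
  refine le_antisymm ?_ (hu.isoperimetricConst_mul_le_tv hN)
  have hle := hu.integral_abs_rpow_le hN hq1.le hq2
  rw [(div_eq_iff hden).1 h, gagliardoNirenbergConst, mul_left_comm, ← div_eq_inv_mul,
    ← Real.div_rpow hu.tv_nonneg hC.le] at hle
  have hroot := (Real.rpow_le_rpow_iff (div_nonneg hu.tv_nonneg hC.le) (by positivity) hs).1
    (le_of_mul_le_mul_left hle hA')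
  exact (div_le_iff₀' hC).1 hroot

end Ratio

section Maximizers

variable {N : ℕ} {q : ℝ} {u : Euc N → ℝ} {E : Set (Euc N)}

lemma exists_ae_eq_indicator_const {α : Type*} [MeasurableSpace α] {μ : Measure α} {f : α → ℝ}
    (hf : AEStronglyMeasurable f μ) {c : ℝ} (hc : ∀ᵐ x ∂μ, f x ≠ 0 → f x = c) :
    ∃ s, MeasurableSet s ∧ f =ᵐ[μ] s.indicator fun _ => c := by
  refine ⟨{x | hf.mk f x ≠ 0},
    hf.stronglyMeasurable_mk.measurable (measurableSet_singleton 0).compl, ?_⟩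
  filter_upwards [hf.ae_eq_mk, hc] with x hx hxc
  by_cases h0 : hf.mk f x = 0
  · rw [Set.indicator_of_notMem (not_not.2 h0), hx, h0]
  · rw [Set.indicator_of_mem (show x ∈ {x | hf.mk f x ≠ 0} from h0), hxc (hx ▸ h0)]

lemma integral_abs_rpow_of_ae_eq_indicator (hE : MeasurableSet E) {c p : ℝ} (hp : p ≠ 0)
    (hu : u =ᵐ[volume] E.indicator fun _ => c) :
    ∫ x, |u x| ^ p = |c| ^ p * volume.real E := by
  rw [← integral_abs_indicator_const_rpow hE c hp]
  exact integral_congr_ae (hu.mono fun x hx => by beta_reduce; rw [hx])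

lemma integral_rpow_rpow_inv_of_ae_eq_indicator (hE : MeasurableSet E) {c p : ℝ} (hp : p ≠ 0)
    (hu : u =ᵐ[volume] E.indicator fun _ => c) :
    (∫ x, |u x| ^ p) ^ p⁻¹ = |c| * volume.real E ^ p⁻¹ := by
  rw [integral_abs_rpow_of_ae_eq_indicator hE hp hu, mul_rpow (by positivity) measureReal_nonneg,
    rpow_rpow_inv (abs_nonneg c) hp]

lemma isIsoperimetric_of_tv_eq (hN : 2 ≤ N) (hu : MemBV N u) {c : ℝ} (hc : c ≠ 0)
    (hE : MeasurableSet E) (hE0 : volume E ≠ 0) (huE : u =ᵐ[volume] E.indicator fun _ => c)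
    (heq : tv N u = isoperimetricConst N *
      (∫ x, |u x| ^ sobolevExponent N) ^ (sobolevExponent N)⁻¹) :
    IsIsoperimetric E := by
  have hind : (fun x => c⁻¹ * u x) =ᵐ[volume] E.indicator 1 := by
    filter_upwards [huE] with x hx
    by_cases hxE : x ∈ E <;> simp [hx, hxE, hc]
  have hbv := hu.const_mul c⁻¹
  have hE_bv := hbv.1.congr_ae hind
  refine ⟨hE, ?_, hE0, hE_bv, ?_⟩
  · have hint : IntegrableOn (1 : Euc N → ℝ) E := (integrable_indicator_iff hE).1 hE_bv.1
    simpa [lt_top_iff_ne_top] using (integrableOn_const_iff (C := (1 : ℝ))).1 hint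
  · rw [← tv_congr_ae hind]
    refine hbv.2.trans_eq ?_
    rw [heq, integral_rpow_rpow_inv_of_ae_eq_indicator hE
      (one_pos.trans (one_lt_sobolevExponent hN)).ne' huE, abs_inv]
    have := abs_pos.2 hc
    field

lemma MemBV.exists_isIsoperimetric_of_ratioQ_eq (hN : 2 ≤ N) (hq1 : 1 < q)
    (hq2 : q ≤ sobolevExponent N) (hu : MemBV N u)
    (h : ratioQ N q u = gagliardoNirenbergConst N q) :
    ∃ c, c ≠ 0 ∧ ∃ E, IsIsoperimetric E ∧ u =ᵐ[volume] E.indicator fun _ => c := by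
  have : NeZero N := ⟨by omega⟩
  have hnz : ¬ u =ᵐ[volume] 0 := fun h0 => gagliardoNirenbergConst_pos.ne
    ((ratioQ_eq_zero_of_ae_eq_zero (one_pos.trans hq1) h0).symm.trans h)
  have heq := hu.tv_eq_of_ratioQ_eq hN hq1 hq2 h
  obtain ⟨c, hc⟩ := exists_ae_eq_const_of_tv_eq hN hu heq
  obtain ⟨E, hE, huE⟩ := exists_ae_eq_indicator_const hu.1.1 hc
  have hc0 : c ≠ 0 := by
    rintro rfl
    exact hnz (huE.trans (by rw [Set.indicator_zero]; rfl))
  refine ⟨c, hc0, E, isIsoperimetric_of_tv_eq hN hu hc0 hE (fun h0 => hnz ?_) huE heq, huE⟩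
  exact huE.trans (indicator_meas_zero h0)

lemma IsIsoperimetric.memBV_and_tv_eq (hN : 2 ≤ N) (h : IsIsoperimetric E) {c : ℝ}
    (hu : u =ᵐ[volume] E.indicator fun _ => c) :
    MemBV N u ∧
      tv N u = isoperimetricConst N * (|c| * volume.real E ^ (sobolevExponent N)⁻¹) := by
  have hind : (fun x => c * E.indicator 1 x) =ᵐ[volume] u := by
    filter_upwards [hu] with x hx
    by_cases hxE : x ∈ E <;> simp [hx, hxE]
  have hbv := h.memBV.const_mul c
  have huBV := hbv.1.congr_ae hind
  refine ⟨huBV, le_antisymm ?_ ?_⟩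
  · rw [← tv_congr_ae hind, mul_left_comm]
    exact hbv.2.trans (mul_le_mul_of_nonneg_left h.tv_le (abs_nonneg c))
  · rw [← integral_rpow_rpow_inv_of_ae_eq_indicator h.measurableSet
      (one_pos.trans (one_lt_sobolevExponent hN)).ne' hu]
    exact huBV.isoperimetricConst_mul_le_tv hN

lemma IsIsoperimetric.ratioQ_eq (hN : 2 ≤ N) (hq : 0 < q) (h : IsIsoperimetric E) {c : ℝ}
    (hc : c ≠ 0) (hu : u =ᵐ[volume] E.indicator fun _ => c) :
    ratioQ N q u = gagliardoNirenbergConst N q := by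
  have : NeZero N := ⟨by omega⟩
  obtain ⟨huBV, htv⟩ := h.memBV_and_tv_eq hN hu
  have hV := h.volume_real_pos
  have hc' := abs_pos.2 hc
  have hC := isoperimetricConst_pos (N := N)
  have hmass := integral_abs_rpow_of_ae_eq_indicator h.measurableSet one_ne_zero hu
  simp only [rpow_one] at hmass
  set s := (q - 1) * (N : ℝ) with hs
  have hexp : q - s + (sobolevExponent N)⁻¹ * s = 1 := by
    rw [← (holderConjugate_sobolevExponent hN).one_sub_inv, hs]
    field
  have hpow : (|c| * volume.real E) ^ (q - s) *
      (|c| * volume.real E ^ (sobolevExponent N)⁻¹) ^ s = |c| ^ q * volume.real E := by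
    rw [mul_rpow hc'.le hV.le, mul_rpow hc'.le (by positivity), mul_mul_mul_comm, ← rpow_add hc',
      ← rpow_mul hV.le, ← rpow_add hV, hexp, sub_add_cancel, rpow_one]
  rw [ratioQ_eq_div hq huBV.1.1, htv, hmass, mul_rpow hC.le (by positivity), mul_left_comm, hpow,
    integral_abs_rpow_of_ae_eq_indicator h.measurableSet hq.ne' hu, gagliardoNirenbergConst, ← hs]
  field

lemma isIsoperimetric_ball (hN : 2 ≤ N) (x₀ : Euc N) {R : ℝ} (hR : 0 < R) :
    IsIsoperimetric (Metric.ball x₀ R) := by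
  have : NeZero N := ⟨by omega⟩
  obtain ⟨hbv, htv⟩ := memBV_and_tv_indicator_ball_le x₀ hR.le
  refine ⟨measurableSet_ball, measure_ball_lt_top.ne, (Metric.measure_ball_pos _ _ hR).ne', hbv,
    htv.trans_eq ?_⟩
  have hvol : volume.real (Metric.ball x₀ R) = R ^ N * unitBallVolume N := by
    rw [Measure.real, Measure.addHaar_ball _ _ hR.le, ENNReal.toReal_mul,
      ENNReal.toReal_ofReal (by positivity), finrank_euclideanSpace_fin]
    rfl
  have hpow : (R ^ N) ^ (1 - (N : ℝ)⁻¹) = R ^ (N - 1) := by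
    rw [← rpow_natCast_mul hR.le, mul_one_sub, mul_inv_cancel₀ (by exact_mod_cast NeZero.ne N),
      ← Nat.cast_pred (NeZero.pos N), rpow_natCast]
  have hsplit : unitBallVolume N ^ (1 / (N : ℝ)) * unitBallVolume N ^ (1 - (N : ℝ)⁻¹) =
      unitBallVolume N := by
    rw [← rpow_add (unitBallVolume_pos N), one_div, add_sub_cancel, rpow_one]
  rw [hvol, ← (holderConjugate_sobolevExponent hN).one_sub_inv, isoperimetricConst,
    mul_rpow (by positivity) (unitBallVolume_pos N).le, hpow]
  nth_rewrite 1 [← hsplit]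
  ring

lemma eqSup_eq_gagliardoNirenbergConst (hN : 2 ≤ N) (hq1 : 1 ≤ q) (hq2 : q ≤ sobolevExponent N) :
    EqSup N q = gagliardoNirenbergConst N q := by
  have hball := isIsoperimetric_ball hN (0 : Euc N) one_pos
  have hone : (Metric.ball (0 : Euc N) 1).indicator (1 : Euc N → ℝ) ≠ 0 := fun h0 => by
    simpa using congrFun h0 0
  refine IsGreatest.csSup_eq ⟨⟨_, hball.memBV, hone, ?_⟩, ?_⟩
  · exact (hball.ratioQ_eq hN (one_pos.trans_le hq1) one_ne_zero (EventuallyEq.refl _ _)).symm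
  · rintro r ⟨v, hv, -, rfl⟩
    exact hv.ratioQ_le hN hq1 hq2

end Maximizers

/-- maximizers of `E_q` are exactly the (a.e.) nonzero multiples of
characteristic functions of balls. -/
theorem Eq_maximizer_characterization (N : ℕ) (hN : 2 ≤ N) (q : ℝ) (hq1 : 1 < q)
    (hq2 : q ≤ (N : ℝ) / ((N : ℝ) - 1)) (u : Euc N → ℝ) (hu : MemBV N u)
    (hne : u ≠ 0) :
    ratioQ N q u = EqSup N q ↔
      ∃ lam : ℝ, lam ≠ 0 ∧ ∃ x₀ : Euc N, ∃ R : ℝ, 0 < R ∧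
        u =ᵐ[volume] (Metric.ball x₀ R).indicator (fun _ => lam) := by
  rw [eqSup_eq_gagliardoNirenbergConst hN hq1.le hq2]
  constructor
  · intro h
    obtain ⟨c, hc, E, hE, huE⟩ := hu.exists_isIsoperimetric_of_ratioQ_eq hN hq1 hq2 h
    obtain ⟨x₀, R, hR, hball⟩ := hE.exists_ae_eq_ball hN
    exact ⟨c, hc, x₀, R, hR, huE.trans (indicator_ae_eq_of_ae_eq_set hball)⟩
  · rintro ⟨c, hc, x₀, R, hR, huB⟩
    exact (isIsoperimetric_ball hN x₀ hR).ratioQ_eq hN (one_pos.trans hq1) hc huB
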